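/- arXiv:1312.7516 — 3 statements merged into one kernel-verified Lean document; each statement's English description precedes it below -/
import Mathlib

section
/- For all positive integers μ₁, μ₂, μ₃, μ₄, the pruned simple Hurwitz number satisfies K_{0,4}(μ₁, μ₂, μ₃, μ₄) = (μ₁+μ₂+μ₃+μ₄+2)! · μ₁μ₂μ₃μ₄ · (1/2)·Σ_{i=1}^{4} (μ_i² + μ_i). -/
/-- `σ` is a tuple of `m` transpositions in the symmetric group on `d` letters whose
ordered product is `T`, which generates a subgroup acting transitively, and such that
every point is moved by at least two of the transpositions.  These are the objects
counted by the pruned simple Hurwitz numbers. -/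
def IsPrunedFactorisation {d m : ℕ} (T : Equiv.Perm (Fin d))
    (σ : Fin m → Equiv.Perm (Fin d)) : Prop :=
  (∀ i, (σ i).IsSwap) ∧
  (List.ofFn σ).prod = T ∧
  (∀ x y : Fin d, ∃ g ∈ Subgroup.closure (Set.range σ), g x = y) ∧
  (∀ x : Fin d, 2 ≤ Nat.card {i : Fin m // σ i x ≠ x})

/-!
A transitive factorisation of `T` moves every point at least once. When there are at least three
points, the points of a set `S` which it moves only once can be cut out of the cycles of `T`, along
with the `#S` transpositions moving them, which leaves a transitive factorisation on the other
points. Inclusion–exclusion over `S` therefore expresses the pruned count by unpruned genus-zero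
counts. These are given by Hurwitz's formula, which satisfies the same cut-and-join recursion by
virtue of Abel's and Hurwitz's binomial identities. The transpositions cutting out `S` can be placed
among the others in `m.descFactorial #S` ways, each assigning the points of `S` to their places in
an order which must be compatible with the cyclic order along the cycles. For four cycles the
exponent in Hurwitz's formula leaves a sum of terms which split over the cycles, and for each cycle
the alternating sum over its points is a finite difference of a power.
-/

namespace PrunedHurwitz

open Finset

/-! ### Hurwitz's extension of Abel's identity -/

/-- The alternating sum `∑_{J ⊆ E} (-1)^{|E \ J|} (b + ∑_J s)^m`, an iterated finite difference of
`x ↦ x ^ m` with the steps `s i`. -/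
def alternatingSum {R ι : Type*} [CommRing R] [DecidableEq ι] (s : ι → R) (b : R) (E : Finset ι)
    (m : ℕ) : R :=
  ∑ J ∈ E.powerset, (-1) ^ #(E \ J) * (b + ∑ i ∈ J, s i) ^ m

section AlternatingSum

variable {R ι : Type*} [CommRing R] [DecidableEq ι] (s : ι → R) (b : R)

theorem alternatingSum_insert {E : Finset ι} {e : ι} (he : e ∉ E) (m : ℕ) :
    alternatingSum s b (insert e E) m
      = ∑ r ∈ range m, (m.choose r) * s e ^ (m - r) * alternatingSum s b E r := by
  have difference (y : R) :
      (y + s e) ^ m - y ^ m = ∑ r ∈ range m, (m.choose r) * s e ^ (m - r) * y ^ r := by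
    rw [add_pow, sum_range_succ]
    simp only [tsub_self, pow_zero, Nat.choose_self, Nat.cast_one, mul_one, add_sub_cancel_right]
    exact sum_congr rfl fun r _ => by ring
  simp only [alternatingSum, mul_sum]
  rw [sum_powerset_insert he, sum_comm, add_comm, ← sum_add_distrib]
  refine sum_congr rfl fun J hJ => ?_
  have hJE := mem_powerset.mp hJ
  have heJ : e ∉ J := fun h => he (hJE h)
  rw [insert_sdiff_insert, sdiff_insert_of_notMem he, insert_sdiff_of_notMem _ heJ,
    card_insert_of_notMem fun h => he (mem_sdiff.mp h).1, sum_insert heJ, pow_succ]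
  calc _ = (-1) ^ #(E \ J) * ((b + ∑ i ∈ J, s i + s e) ^ m - (b + ∑ i ∈ J, s i) ^ m) := by ring
    _ = _ := by
      rw [difference, mul_sum]
      exact sum_congr rfl fun r _ => by ring

theorem alternatingSum_eq_zero (E : Finset ι) {m : ℕ} (hm : m < #E) :
    alternatingSum s b E m = 0 := by
  induction E using Finset.induction_on generalizing m with
  | empty => simp at hm
  | insert e E he ih =>
    rw [card_insert_of_notMem he] at hm
    rw [alternatingSum_insert s b he]
    exact sum_eq_zero fun r hr => by rw [ih (by simp only [mem_range] at hr; lia), mul_zero]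

theorem alternatingSum_card (E : Finset ι) :
    alternatingSum s b E #E = (#E).factorial * ∏ i ∈ E, s i := by
  induction E using Finset.induction_on with
  | empty => simp [alternatingSum]
  | insert e E he ih =>
    rw [alternatingSum_insert s b he, card_insert_of_notMem he, sum_range_succ, ih,
      sum_eq_zero fun r hr => by rw [alternatingSum_eq_zero s b E (mem_range.mp hr), mul_zero],
      prod_insert he, Nat.choose_succ_self_right, Nat.factorial_succ, Nat.add_sub_cancel_left]
    push_cast
    ring

theorem two_mul_alternatingSum_card_succ (E : Finset ι) :
    2 * alternatingSum s b E (#E + 1)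
      = (#E + 1).factorial * (∏ i ∈ E, s i) * (2 * b + ∑ i ∈ E, s i) := by
  induction E using Finset.induction_on with
  | empty => simp [alternatingSum]
  | insert e E he ih =>
    have choose_two : ((#E + 2).choose #E : R) * 2 = (#E + 2) * (#E + 1) := by
      have h : (#E + 2).choose #E * 2 = (#E + 2) * (#E + 1) := by
        rw [Nat.choose_symm_add, ← Nat.add_one_mul_choose_eq (#E + 1) 1, Nat.choose_one_right]
      exact_mod_cast congrArg (Nat.cast (R := R)) h
    have factorial_succ : ((#E + 1).factorial : R) = (#E + 1) * (#E).factorial := by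
      rw [Nat.factorial_succ]; push_cast; ring
    rw [alternatingSum_insert s b he, card_insert_of_notMem he, sum_range_succ, sum_range_succ,
      sum_eq_zero fun r hr => by rw [alternatingSum_eq_zero s b E (mem_range.mp hr), mul_zero],
      alternatingSum_card, prod_insert he, sum_insert he, Nat.choose_succ_self_right,
      Nat.add_sub_cancel_left, show #E + 1 + 1 - #E = 2 by lia, Nat.factorial_succ (#E + 1)]
    push_cast
    linear_combination (#E + 2) * s e * ih
      + ((#E).factorial : R) * (∏ i ∈ E, s i) * s e ^ 2 * choose_two
      - (#E + 2) * s e ^ 2 * (∏ i ∈ E, s i) * factorial_succ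

end AlternatingSum

/-- The sum `∑_{I ⊔ J = D} (a + ∑_I s)^{|I| + p} (b + ∑_J s)^{|J| + q}` of Hurwitz's extension of
Abel's binomial identity. -/
def abelHurwitzSum {K ι : Type*} [Field K] [DecidableEq ι] (s : ι → K) (D : Finset ι) (a b : K)
    (p q : ℤ) : K :=
  ∑ I ∈ D.powerset, (a + ∑ i ∈ I, s i) ^ (#I + p) * (b + ∑ i ∈ D \ I, s i) ^ (#(D \ I) + q)

section AbelHurwitz

theorem sum_powerset_comm {M ι : Type*} [AddCommMonoid M] [DecidableEq ι] (D : Finset ι)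
    (f : Finset ι → Finset ι → M) :
    ∑ I ∈ D.powerset, f I (D \ I) = ∑ I ∈ D.powerset, f (D \ I) I :=
  sum_nbij' (D \ ·) (D \ ·) (by simp) (by simp)
    (fun I hI => Finset.sdiff_sdiff_eq_self (mem_powerset.mp hI))
    (fun I hI => Finset.sdiff_sdiff_eq_self (mem_powerset.mp hI))
    (fun I hI => by simp only [Finset.sdiff_sdiff_eq_self (mem_powerset.mp hI)])

variable {K ι : Type*} [Field K] [DecidableEq ι]

theorem sum_powerset_sub_pow_mul (D : Finset ι) (d : K) {y : Finset ι → K}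
    (hy : ∀ J ⊆ D, y J ≠ 0) (q : ℤ) :
    ∑ J ∈ D.powerset, (d - y J) ^ #(D \ J) * y J ^ (#J + q)
      = ∑ E ∈ D.powerset, d ^ #(D \ E) *
          ∑ J ∈ E.powerset, (-1) ^ #(E \ J) * y J ^ (#E + q) := by
  have expand : ∀ J ∈ D.powerset, (d - y J) ^ #(D \ J) * y J ^ (#J + q)
      = ∑ E ∈ Icc J D, d ^ #(D \ E) * ((-1) ^ #(E \ J) * y J ^ (#E + q)) := by
    intro J hJ
    have hJD := mem_powerset.mp hJ
    have disj : ∀ N ∈ (D \ J).powerset, Disjoint J N := fun N hN =>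
      disjoint_sdiff.mono_right (mem_powerset.mp hN)
    rw [sub_eq_neg_add, ← sum_pow_mul_eq_add_pow, sum_mul, Icc_eq_image_powerset hJD,
      sum_image fun M hM N hN h => by
        rw [← union_sdiff_cancel_left (disj M hM), ← union_sdiff_cancel_left (disj N hN), h]]
    refine sum_congr rfl fun N hN => ?_
    have hND := mem_powerset.mp hN
    rw [union_sdiff_cancel_left (disj N hN), card_union_of_disjoint (disj N hN), ← sup_eq_union,
      ← sdiff_sdiff_left, card_sdiff_of_subset hND,
      show ((#J + #N : ℕ) + q : ℤ) = #N + (#J + q) by push_cast; ring,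
      zpow_add₀ (hy J hJD) #N, zpow_natCast, neg_pow]
    ring
  rw [sum_congr rfl expand, sum_comm' (t' := D.powerset) (s' := powerset)]
  · simp only [mul_sum]
  · intro J E
    simp only [mem_powerset, mem_Icc]
    exact ⟨fun h => h.2, fun h => ⟨h.1.trans h.2, h⟩⟩

variable {s : ι → K} {D : Finset ι} {a b : K}

theorem abelHurwitzSum_comm (p q : ℤ) :
    abelHurwitzSum s D a b p q = abelHurwitzSum s D b a q p := by
  simp only [abelHurwitzSum]
  rw [sum_powerset_comm D fun I J => (a + ∑ i ∈ I, s i) ^ (#I + p) * (b + ∑ i ∈ J, s i) ^ (#J + q)]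
  exact sum_congr rfl fun _ _ => mul_comm _ _

theorem abelHurwitzSum_zero_left (hb : ∀ J ⊆ D, b + ∑ i ∈ J, s i ≠ 0) (q : ℤ) :
    abelHurwitzSum s D a b 0 q
      = ∑ E ∈ D.powerset, (a + b + ∑ i ∈ D, s i) ^ #(D \ E) *
          ∑ J ∈ E.powerset, (-1) ^ #(E \ J) * (b + ∑ i ∈ J, s i) ^ (#E + q) := by
  rw [abelHurwitzSum_comm, ← sum_powerset_sub_pow_mul D _ hb]
  refine sum_congr rfl fun J hJ => ?_
  rw [add_zero, zpow_natCast, mul_comm, ← sum_sdiff (mem_powerset.mp hJ)]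
  ring_nf

theorem sum_neg_one_pow_mul_zpow_eq_zero {E : Finset ι} {q : ℤ} (hq : q < 0) (hE : 0 ≤ #E + q) :
    ∑ J ∈ E.powerset, (-1) ^ #(E \ J) * (b + ∑ i ∈ J, s i) ^ (#E + q) = 0 := by
  obtain ⟨m, hm⟩ := Int.eq_ofNat_of_zero_le hE
  simp only [hm, zpow_natCast]
  exact alternatingSum_eq_zero s b E (by lia)

theorem abelHurwitzSum_zero_neg_one (hb : ∀ J ⊆ D, b + ∑ i ∈ J, s i ≠ 0) :
    abelHurwitzSum s D a b 0 (-1) = (a + b + ∑ i ∈ D, s i) ^ #D / b := by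
  rw [abelHurwitzSum_zero_left hb, sum_eq_single_of_mem ∅ (empty_mem_powerset D)]
  · simp [div_eq_mul_inv]
  · intro E _ hE
    have := card_pos.mpr (nonempty_iff_ne_empty.mpr hE)
    rw [sum_neg_one_pow_mul_zpow_eq_zero (by norm_num) (by lia), mul_zero]

theorem sum_powerset_eq_of_two_le_card {M ι : Type*} [AddCommMonoid M] (D : Finset ι)
    {F : Finset ι → M} (hF : ∀ E, 2 ≤ #E → F E = 0) :
    ∑ E ∈ D.powerset, F E = F ∅ + ∑ i ∈ D, F {i} := by
  classical
  induction D using Finset.induction_on with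
  | empty => simp
  | insert e D he ih =>
    rw [sum_powerset_insert he, ih, sum_insert he, add_assoc, add_comm (F {e}),
      sum_eq_single_of_mem ∅ (empty_mem_powerset D), insert_empty_eq]
    intro J hJ hne
    have := card_pos.mpr (nonempty_iff_ne_empty.mpr hne)
    exact hF _ (by rw [card_insert_of_notMem fun h => he (mem_powerset.mp hJ h)]; lia)

theorem abelHurwitzSum_zero_neg_two (hb : ∀ J ⊆ D, b + ∑ i ∈ J, s i ≠ 0) :
    abelHurwitzSum s D a b 0 (-2) = (a + b + ∑ i ∈ D, s i) ^ #D / b ^ 2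
      + (a + b + ∑ i ∈ D, s i) ^ (#D - 1) * ∑ i ∈ D, (1 / (b + s i) - 1 / b) := by
  rw [abelHurwitzSum_zero_left hb, sum_powerset_eq_of_two_le_card _ fun E hE => ?_, mul_sum D]
  · refine congrArg₂ (· + ·) ?_ (sum_congr rfl fun i hi => ?_)
    · simp only [sdiff_empty, powerset_empty, sum_singleton, card_empty, pow_zero, sum_empty,
        add_zero, one_mul, Nat.cast_zero, zero_add, div_eq_mul_inv, zpow_neg, zpow_ofNat]
    · rw [← insert_empty_eq, sum_powerset_insert (notMem_empty i)]
      simp only [insert_empty_eq, singleton_subset_iff, hi, card_sdiff_of_subset, card_singleton,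
        powerset_empty, Nat.cast_one, Int.reduceNeg, Int.reduceAdd, zpow_neg, zpow_ofNat, pow_one,
        sum_singleton, sdiff_empty, sum_empty, add_zero, one_mul, sdiff_self, bot_eq_empty,
        card_empty, pow_zero, one_div]
      ring
  · rw [sum_neg_one_pow_mul_zpow_eq_zero (by norm_num) (by lia), mul_zero]

theorem mul_abelHurwitzSum (ha : ∀ J ⊆ D, a + ∑ i ∈ J, s i ≠ 0)
    (hb : ∀ J ⊆ D, b + ∑ i ∈ J, s i ≠ 0) (p q : ℤ) :
    (a + b + ∑ i ∈ D, s i) * abelHurwitzSum s D a b p q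
      = abelHurwitzSum s D a b (p + 1) q + abelHurwitzSum s D a b p (q + 1) := by
  simp only [abelHurwitzSum, mul_sum, ← sum_add_distrib]
  refine sum_congr rfl fun I hI => ?_
  rw [← add_assoc, ← add_assoc, zpow_add_one₀ (ha I (mem_powerset.mp hI)),
    zpow_add_one₀ (hb _ sdiff_subset), ← sum_sdiff (mem_powerset.mp hI)]
  ring

theorem mul_abelHurwitzSum_neg_one_neg_one (ha : ∀ J ⊆ D, a + ∑ i ∈ J, s i ≠ 0)
    (hb : ∀ J ⊆ D, b + ∑ i ∈ J, s i ≠ 0) :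
    (a + b + ∑ i ∈ D, s i) * abelHurwitzSum s D a b (-1) (-1)
      = (a + b + ∑ i ∈ D, s i) ^ #D * (1 / a + 1 / b) := by
  rw [mul_abelHurwitzSum ha hb, abelHurwitzSum_comm (-1), neg_add_cancel,
    abelHurwitzSum_zero_neg_one ha, abelHurwitzSum_zero_neg_one hb, add_comm b a]
  ring

theorem mul_abelHurwitzSum_neg_one_neg_two (ha : ∀ J ⊆ D, a + ∑ i ∈ J, s i ≠ 0)
    (hb : ∀ J ⊆ D, b + ∑ i ∈ J, s i ≠ 0) :
    (a + b + ∑ i ∈ D, s i) * abelHurwitzSum s D a b (-1) (-2)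
      = (a + b + ∑ i ∈ D, s i) ^ #D / b ^ 2
        + (a + b + ∑ i ∈ D, s i) ^ (#D - 1) * ∑ i ∈ D, (1 / (b + s i) - 1 / b)
        + abelHurwitzSum s D a b (-1) (-1) := by
  rw [mul_abelHurwitzSum ha hb, neg_add_cancel, abelHurwitzSum_zero_neg_two hb]
  rfl

omit [DecidableEq ι] in
theorem sum_sq_mul_inv_add (ha : ∀ i ∈ D, a + s i ≠ 0) (hb : ∀ i ∈ D, b + s i ≠ 0) (ha₀ : a ≠ 0)
    (hb₀ : b ≠ 0) :
    ∑ i ∈ D, (a + b + s i) ^ 2 * (1 / (a ^ 2 * (b + s i)) + 1 / (b ^ 2 * (a + s i)))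
        - (#D - 1) * ((a + b) ^ 3 / (a ^ 2 * b ^ 2))
      = ∑ i ∈ D, (1 / (a + s i) - 1 / a) + ∑ i ∈ D, (1 / (b + s i) - 1 / b)
        + (a + b + ∑ i ∈ D, s i) * (1 / a ^ 2 + 1 / b ^ 2) + 2 * (1 / a + 1 / b) := by
  have summand : ∀ i ∈ D,
      (a + b + s i) ^ 2 * (1 / (a ^ 2 * (b + s i)) + 1 / (b ^ 2 * (a + s i)))
        = (1 / (a + s i) - 1 / a) + (1 / (b + s i) - 1 / b)
          + s i * (1 / a ^ 2 + 1 / b ^ 2) + (a + b) ^ 3 / (a ^ 2 * b ^ 2) := fun i hi => by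
    have := ha i hi
    have := hb i hi
    field_simp
    ring
  have remainder : (a + b) ^ 3 / (a ^ 2 * b ^ 2)
      = (a + b) * (1 / a ^ 2 + 1 / b ^ 2) + 2 * (1 / a + 1 / b) := by
    field_simp
    ring
  rw [sum_congr rfl summand, sum_add_distrib, sum_add_distrib, sum_add_distrib, ← sum_mul,
    sum_const, nsmul_eq_mul]
  linear_combination remainder

theorem abelHurwitzSum_neg_two_neg_two (ha : ∀ J ⊆ D, a + ∑ i ∈ J, s i ≠ 0)
    (hb : ∀ J ⊆ D, b + ∑ i ∈ J, s i ≠ 0) (hd : a + b + ∑ i ∈ D, s i ≠ 0) :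
    abelHurwitzSum s D a b (-2) (-2) = (a + b + ∑ i ∈ D, s i) ^ (#D - 3 : ℤ) *
      (∑ i ∈ D, (a + b + s i) ^ 2 * (1 / (a ^ 2 * (b + s i)) + 1 / (b ^ 2 * (a + s i)))
        - (#D - 1) * ((a + b) ^ 3 / (a ^ 2 * b ^ 2))) := by
  rw [sum_sq_mul_inv_add (fun i hi => by simpa using ha {i} (by simpa using hi))
    (fun i hi => by simpa using hb {i} (by simpa using hi)) (by simpa using ha ∅ (empty_subset D))
    (by simpa using hb ∅ (empty_subset D))]
  have neg_one_neg_one := mul_abelHurwitzSum_neg_one_neg_one ha hb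
  have neg_one_neg_two := mul_abelHurwitzSum_neg_one_neg_two ha hb
  have neg_two_neg_one := mul_abelHurwitzSum_neg_one_neg_two hb ha
  rw [abelHurwitzSum_comm (-1) (-2), abelHurwitzSum_comm (-1) (-1), add_comm b a]
    at neg_two_neg_one
  have neg_two_neg_two := mul_abelHurwitzSum ha hb (-2) (-2)
  simp only [show (-2 + 1 : ℤ) = -1 from rfl] at neg_two_neg_two
  generalize a + b + ∑ i ∈ D, s i = d at *
  have pow_card : d ^ #D = d ^ (#D - 3 : ℤ) * d ^ 3 := by
    rw [← zpow_natCast d 3, ← zpow_add₀ hd, Nat.cast_ofNat, sub_add_cancel, zpow_natCast]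
  have pow_pred (f : ι → K) :
      d ^ (#D - 1) * ∑ i ∈ D, f i = d ^ (#D - 3 : ℤ) * d ^ 2 * ∑ i ∈ D, f i := by
    obtain rfl | hD := D.eq_empty_or_nonempty
    · simp
    · rw [← pow_sub_one_mul hD.card_pos.ne', pow_succ d 2, ← mul_assoc] at pow_card
      rw [mul_right_cancel₀ hd pow_card]
  rw [pow_card] at neg_one_neg_one
  rw [pow_card, pow_pred] at neg_one_neg_two neg_two_neg_one
  apply mul_left_cancel₀ (pow_ne_zero 3 hd)
  linear_combination d ^ 2 * neg_two_neg_two + d * neg_one_neg_two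
    + d * neg_two_neg_one + 2 * neg_one_neg_one

end AbelHurwitz

/-! ### Coefficients of the tree function -/

/-- The coefficient `z ^ n / n!` of `X ^ n` in `exp (z X)`. -/
def expCoeff (z : ℚ) (n : ℕ) : ℚ := z ^ n / n.factorial

/-- The coefficient `n ^ (n - 1) / n!` of the exponential generating function of rooted labelled
trees; at `n = 0` it is `0`, by division by zero. -/
def treeCoeff (n : ℕ) : ℚ := expCoeff n n / n

/-- The factor `n ^ (n + 1) / n!` which a cycle of length `n` contributes to Hurwitz's formula. -/
def hurwitzWeight (n : ℕ) : ℚ := n * expCoeff n n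

section TreeIdentities

theorem expCoeff_zero (z : ℚ) : expCoeff z 0 = 1 := by simp [expCoeff]

theorem succ_mul_expCoeff_succ (z : ℚ) (n : ℕ) :
    (n + 1) * expCoeff z (n + 1) = z * expCoeff z n := by
  rw [expCoeff, expCoeff, Nat.factorial_succ]
  push_cast
  field_simp
  ring

theorem expCoeff_add (x y : ℚ) (n : ℕ) :
    expCoeff (x + y) n = ∑ p ∈ antidiagonal n, expCoeff x p.1 * expCoeff y p.2 := by
  simp only [expCoeff]
  rw [(Commute.all x y).add_pow', sum_div]
  refine sum_congr rfl fun p hp => ?_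
  rw [← mem_antidiagonal.mp hp, nsmul_eq_mul, Nat.cast_add_choose]
  field_simp

theorem mul_treeCoeff (n : ℕ) (hn : n ≠ 0) : n * treeCoeff n = expCoeff n n := by
  rw [treeCoeff, mul_div_cancel₀ _ (by exact_mod_cast hn)]

theorem sq_mul_treeCoeff (n : ℕ) : (n : ℚ) ^ 2 * treeCoeff n = hurwitzWeight n := by
  obtain rfl | hn := eq_or_ne n 0
  · simp [hurwitzWeight]
  · rw [hurwitzWeight, ← mul_treeCoeff n hn]; ring

theorem treeCoeff_succ (n : ℕ) : treeCoeff (n + 1) = (n + 1) ^ (n - 1 : ℤ) / n.factorial := by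
  rw [treeCoeff, expCoeff, zpow_sub_one₀ (by positivity), zpow_natCast, Nat.factorial_succ]
  push_cast
  field_simp
  ring

/-- Abel's binomial identity. -/
theorem sum_treeCoeff_succ_mul_expCoeff (n : ℕ) (y : ℚ) :
    ∑ p ∈ antidiagonal n, treeCoeff (p.1 + 1) * expCoeff (y + p.2) p.2
      = expCoeff (y + n + 1) n := by
  have hurwitz := abelHurwitzSum_zero_neg_one (s := fun _ : Fin n => (1 : ℚ)) (D := univ) (a := y)
    (b := 1) (fun J _ => by rw [sum_const, nsmul_one]; positivity)
  rw [abelHurwitzSum_comm] at hurwitz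
  have sum_card : ∀ I ∈ (univ : Finset (Fin n)).powerset,
      (1 + ∑ _i ∈ I, (1 : ℚ)) ^ (#I + -1 : ℤ)
          * (y + ∑ _i ∈ univ \ I, (1 : ℚ)) ^ (#(univ \ I) + 0 : ℤ)
        = (fun k : ℕ => (k + 1 : ℚ) ^ (k - 1 : ℤ) * (y + (n - k : ℕ)) ^ (n - k)) #I := fun I _ => by
    simp [card_univ_sdiff, add_comm (1 : ℚ), ← sub_eq_add_neg]
  rw [abelHurwitzSum, sum_congr rfl sum_card,
    sum_powerset_apply_card
      fun k : ℕ => (k + 1 : ℚ) ^ (k - 1 : ℤ) * (y + (n - k : ℕ)) ^ (n - k)] at hurwitz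
  simp only [card_univ, Fintype.card_fin, sum_const, nsmul_eq_mul, mul_one, div_one] at hurwitz
  rw [Nat.sum_antidiagonal_eq_sum_range_succ fun i j => treeCoeff (i + 1) * expCoeff (y + j) j,
    expCoeff, add_right_comm, ← hurwitz, sum_div]
  refine sum_congr rfl fun k hk => ?_
  rw [treeCoeff_succ, expCoeff, Nat.cast_choose ℚ (mem_range_succ_iff.mp hk)]
  field_simp

theorem sum_treeCoeff_mul_expCoeff (j m : ℕ) :
    (j + m) * ∑ p ∈ antidiagonal m, treeCoeff p.1 * expCoeff (j + p.2) p.2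
      = m * expCoeff (j + m) m := by
  cases m with
  | zero => simp [treeCoeff]
  | succ m =>
    rw [Nat.sum_antidiagonal_succ, sum_treeCoeff_succ_mul_expCoeff]
    push_cast
    rw [succ_mul_expCoeff_succ]
    simp [treeCoeff, add_assoc]

/-- The differential equation `2 (z T' - T) = z (T ^ 2)'` of the tree function, on coefficients. -/
theorem two_mul_pred_mul_treeCoeff (n : ℕ) :
    2 * (n - 1) * treeCoeff n = n * ∑ p ∈ antidiagonal n, treeCoeff p.1 * treeCoeff p.2 := by
  cases n with
  | zero => simp [treeCoeff]
  | succ m =>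
    have weighted : ∑ p ∈ antidiagonal (m + 1), treeCoeff p.1 * (p.2 * treeCoeff p.2)
        = m * treeCoeff (m + 1) := by
      have abel := sum_treeCoeff_mul_expCoeff 0 (m + 1)
      simp only [Nat.cast_zero, zero_add, ← mul_treeCoeff (m + 1) m.succ_ne_zero] at abel
      have abel := mul_left_cancel₀ (by positivity) abel
      rw [Nat.sum_antidiagonal_succ'] at abel ⊢
      simp only [Nat.cast_zero, expCoeff_zero, ← mul_treeCoeff (_ + 1) (Nat.succ_ne_zero _)] at abel
      push_cast at abel ⊢
      linear_combination abel
    have swapped : ∑ p ∈ antidiagonal (m + 1), treeCoeff p.2 * (p.1 * treeCoeff p.1)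
        = m * treeCoeff (m + 1) := by
      rw [← weighted]
      exact Nat.sum_antidiagonal_swap (f := fun p => treeCoeff p.1 * (p.2 * treeCoeff p.2))
    push_cast
    rw [add_sub_cancel_right, mul_assoc, two_mul, ← weighted]
    nth_rw 2 [weighted]
    rw [← swapped, ← sum_add_distrib, mul_sum]
    refine sum_congr rfl fun p hp => ?_
    have fst_add_snd : (p.1 + p.2 : ℚ) = m + 1 := by exact_mod_cast mem_antidiagonal.mp hp
    linear_combination (treeCoeff p.1 * treeCoeff p.2) * fst_add_snd

theorem sum_antidiagonal_antidiagonal_comm {M : Type*} [AddCommMonoid M] (n : ℕ)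
    (f : ℕ → ℕ → ℕ → M) :
    ∑ p ∈ antidiagonal n, ∑ q ∈ antidiagonal p.2, f p.1 q.1 q.2
      = ∑ p ∈ antidiagonal n, ∑ q ∈ antidiagonal p.2, f q.1 p.1 q.2 := by
  rw [sum_sigma', sum_sigma']
  exact sum_nbij' (fun x => ⟨(x.2.1, x.1.1 + x.2.2), (x.1.1, x.2.2)⟩)
    (fun x => ⟨(x.2.1, x.1.1 + x.2.2), (x.1.1, x.2.2)⟩) (by simp; lia) (by simp; lia)
    (by rintro ⟨⟨a, b⟩, j, l⟩; simp_all) (by rintro ⟨⟨a, b⟩, j, l⟩; simp_all) (by simp)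

theorem sum_antidiagonal_mul_expCoeff_by_parts (f : ℕ → ℚ) (k y : ℕ) :
    (k + 1 + y) * ∑ p ∈ antidiagonal (k + 1),
        p.1 * f p.2 * (expCoeff y (y + p.1) * expCoeff (k + 1) p.2)
      = (k + 1) * y * (f (k + 1) * (expCoeff y y * expCoeff (k + 1) (k + 1))
          + ∑ p ∈ antidiagonal k,
              (f p.2 - f (p.2 + 1)) * (expCoeff y (y + p.1) * expCoeff (k + 1) p.2)) := by
  have split : ∀ p ∈ antidiagonal (k + 1),
      (k + 1 + y) * (p.1 * f p.2 * (expCoeff y (y + p.1) * expCoeff (k + 1) p.2))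
        = (k + 1) * f p.2 * ((y + p.1) * expCoeff y (y + p.1)) * expCoeff (k + 1) p.2
          - y * f p.2 * expCoeff y (y + p.1) * (p.2 * expCoeff (k + 1) p.2) := fun p hp => by
    have fst_add_snd : (p.1 + p.2 : ℚ) = k + 1 := by exact_mod_cast mem_antidiagonal.mp hp
    linear_combination (y * f p.2 * expCoeff y (y + p.1) * expCoeff (k + 1) p.2) * fst_add_snd
  have lower (j : ℕ) :
      (y + (j + 1 : ℕ)) * expCoeff y (y + (j + 1)) = y * expCoeff y (y + j) := by
    have lower := succ_mul_expCoeff_succ y (y + j)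
    push_cast at lower ⊢
    rw [← add_assoc, ← lower, ← add_assoc]
  rw [mul_sum, sum_congr rfl split, sum_sub_distrib, Nat.sum_antidiagonal_succ,
    Nat.sum_antidiagonal_succ']
  simp only [lower]
  push_cast
  simp only [succ_mul_expCoeff_succ, zero_mul, mul_zero, add_zero, zero_add]
  rw [add_sub_assoc, ← sum_sub_distrib, mul_add, mul_sum]
  exact congrArg₂ _ (by ring) (sum_congr rfl fun p _ => by ring)

theorem hurwitzWeight_mul_div (y b : ℕ) (hy : y ≠ 0) :
    hurwitzWeight y * (hurwitzWeight b / (b + y))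
      = ∑ p ∈ antidiagonal b, p.1 * (expCoeff y (y + p.1) * expCoeff b p.2) := by
  cases b with
  | zero => simp [hurwitzWeight]
  | succ k =>
    have by_parts := sum_antidiagonal_mul_expCoeff_by_parts (fun _ => 1) k y
    simp only [mul_one, sub_self, zero_mul, sum_const_zero, add_zero, one_mul] at by_parts
    rw [← mul_div_assoc, div_eq_iff (by positivity), mul_comm (∑ _ ∈ _, _)]
    push_cast
    rw [by_parts, hurwitzWeight, hurwitzWeight]
    push_cast
    ring

/-- The convolution to which Hurwitz's formula reduces the effect of cutting a cycle of length `x`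
with one further cycle, of length `y`, present. -/
def treeConvolution (x y : ℕ) : ℚ :=
  ∑ p ∈ antidiagonal x, treeCoeff p.1 * (hurwitzWeight p.2 / (p.2 + y))

theorem mul_treeConvolution (x y : ℕ) (hy : y ≠ 0) :
    x * hurwitzWeight y * treeConvolution x y
      = ∑ p ∈ antidiagonal x, p.1 * p.2 * (expCoeff y (y + p.1) * expCoeff x p.2) := by
  calc x * hurwitzWeight y * treeConvolution x y
    _ = x * ∑ p ∈ antidiagonal x, ∑ q ∈ antidiagonal p.2,
          treeCoeff p.1 * (q.1 * (expCoeff y (y + q.1) * expCoeff ↑(q.1 + q.2) q.2)) := by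
      rw [treeConvolution, mul_assoc, mul_sum]
      refine congrArg _ (sum_congr rfl fun p _ => ?_)
      rw [mul_left_comm, hurwitzWeight_mul_div y p.2 hy, mul_sum]
      exact sum_congr rfl fun q hq => by rw [mem_antidiagonal.mp hq]
    _ = ∑ p ∈ antidiagonal x, p.1 * expCoeff y (y + p.1) *
          ((p.1 + p.2) * ∑ q ∈ antidiagonal p.2,
            treeCoeff q.1 * expCoeff (p.1 + q.2) q.2) := by
      rw [sum_antidiagonal_antidiagonal_comm x fun i j l =>
        treeCoeff i * (j * (expCoeff y (y + j) * expCoeff ↑(j + l) l)), mul_sum]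
      refine sum_congr rfl fun p hp => ?_
      rw [← mem_antidiagonal.mp hp, mul_sum, mul_sum, mul_sum]
      exact sum_congr rfl fun q _ => by push_cast; ring
    _ = _ := sum_congr rfl fun p hp => by
      rw [sum_treeCoeff_mul_expCoeff, ← Nat.cast_add, mem_antidiagonal.mp hp]
      ring

theorem add_mul_treeConvolution (k y : ℕ) (hy : y ≠ 0) :
    (k + 1 + y) * ((k + 1) * hurwitzWeight y * treeConvolution (k + 1) y)
      = (k + 1) * y * ((k + 1) * (expCoeff y y * expCoeff (k + 1) (k + 1))
          - ∑ p ∈ antidiagonal k, expCoeff y (y + p.1) * expCoeff (k + 1) p.2) := by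
  have convolution := mul_treeConvolution (k + 1) y hy
  have by_parts := sum_antidiagonal_mul_expCoeff_by_parts (fun m => m) k y
  push_cast at convolution by_parts
  rw [convolution, by_parts]
  simp [sub_eq_add_neg]

/-- The two tails of the binomial expansion of `(x + y) ^ (x + y - 1)`. -/
theorem sum_expCoeff_add_sum_expCoeff (j k : ℕ) :
    ∑ p ∈ antidiagonal j, expCoeff (k + 1) (k + 1 + p.1) * expCoeff (j + 1) p.2
        + ∑ p ∈ antidiagonal k, expCoeff (j + 1) (j + 1 + p.1) * expCoeff (k + 1) p.2
      = expCoeff (j + 1 + (k + 1)) (j + k + 1) := by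
  rw [expCoeff_add, Nat.sum_antidiagonal_eq_sum_range_succ
      fun p q => expCoeff (j + 1 : ℚ) p * expCoeff (k + 1 : ℚ) q,
    show (j + k + 1).succ = j + 1 + (k + 1) by lia, sum_range_add,
    ← Nat.sum_antidiagonal_swap]
  simp only [Prod.fst_swap, Prod.snd_swap]
  rw [Nat.sum_antidiagonal_eq_sum_range_succ
      fun p q => expCoeff (k + 1 : ℚ) (k + 1 + q) * expCoeff (j + 1 : ℚ) p,
    Nat.sum_antidiagonal_eq_sum_range_succ
      fun p q => expCoeff (j + 1 : ℚ) (j + 1 + p) * expCoeff (k + 1 : ℚ) q]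
  refine congrArg₂ _ (sum_congr rfl fun i hi => ?_) (sum_congr rfl fun i _ => ?_)
  · have := mem_range_succ_iff.mp hi
    rw [mul_comm, show k + 1 + (j - i) = j + k + 1 - i by lia]
  · rw [show k - i = j + k + 1 - (j + 1 + i) by lia]

theorem hurwitzWeight_mul_hurwitzWeight (x y : ℕ) (hx : x ≠ 0) (hy : y ≠ 0) :
    hurwitzWeight x * hurwitzWeight y = x * y * treeCoeff (x + y)
      + x * hurwitzWeight y * treeConvolution x y
      + y * hurwitzWeight x * treeConvolution y x := by
  obtain ⟨j, rfl⟩ := Nat.exists_eq_succ_of_ne_zero hx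
  obtain ⟨k, rfl⟩ := Nat.exists_eq_succ_of_ne_zero hy
  have left := add_mul_treeConvolution j (k + 1) hy
  have right := add_mul_treeConvolution k (j + 1) hx
  have tails := sum_expCoeff_add_sum_expCoeff j k
  have tree : (j + 1 + (k + 1)) * treeCoeff (j + 1 + (k + 1))
      = expCoeff (j + 1 + (k + 1)) (j + k + 1) := by
    have size : j + 1 + (k + 1) = j + k + 1 + 1 := by lia
    have lower := succ_mul_expCoeff_succ (j + k + 1 + 1) (j + k + 1)
    have tree := mul_treeCoeff (j + k + 1 + 1) (by lia)
    push_cast at tree lower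
    rw [size, show (j + 1 + (k + 1) : ℚ) = j + k + 1 + 1 by ring, tree]
    exact mul_left_cancel₀ (by positivity) lower
  simp only [Nat.succ_eq_add_one, hurwitzWeight] at left right ⊢
  push_cast at left right ⊢
  refine mul_left_cancel₀ (a := (j + 1 + (k + 1) : ℚ)) (by positivity) ?_
  linear_combination -left - right - (j + 1) * (k + 1) * tree + (j + 1) * (k + 1) * tails

end TreeIdentities

/-! ### Hurwitz's formula and the cut-and-join equation -/

/-- Hurwitz's formula: the number of transitive factorisations of a permutation whose cycles have
the given lengths into the least possible number `m` of transpositions, divided by `m!`. -/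
def hurwitzNumber (parts : Multiset ℕ) : ℚ :=
  parts.sum ^ (parts.card - 3 : ℤ) * (parts.map hurwitzWeight).prod

/-- The sum of the products of the Hurwitz numbers of the two pieces, over the ways to cut a cycle
of length `n` into two pieces and to distribute the cycles in `D`, of lengths `s`, among them. -/
def cutSum {ι : Type*} [DecidableEq ι] (s : ι → ℕ) (n : ℕ) (D : Finset ι) : ℚ :=
  ∑ p ∈ antidiagonal n, ∑ I ∈ D.powerset,
    hurwitzNumber (p.1 ::ₘ I.val.map s) * hurwitzNumber (p.2 ::ₘ (D \ I).val.map s)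

section CutAndJoin

variable {ι : Type*} (s : ι → ℕ)

theorem hurwitzNumber_map (C : Finset ι) :
    hurwitzNumber (C.val.map s)
      = (∑ i ∈ C, (s i : ℚ)) ^ (#C - 3 : ℤ) * ∏ i ∈ C, hurwitzWeight (s i) := by
  simp [hurwitzNumber]

theorem hurwitzNumber_cons_map (n : ℕ) (I : Finset ι) :
    hurwitzNumber (n ::ₘ I.val.map s) = (n + ∑ i ∈ I, (s i : ℚ)) ^ (#I - 2 : ℤ) *
      (hurwitzWeight n * ∏ i ∈ I, hurwitzWeight (s i)) := by
  have exponent : (#I + 1 - 3 : ℤ) = #I - 2 := by ring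
  simp [hurwitzNumber, exponent]

theorem hurwitzNumber_zero_cons (parts : Multiset ℕ) : hurwitzNumber (0 ::ₘ parts) = 0 := by
  simp [hurwitzNumber, hurwitzWeight]

theorem sum_offDiag_eq_sum_sum_erase {M : Type*} [AddCommMonoid M] [DecidableEq ι] (C : Finset ι)
    (f : ι → ι → M) :
    ∑ p ∈ C.offDiag, f p.1 p.2 = ∑ i ∈ C, ∑ j ∈ C.erase i, f i j :=
  sum_finset_product' _ _ _ fun p => by rw [mem_offDiag, mem_erase]; tauto

theorem sum_offDiag_swap {M : Type*} [AddCommMonoid M] (C : Finset ι) (f : ι → ι → M) :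
    ∑ p ∈ C.offDiag, f p.1 p.2 = ∑ p ∈ C.offDiag, f p.2 p.1 :=
  sum_nbij' Prod.swap Prod.swap (by simp; tauto) (by simp; tauto) (by simp) (by simp) (by simp)

theorem sum_offDiag_add_sq (s : ι → ℚ) (C : Finset ι) :
    ∑ p ∈ C.offDiag, (s p.1 + s p.2) ^ 2
      = 2 * (#C - 2) * ∑ i ∈ C, s i ^ 2 + 2 * (∑ i ∈ C, s i) ^ 2 := by
  classical
  have square : ∑ p ∈ C ×ˢ C, (s p.1 + s p.2) ^ 2
      = 2 * #C * ∑ i ∈ C, s i ^ 2 + 2 * (∑ i ∈ C, s i) ^ 2 := by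
    simp only [sum_product, add_sq, sum_add_distrib, sum_const, nsmul_eq_mul, ← mul_sum, ← sum_mul]
    ring
  rw [← diag_union_offDiag, sum_union (disjoint_diag_offDiag C), sum_diag] at square
  simp only [← two_mul, mul_pow, ← mul_sum] at square
  linear_combination square

variable {s} [DecidableEq ι] {D : Finset ι}

theorem sum_hurwitzNumber_mul_hurwitzNumber (a b : ℕ) :
    ∑ I ∈ D.powerset,
        hurwitzNumber (a ::ₘ I.val.map s) * hurwitzNumber (b ::ₘ (D \ I).val.map s)
      = (a + b + ∑ i ∈ D, (s i : ℚ)) ^ (#D - 3 : ℤ) * (∏ i ∈ D, hurwitzWeight (s i)) *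
        (∑ i ∈ D, (a + b + s i) ^ 2 * (treeCoeff a * (hurwitzWeight b / (b + s i))
            + treeCoeff b * (hurwitzWeight a / (a + s i)))
          - (#D - 1) * ((a + b) ^ 3 * (treeCoeff a * treeCoeff b))) := by
  obtain rfl | ha := eq_or_ne a 0
  · simp [hurwitzNumber_zero_cons, treeCoeff, hurwitzWeight]
  obtain rfl | hb := eq_or_ne b 0
  · simp [hurwitzNumber_zero_cons, treeCoeff, hurwitzWeight]
  have abel : ∀ I ∈ D.powerset,
      hurwitzNumber (a ::ₘ I.val.map s) * hurwitzNumber (b ::ₘ (D \ I).val.map s)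
        = hurwitzWeight a * hurwitzWeight b * (∏ i ∈ D, hurwitzWeight (s i)) *
          ((a + ∑ i ∈ I, (s i : ℚ)) ^ (#I + -2 : ℤ)
            * (b + ∑ i ∈ D \ I, (s i : ℚ)) ^ (#(D \ I) + -2 : ℤ)) := fun I hI => by
    rw [hurwitzNumber_cons_map, hurwitzNumber_cons_map, ← prod_sdiff (mem_powerset.mp hI)]
    simp only [sub_eq_add_neg]
    ring
  rw [sum_congr rfl abel, ← mul_sum, ← abelHurwitzSum, abelHurwitzSum_neg_two_neg_two
    (fun J _ => by positivity) (fun J _ => by positivity) (by positivity), mul_mul_mul_comm,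
    mul_comm (hurwitzWeight a * hurwitzWeight b), mul_mul_mul_comm,
    ← sq_mul_treeCoeff a, ← sq_mul_treeCoeff b]
  refine congrArg _ ?_
  rw [mul_sub, mul_sum]
  congr 1
  · exact sum_congr rfl fun i _ => by field_simp
  · field_simp

theorem cutSum_eq (n : ℕ) :
    cutSum s n D = (n + ∑ i ∈ D, (s i : ℚ)) ^ (#D - 3 : ℤ) * (∏ i ∈ D, hurwitzWeight (s i)) *
      (∑ i ∈ D, 2 * (n + s i) ^ 2 * treeConvolution n (s i)
        - 2 * (#D - 1) * (n - 1) * hurwitzWeight n) := by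
  have pieces : ∀ p ∈ antidiagonal n, ∑ I ∈ D.powerset,
      hurwitzNumber (p.1 ::ₘ I.val.map s) * hurwitzNumber (p.2 ::ₘ (D \ I).val.map s)
      = (n + ∑ i ∈ D, (s i : ℚ)) ^ (#D - 3 : ℤ) * (∏ i ∈ D, hurwitzWeight (s i)) *
        (∑ i ∈ D, (n + s i) ^ 2 * (treeCoeff p.1 * (hurwitzWeight p.2 / (p.2 + s i))
            + treeCoeff p.2 * (hurwitzWeight p.1 / (p.1 + s i)))
          - (#D - 1) * (n ^ 3 * (treeCoeff p.1 * treeCoeff p.2))) := fun p hp => by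
    rw [sum_hurwitzNumber_mul_hurwitzNumber p.1 p.2, ← mem_antidiagonal.mp hp, Nat.cast_add]
  have swapped (y : ℕ) : ∑ p ∈ antidiagonal n, treeCoeff p.2 * (hurwitzWeight p.1 / (p.1 + y))
      = treeConvolution n y :=
    Nat.sum_antidiagonal_swap (f := fun p => treeCoeff p.1 * (hurwitzWeight p.2 / (p.2 + y)))
  have tree : (n : ℚ) ^ 3 * ∑ p ∈ antidiagonal n, treeCoeff p.1 * treeCoeff p.2
      = 2 * (n - 1) * hurwitzWeight n := by
    rw [← sq_mul_treeCoeff]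
    linear_combination - (n : ℚ) ^ 2 * two_mul_pred_mul_treeCoeff n
  rw [cutSum, sum_congr rfl pieces, ← mul_sum, sum_sub_distrib, sum_comm]
  simp only [← mul_sum, sum_add_distrib, swapped, tree]
  simp only [← treeConvolution.eq_def, ← two_mul]
  refine congrArg _ (congrArg₂ _ (sum_congr rfl fun i _ => by ring) (by ring))

theorem prod_eq_mul_mul_prod_erase_erase {M : Type*} [CommMonoid M] {C : Finset ι} {p : ι × ι}
    (hp : p ∈ C.offDiag) (f : ι → M) :
    ∏ i ∈ C, f i = f p.1 * f p.2 * ∏ i ∈ (C.erase p.1).erase p.2, f i := by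
  obtain ⟨fst_mem, snd_mem, fst_ne_snd⟩ := mem_offDiag.mp hp
  rw [mul_assoc, mul_prod_erase _ _ (mem_erase.mpr ⟨fst_ne_snd.symm, snd_mem⟩),
    mul_prod_erase _ _ fst_mem]

variable {C : Finset ι}

theorem mul_hurwitzNumber_join {p : ι × ι} (hp : p ∈ C.offDiag) :
    s p.1 * s p.2 * hurwitzNumber ((s p.1 + s p.2) ::ₘ ((C.erase p.1).erase p.2).val.map s)
      = (∑ i ∈ C, (s i : ℚ)) ^ (#C - 4 : ℤ) * ((s p.1 + s p.2) ^ 2 *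
          (∏ i ∈ (C.erase p.1).erase p.2, hurwitzWeight (s i)) *
          (s p.1 * s p.2 * treeCoeff (s p.1 + s p.2))) := by
  obtain ⟨fst_mem, snd_mem, fst_ne_snd⟩ := mem_offDiag.mp hp
  have snd_mem' := mem_erase.mpr ⟨fst_ne_snd.symm, snd_mem⟩
  have total : (s p.1 + s p.2 + ∑ i ∈ (C.erase p.1).erase p.2, (s i : ℚ)) = ∑ i ∈ C, (s i : ℚ) := by
    rw [add_assoc, add_sum_erase _ (fun i => (s i : ℚ)) snd_mem',
      add_sum_erase _ (fun i => (s i : ℚ)) fst_mem]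
  have exponent : (#((C.erase p.1).erase p.2) - 2 : ℤ) = #C - 4 := by
    have := card_erase_add_one snd_mem'
    have := card_erase_add_one fst_mem
    lia
  rw [hurwitzNumber_cons_map, Nat.cast_add, total, exponent, ← sq_mul_treeCoeff, Nat.cast_add]
  ring

theorem mul_cutSum_erase {i : ι} (hi : i ∈ C) :
    s i * cutSum s (s i) (C.erase i)
      = (∑ i ∈ C, (s i : ℚ)) ^ (#C - 4 : ℤ) * (∑ j ∈ C.erase i, 2 * ((s i + s j) ^ 2 *
            (∏ k ∈ (C.erase i).erase j, hurwitzWeight (s k)) *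
            (s i * hurwitzWeight (s j) * treeConvolution (s i) (s j)))
          - 2 * (#C - 2) * s i * (s i - 1) * ∏ j ∈ C, hurwitzWeight (s j)) := by
  have exponent : (#(C.erase i) - 3 : ℤ) = #C - 4 := by
    have := card_erase_add_one hi
    lia
  have card_erase : (#(C.erase i) : ℚ) = #C - 1 := by
    rw [← card_erase_add_one hi]; simp
  rw [cutSum_eq,
    add_sum_erase _ (fun i => (s i : ℚ)) hi, exponent, card_erase,
    ← mul_prod_erase C _ hi, mul_left_comm, mul_assoc, mul_sub, mul_sub, mul_sum, mul_sum]
  refine congrArg _ (congrArg₂ _ (sum_congr rfl fun j hj => ?_) (by ring))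
  rw [← mul_prod_erase _ _ hj]
  ring

theorem sum_offDiag_join_add_cut (hs : ∀ i ∈ C, s i ≠ 0) :
    ∑ p ∈ C.offDiag, (s p.1 + s p.2) ^ 2 *
          (∏ i ∈ (C.erase p.1).erase p.2, hurwitzWeight (s i)) *
          (s p.1 * s p.2 * treeCoeff (s p.1 + s p.2))
      + ∑ p ∈ C.offDiag, 2 * ((s p.1 + s p.2) ^ 2 *
          (∏ i ∈ (C.erase p.1).erase p.2, hurwitzWeight (s i)) *
          (s p.1 * hurwitzWeight (s p.2) * treeConvolution (s p.1) (s p.2)))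
      = (∏ i ∈ C, hurwitzWeight (s i)) * ∑ p ∈ C.offDiag, (s p.1 + s p.2 : ℚ) ^ 2 := by
  set cut : ι → ι → ℚ := fun i j => (s i + s j) ^ 2 *
    (∏ k ∈ (C.erase i).erase j, hurwitzWeight (s k)) *
    (s i * hurwitzWeight (s j) * treeConvolution (s i) (s j))
  have symmetrise : ∑ p ∈ C.offDiag, 2 * cut p.1 p.2
      = ∑ p ∈ C.offDiag, (cut p.1 p.2 + cut p.2 p.1) := by
    rw [sum_add_distrib, ← sum_offDiag_swap C cut, ← mul_sum, two_mul]
  rw [symmetrise, ← sum_add_distrib, mul_sum]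
  refine sum_congr rfl fun p hp => ?_
  obtain ⟨fst_mem, snd_mem, -⟩ := mem_offDiag.mp hp
  rw [prod_eq_mul_mul_prod_erase_erase hp fun i => hurwitzWeight (s i),
    hurwitzWeight_mul_hurwitzWeight _ _ (hs _ fst_mem) (hs _ snd_mem)]
  simp only [cut, erase_right_comm (a := p.2)]
  ring

/-- The cut-and-join equation: the least possible number of transpositions times the Hurwitz number
is the sum of the Hurwitz numbers of the permutations to which one transposition leads. -/
theorem cut_and_join (hC : C.Nonempty) (hs : ∀ i ∈ C, s i ≠ 0) :
    (∑ i ∈ C, (s i : ℚ) + #C - 2) * hurwitzNumber (C.val.map s)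
      = (∑ p ∈ C.offDiag, s p.1 * s p.2 *
            hurwitzNumber ((s p.1 + s p.2) ::ₘ ((C.erase p.1).erase p.2).val.map s)
          + ∑ i ∈ C, s i * cutSum s (s i) (C.erase i)) / 2 := by
  have total_ne_zero : ∑ i ∈ C, (s i : ℚ) ≠ 0 :=
    (sum_pos (fun i hi => by have := hs i hi; positivity) hC).ne'
  have exponent : (#C - 3 : ℤ) = #C - 4 + 1 := by ring
  have descents : ∑ i ∈ C, 2 * (#C - 2 : ℚ) * s i * (s i - 1) * ∏ j ∈ C, hurwitzWeight (s j)
      = 2 * (#C - 2) * (∑ i ∈ C, (s i : ℚ) ^ 2 - ∑ i ∈ C, (s i : ℚ)) *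
        ∏ j ∈ C, hurwitzWeight (s j) := by
    rw [← sum_sub_distrib, mul_sum, sum_mul]
    exact sum_congr rfl fun i _ => by ring
  rw [sum_congr rfl fun p => mul_hurwitzNumber_join,
    sum_congr rfl fun i => mul_cutSum_erase, ← mul_sum, ← mul_sum, sum_sub_distrib,
    ← mul_add, add_sub_assoc', ← sum_offDiag_eq_sum_sum_erase C fun i j =>
      2 * ((s i + s j : ℚ) ^ 2 * (∏ k ∈ (C.erase i).erase j, hurwitzWeight (s k)) *
        (s i * hurwitzWeight (s j) * treeConvolution (s i) (s j))),
    sum_offDiag_join_add_cut hs, sum_offDiag_add_sq (fun i => (s i : ℚ)), descents,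
    hurwitzNumber_map, exponent, zpow_add_one₀ total_ne_zero]
  ring

end CutAndJoin

/-! ### Words of transpositions -/

open Equiv Equiv.Perm

section Words

variable {α : Type*} {A B C : Finset α} {L : List (Perm α)} {T τ : Perm α} {x y : α} {m : ℕ}

/-- Every letter of the word `L` maps `B` to itself. -/
def IsInvariant (B : Finset α) (L : List (Perm α)) : Prop := ∀ τ ∈ L, ∀ z ∈ B, τ z ∈ B

theorem isInvariant_cons : IsInvariant B (τ :: L) ↔ (∀ z ∈ B, τ z ∈ B) ∧ IsInvariant B L :=
  List.forall_mem_cons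

theorem prod_apply_mem (hB : IsInvariant B L) : ∀ z ∈ B, L.prod z ∈ B := by
  induction L with
  | nil => simp
  | cons τ L ih =>
    rw [isInvariant_cons] at hB
    exact fun z hz => hB.1 _ (ih hB.2 z hz)

theorem prod_apply_eq_self (hx : ∀ τ ∈ L, τ x = x) : L.prod x = x := by
  induction L with
  | nil => simp
  | cons τ L ih =>
    rw [List.forall_mem_cons] at hx
    rw [List.prod_cons, Perm.mul_apply, ih hx.2, hx.1]

theorem apply_mem_iff (h : ∀ z ∈ B, T z ∈ B) : T x ∈ B ↔ x ∈ B :=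
  ⟨fun hx => by simpa using perm_symm_on_of_perm_on_finset h hx, h x⟩

theorem apply_mem_of_forall_notMem (h : ∀ z ∉ B, T z = z) : ∀ z ∈ B, T z ∈ B := fun z hz =>
  of_not_not fun hTz => hTz (by rwa [T.injective (h _ hTz)])

variable [DecidableEq α]

instance : Decidable (IsInvariant B L) := by unfold IsInvariant; infer_instance

theorem swap_apply_mem_iff : (∀ z ∈ B, swap x y z ∈ B) ↔ (x ∈ B ↔ y ∈ B) := by
  refine ⟨fun h => by simpa using (apply_mem_iff h (x := x)).symm, fun h z hz => ?_⟩
  rw [swap_apply_def]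
  split_ifs with hzx hzy
  · exact h.mp (hzx ▸ hz)
  · exact h.mpr (hzy ▸ hz)
  · exact hz

theorem isInvariant_swap_cons :
    IsInvariant B (swap x y :: L) ↔ (x ∈ B ↔ y ∈ B) ∧ IsInvariant B L := by
  rw [isInvariant_cons, swap_apply_mem_iff]

theorem IsInvariant.sdiff (hA : IsInvariant A L) (hB : IsInvariant B L) :
    IsInvariant (A \ B) L := fun τ hτ z hz => by
  rwa [mem_sdiff, apply_mem_iff (hA τ hτ), apply_mem_iff (hB τ hτ), ← mem_sdiff]

theorem IsInvariant.inter (hA : IsInvariant A L) (hB : IsInvariant B L) :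
    IsInvariant (A ∩ B) L := fun τ hτ z hz =>
  mem_inter.mpr ((mem_inter.mp hz).imp (hA τ hτ z) (hB τ hτ z))

theorem IsInvariant.union (hA : IsInvariant A L) (hB : IsInvariant B L) :
    IsInvariant (A ∪ B) L := fun τ hτ z hz =>
  mem_union.mpr ((mem_union.mp hz).imp (hA τ hτ z) (hB τ hτ z))

/-- The subword of those letters which move a point of `B`. -/
def subword (B : Finset α) (L : List (Perm α)) : List (Perm α) :=
  L.filter fun τ => ∃ z ∈ B, τ z ≠ z

theorem prod_subword_apply (hB : IsInvariant B L) : ∀ z ∈ B, (subword B L).prod z = L.prod z := by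
  induction L with
  | nil => simp [subword]
  | cons τ L ih =>
    rw [isInvariant_cons] at hB
    intro z hz
    rw [List.prod_cons, Perm.mul_apply, ← ih hB.2 z hz, subword, List.filter_cons]
    split_ifs with moves
    · rfl
    · simp only [decide_eq_true_eq, not_exists, not_and, not_not] at moves
      rw [moves _ (ih hB.2 z hz ▸ prod_apply_mem hB.2 z hz), subword]

theorem isInvariant_subword (hCB : C ⊆ B) : IsInvariant C (subword B L) ↔ IsInvariant C L := by
  refine ⟨fun h τ hτ z hz => ?_, fun h τ hτ => h τ (List.mem_of_mem_filter hτ)⟩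
  by_cases moves : ∃ z ∈ B, τ z ≠ z
  · exact h τ (List.mem_filter.mpr ⟨hτ, by simpa using moves⟩) z hz
  · push Not at moves
    rwa [moves z (hCB hz)]

variable [Fintype α]

/-- The transpositions of two elements of `A`. -/
def swaps (A : Finset α) : Finset (Perm α) := A.offDiag.image fun p => swap p.1 p.2

/-- The words of `m` transpositions of elements of `A`. -/
def words (A : Finset α) : ℕ → Finset (List (Perm α))
  | 0 => {[]}
  | m + 1 => (swaps A ×ˢ words A m).image fun p => p.1 :: p.2

theorem mem_swaps : τ ∈ swaps A ↔ ∃ x ∈ A, ∃ y ∈ A, x ≠ y ∧ swap x y = τ := by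
  simp only [swaps, mem_image, mem_offDiag, Prod.exists]
  tauto

theorem swap_mem_swaps (hx : x ∈ A) (hy : y ∈ A) (hxy : x ≠ y) : swap x y ∈ swaps A :=
  mem_swaps.mpr ⟨x, hx, y, hy, hxy, rfl⟩

theorem swaps_mono (hBA : B ⊆ A) : swaps B ⊆ swaps A := image_mono _ (offDiag_mono hBA)

theorem apply_eq_self_of_mem_swaps (hτ : τ ∈ swaps A) (hx : x ∉ A) : τ x = x := by
  obtain ⟨a, ha, b, hb, -, rfl⟩ := mem_swaps.mp hτ
  exact swap_apply_of_ne_of_ne (by rintro rfl; exact hx ha) (by rintro rfl; exact hx hb)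

theorem exists_apply_ne_of_mem_swaps (hτ : τ ∈ swaps A) : ∃ z ∈ A, τ z ≠ z := by
  obtain ⟨a, ha, b, -, hab, rfl⟩ := mem_swaps.mp hτ
  exact ⟨a, ha, by rwa [swap_apply_left, ne_comm]⟩

theorem sum_swaps {M : Type*} [AddCommMonoid M] (A : Finset α) (f : Perm α → M) :
    2 • ∑ τ ∈ swaps A, f τ = ∑ p ∈ A.offDiag, f (swap p.1 p.2) := by
  rw [Finset.sum_comp f fun p : α × α => swap p.1 p.2, ← swaps, ← sum_nsmul]
  refine sum_congr rfl fun τ hτ => ?_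
  obtain ⟨x, hx, y, hy, hxy, rfl⟩ := mem_swaps.mp hτ
  have fibre : {p ∈ A.offDiag | swap p.1 p.2 = swap x y} = {(x, y), (y, x)} := by
    ext ⟨a, b⟩
    simp only [mem_filter, mem_offDiag, mem_insert, mem_singleton, Prod.mk.injEq]
    constructor
    · rintro ⟨⟨-, -, hab⟩, h⟩
      have image_a : b = swap x y a := by rw [← h, swap_apply_left]
      rw [swap_apply_def] at image_a
      split_ifs at image_a with hax hay
      · exact Or.inl ⟨hax, image_a⟩
      · exact Or.inr ⟨hay, image_a⟩
      · exact absurd image_a.symm hab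
    · rintro (⟨rfl, rfl⟩ | ⟨rfl, rfl⟩)
      · exact ⟨⟨hx, hy, hxy⟩, rfl⟩
      · exact ⟨⟨hy, hx, hxy.symm⟩, swap_comm a b⟩
  rw [fibre, card_pair (by simp [hxy])]

theorem sum_words_succ {M : Type*} [AddCommMonoid M] (A : Finset α) (m : ℕ)
    (f : List (Perm α) → M) :
    ∑ L ∈ words A (m + 1), f L = ∑ τ ∈ swaps A, ∑ L ∈ words A m, f (τ :: L) := by
  rw [words, sum_image (fun p _ q _ h => by simpa [Prod.ext_iff] using h), sum_product]

theorem mem_words : L ∈ words A m ↔ L.length = m ∧ ∀ τ ∈ L, τ ∈ swaps A := by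
  induction m generalizing L with
  | zero => simp +contextual [words]
  | succ m ih =>
    cases L with
    | nil => simp [words]
    | cons τ L => simp [words, ih]; tauto

theorem isInvariant_of_mem_words (hL : L ∈ words A m) : IsInvariant A L := fun τ hτ => by
  obtain ⟨x, hx, y, hy, -, rfl⟩ := mem_swaps.mp ((mem_words.mp hL).2 τ hτ)
  exact swap_apply_mem_iff.mpr (iff_of_true hx hy)

theorem subword_cons_of_mem (hτ : τ ∈ swaps B) : subword B (τ :: L) = τ :: subword B L :=
  List.filter_cons_of_pos (by simpa using exists_apply_ne_of_mem_swaps hτ)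

theorem subword_cons_of_disjoint (hτ : τ ∈ swaps C) (hBC : Disjoint B C) :
    subword B (τ :: L) = subword B L :=
  List.filter_cons_of_neg (by
    simpa using fun z hz => apply_eq_self_of_mem_swaps hτ (disjoint_left.mp hBC hz))

theorem filter_swaps_isInvariant (hBA : B ⊆ A) :
    {τ ∈ swaps A | ∀ z ∈ B, τ z ∈ B} = swaps B ∪ swaps (A \ B) := by
  ext τ
  rw [mem_filter, mem_union]
  constructor
  · rintro ⟨hτ, hB⟩
    obtain ⟨x, hx, y, hy, hxy, rfl⟩ := mem_swaps.mp hτ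
    have same_side := swap_apply_mem_iff.mp hB
    by_cases hxB : x ∈ B
    · exact Or.inl (swap_mem_swaps hxB (same_side.mp hxB) hxy)
    · exact Or.inr (swap_mem_swaps (mem_sdiff.mpr ⟨hx, hxB⟩)
        (mem_sdiff.mpr ⟨hy, mt same_side.mpr hxB⟩) hxy)
  · rintro (hτ | hτ)
    · refine ⟨swaps_mono hBA hτ, ?_⟩
      obtain ⟨x, hx, y, hy, -, rfl⟩ := mem_swaps.mp hτ
      exact swap_apply_mem_iff.mpr (iff_of_true hx hy)
    · exact ⟨swaps_mono sdiff_subset hτ, fun z hz => by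
        rwa [apply_eq_self_of_mem_swaps hτ fun h => (mem_sdiff.mp h).2 hz]⟩

theorem disjoint_swaps (hBC : Disjoint B C) : Disjoint (swaps B) (swaps C) := by
  rw [disjoint_left]
  intro τ hB hC
  obtain ⟨z, hz, moves⟩ := exists_apply_ne_of_mem_swaps hB
  exact moves (apply_eq_self_of_mem_swaps hC (disjoint_left.mp hBC hz))

theorem sum_words_succ_isInvariant {M : Type*} [AddCommMonoid M] (hBA : B ⊆ A) (m : ℕ)
    (f : List (Perm α) → M) :
    ∑ L ∈ words A (m + 1) with IsInvariant B L, f L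
      = ∑ τ ∈ swaps B, ∑ L ∈ words A m with IsInvariant B L, f (τ :: L)
        + ∑ τ ∈ swaps (A \ B), ∑ L ∈ words A m with IsInvariant B L, f (τ :: L) := by
  rw [← sum_union (disjoint_swaps disjoint_sdiff), ← filter_swaps_isInvariant hBA, sum_filter,
    sum_words_succ, sum_filter]
  refine sum_congr rfl fun τ _ => ?_
  by_cases hτ : ∀ z ∈ B, τ z ∈ B
  · simp only [if_pos hτ, sum_filter, isInvariant_cons, and_iff_right hτ]
  · simp only [isInvariant_cons, hτ, false_and, if_false, sum_const_zero]

/-- A word preserving `B` is a shuffle of a word on `B` and a word on the complement of `B`. -/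
theorem sum_words_isInvariant {R : Type*} [CommSemiring R] (hBA : B ⊆ A) (m : ℕ)
    (f g : List (Perm α) → R) :
    ∑ L ∈ words A m with IsInvariant B L, f (subword B L) * g (subword (A \ B) L)
      = ∑ p ∈ antidiagonal m,
          m.choose p.1 * ((∑ L ∈ words B p.1, f L) * ∑ L ∈ words (A \ B) p.2, g L) := by
  induction m generalizing f g with
  | zero =>
    have empty_invariant : {L ∈ ({[]} : Finset (List (Perm α))) | IsInvariant B L} = {[]} :=
      filter_true_of_mem fun L hL => by simp [mem_singleton.mp hL, IsInvariant]
    simp [words, empty_invariant, subword]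
  | succ m ih =>
    have inside : ∀ τ ∈ swaps B, ∑ L ∈ words A m with IsInvariant B L,
        f (subword B (τ :: L)) * g (subword (A \ B) (τ :: L)) = ∑ p ∈ antidiagonal m, m.choose p.1 *
          ((∑ L ∈ words B p.1, f (τ :: L)) * ∑ L ∈ words (A \ B) p.2, g L) := fun τ hτ => by
      rw [← ih fun L => f (τ :: L)]
      exact sum_congr rfl fun L _ => by
        rw [subword_cons_of_mem hτ, subword_cons_of_disjoint hτ sdiff_disjoint]
    have outside : ∀ τ ∈ swaps (A \ B), ∑ L ∈ words A m with IsInvariant B L,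
        f (subword B (τ :: L)) * g (subword (A \ B) (τ :: L)) = ∑ p ∈ antidiagonal m, m.choose p.1 *
          ((∑ L ∈ words B p.1, f L) * ∑ L ∈ words (A \ B) p.2, g (τ :: L)) := fun τ hτ => by
      rw [← ih f fun L => g (τ :: L)]
      exact sum_congr rfl fun L _ => by
        rw [subword_cons_of_mem hτ, subword_cons_of_disjoint hτ disjoint_sdiff]
    rw [sum_words_succ_isInvariant hBA, sum_congr rfl inside, sum_congr rfl outside, sum_comm,
      sum_comm (s := swaps (A \ B)), sum_antidiagonal_choose_succ_mul fun i j =>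
        (∑ L ∈ words B i, f L) * ∑ L ∈ words (A \ B) j, g L, add_comm]
    simp only [sum_words_succ, ← mul_sum, ← sum_mul]
    refine congrArg _ (sum_congr rfl fun p hp => ?_)
    rw [← mem_antidiagonal.mp hp, Nat.choose_symm_add]

end Words

section Transitivity

variable {α : Type*} {A B C : Finset α} {L : List (Perm α)} {T τ : Perm α} {x y : α} {m : ℕ}

/-- The letters of the word `L` act transitively on `A`, expressed through the absence of proper
invariant subsets; the empty set counts as transitive. -/
def IsTransitiveOn (A : Finset α) (L : List (Perm α)) : Prop :=
  ∀ B ⊆ A, B.Nonempty → IsInvariant B L → B = A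

/-- The word `L` factorises `T` on `A` and acts transitively on `A`. -/
def IsTransitiveFactorisation (A : Finset α) (T : Perm α) (L : List (Perm α)) : Prop :=
  (∀ z ∈ A, L.prod z = T z) ∧ IsTransitiveOn A L

variable [DecidableEq α]

instance : Decidable (IsTransitiveOn A L) := by unfold IsTransitiveOn; infer_instance

instance : Decidable (IsTransitiveFactorisation A T L) := by
  unfold IsTransitiveFactorisation; infer_instance

/-- The orbit of `x` under the letters of the word `L`, as the smallest invariant subset of `A`
containing `x`. -/
def component (A : Finset α) (L : List (Perm α)) (x : α) : Finset α :=
  {z ∈ A | ∀ B ⊆ A, x ∈ B → IsInvariant B L → z ∈ B}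

theorem mem_component_self (hx : x ∈ A) : x ∈ component A L x :=
  mem_filter.mpr ⟨hx, fun _ _ hxB _ => hxB⟩

theorem component_subset : component A L x ⊆ A := filter_subset _ _

theorem component_subset_of_mem (hBA : B ⊆ A) (hx : x ∈ B) (hB : IsInvariant B L) :
    component A L x ⊆ B := fun _ hz => (mem_filter.mp hz).2 B hBA hx hB

theorem isInvariant_component (hA : IsInvariant A L) : IsInvariant (component A L x) L :=
  fun τ hτ z hz => mem_filter.mpr ⟨hA τ hτ z (component_subset hz), fun _ hBA hx hB =>
    hB τ hτ z (component_subset_of_mem hBA hx hB hz)⟩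

theorem isTransitiveOn_component (hA : IsInvariant A L) (hx : x ∈ A) :
    IsTransitiveOn (component A L x) L := by
  intro B hBC ⟨z, hz⟩ hB
  refine hBC.antisymm ?_
  by_cases hxB : x ∈ B
  · exact component_subset_of_mem (hBC.trans component_subset) hxB hB
  · have avoids : component A L x ⊆ component A L x \ B :=
      component_subset_of_mem (sdiff_subset.trans component_subset)
        (mem_sdiff.mpr ⟨mem_component_self hx, hxB⟩) ((isInvariant_component hA).sdiff hB)
    exact absurd hz (mem_sdiff.mp (avoids (hBC hz))).2

theorem IsTransitiveOn.eq_component (hB : IsTransitiveOn B L) (hBA : B ⊆ A) (hx : x ∈ B)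
    (invA : IsInvariant A L) (invB : IsInvariant B L) : B = component A L x :=
  (hB _ (component_subset_of_mem hBA hx invB) ⟨x, mem_component_self (hBA hx)⟩
    (isInvariant_component invA)).symm

theorem IsTransitiveOn.swap_cons (hA : IsTransitiveOn A L) :
    IsTransitiveOn A (swap x y :: L) := fun B hBA hne hB =>
  hA B hBA hne (isInvariant_swap_cons.mp hB).2

theorem IsTransitiveOn.glue (hBA : B ⊆ A) (hx : x ∈ B) (hy : y ∈ A \ B) (invA : IsInvariant A L)
    (invB : IsInvariant B L) (hB : IsTransitiveOn B L) (hAB : IsTransitiveOn (A \ B) L) :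
    IsTransitiveOn A (swap x y :: L) := by
  intro C hCA ⟨z, hz⟩ hC
  obtain ⟨same_side, hC⟩ := isInvariant_swap_cons.mp hC
  have absorbs : ∀ D ⊆ A, IsInvariant D L → IsTransitiveOn D L → (∃ w ∈ D, w ∈ C) → D ⊆ C :=
    fun D _ invD hD ⟨w, hwD, hwC⟩ => by
      rw [← hD _ inter_subset_left ⟨w, mem_inter.mpr ⟨hwD, hwC⟩⟩ (invD.inter hC)]
      exact inter_subset_right
  have absorbs_B := absorbs B hBA invB hB
  have absorbs_sdiff := absorbs (A \ B) sdiff_subset (invA.sdiff invB) hAB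
  have hxC : x ∈ C := by
    by_cases hzB : z ∈ B
    · exact absorbs_B ⟨z, hzB, hz⟩ hx
    · exact same_side.mpr (absorbs_sdiff ⟨z, mem_sdiff.mpr ⟨hCA hz, hzB⟩, hz⟩ hy)
  refine hCA.antisymm ?_
  rw [← union_sdiff_of_subset hBA]
  exact union_subset (absorbs_B ⟨x, hx, hxC⟩) (absorbs_sdiff ⟨y, hy, same_side.mp hxC⟩)

theorem IsTransitiveOn.of_swap_cons (hA : IsTransitiveOn A (swap x y :: L)) (hx : x ∈ A)
    (hy : y ∈ A) (invA : IsInvariant A L) (hAL : ¬IsTransitiveOn A L) :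
    y ∉ component A L x ∧ IsTransitiveOn (A \ component A L x) L := by
  set C := component A L x
  have invC : IsInvariant C L := isInvariant_component invA
  have hxC : x ∈ C := mem_component_self hx
  have hyC : y ∉ C := fun hyC => hAL <| by
    rw [← hA C component_subset ⟨x, hxC⟩ (isInvariant_swap_cons.mpr ⟨iff_of_true hxC hyC, invC⟩)]
    exact isTransitiveOn_component invA hx
  refine ⟨hyC, fun B hB hne invB => hB.antisymm fun z hz => ?_⟩
  have hxB : x ∉ B := fun hxB => (mem_sdiff.mp (hB hxB)).2 hxC
  by_cases hyB : y ∈ B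
  · have := hA (B ∪ C) (union_subset (hB.trans sdiff_subset) component_subset) ⟨y, by simp [hyB]⟩
      (isInvariant_swap_cons.mpr ⟨by simp [hyB, hxC], invB.union invC⟩)
    rw [← this, union_sdiff_right] at hz
    exact sdiff_subset hz
  · have := hA B (hB.trans sdiff_subset) hne
      (isInvariant_swap_cons.mpr ⟨iff_of_false hxB hyB, invB⟩)
    exact absurd (this ▸ hy) hyB

/-- Removing the first letter of a transitive word leaves either a transitive word, or exactly two
components, which the removed letter joined. -/
theorem isTransitiveOn_swap_cons (hx : x ∈ A) (hy : y ∈ A) (invA : IsInvariant A L) :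
    (if IsTransitiveOn A (swap x y :: L) then 1 else 0)
      = (if IsTransitiveOn A L then 1 else 0) + #{B ∈ A.powerset | (x ∈ B ∧ y ∉ B) ∧
          IsInvariant B L ∧ IsTransitiveOn B L ∧ IsTransitiveOn (A \ B) L} := by
  by_cases hA : IsTransitiveOn A L
  · rw [if_pos hA.swap_cons, if_pos hA, left_eq_add, card_eq_zero, filter_eq_empty_iff]
    rintro B hB ⟨⟨hxB, hyB⟩, invB, -⟩
    exact hyB (hA B (mem_powerset.mp hB) ⟨x, hxB⟩ invB ▸ hy)
  rw [if_neg hA, zero_add]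
  split_ifs with hswap
  · obtain ⟨hyC, hC⟩ := hswap.of_swap_cons hx hy invA hA
    refine (card_eq_one.mpr ⟨component A L x, ?_⟩).symm
    ext B
    rw [mem_filter, mem_powerset, mem_singleton]
    constructor
    · rintro ⟨hBA, ⟨hxB, -⟩, invB, hB, -⟩
      exact hB.eq_component hBA hxB invA invB
    · rintro rfl
      exact ⟨component_subset, ⟨mem_component_self hx, hyC⟩, isInvariant_component invA,
        isTransitiveOn_component invA hx, hC⟩
  · rw [eq_comm, card_eq_zero, filter_eq_empty_iff]
    rintro B hB ⟨⟨hxB, hyB⟩, invB, trB, trAB⟩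
    exact hswap (.glue (mem_powerset.mp hB) hxB (mem_sdiff.mpr ⟨hy, hyB⟩) invA invB trB trAB)

theorem isTransitiveOn_subword : IsTransitiveOn B (subword B L) ↔ IsTransitiveOn B L := by
  refine forall₃_congr fun C hCB _ => ?_
  rw [isInvariant_subword hCB]

theorem isTransitiveFactorisation_subword (hB : IsInvariant B L) :
    IsTransitiveFactorisation B T (subword B L) ↔ IsTransitiveFactorisation B T L :=
  and_congr (forall₂_congr fun z hz => by rw [prod_subword_apply hB z hz]) isTransitiveOn_subword

theorem prod_swap_cons_apply :
    (∀ z ∈ A, (swap x y :: L).prod z = T z) ↔ ∀ z ∈ A, L.prod z = (swap x y * T) z :=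
  forall₂_congr fun z _ => by
    rw [List.prod_cons, Perm.mul_apply, Perm.mul_apply, swap_apply_eq_iff]

theorem isTransitiveFactorisation_subword_and_sdiff (hBA : B ⊆ A) (invA : IsInvariant A L)
    (invB : IsInvariant B L) :
    (IsTransitiveFactorisation B T (subword B L)
        ∧ IsTransitiveFactorisation (A \ B) T (subword (A \ B) L))
      ↔ (∀ z ∈ A, L.prod z = T z) ∧ IsTransitiveOn B L ∧ IsTransitiveOn (A \ B) L := by
  rw [isTransitiveFactorisation_subword invB, isTransitiveFactorisation_subword (invA.sdiff invB)]
  constructor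
  · rintro ⟨⟨prodB, trB⟩, prodAB, trAB⟩
    refine ⟨fun z hz => ?_, trB, trAB⟩
    by_cases hzB : z ∈ B
    · exact prodB z hzB
    · exact prodAB z (mem_sdiff.mpr ⟨hz, hzB⟩)
  · rintro ⟨prodA, trB, trAB⟩
    exact ⟨⟨fun z hz => prodA z (hBA hz), trB⟩, fun z hz => prodA z (sdiff_subset hz), trAB⟩

theorem isTransitiveFactorisation_swap_cons (hx : x ∈ A) (hy : y ∈ A) (invA : IsInvariant A L) :
    (if IsTransitiveFactorisation A T (swap x y :: L) then 1 else 0)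
      = (if IsTransitiveFactorisation A (swap x y * T) L then 1 else 0)
        + #{B ∈ A.powerset | (x ∈ B ∧ y ∉ B) ∧ IsInvariant B L ∧
            IsTransitiveFactorisation B (swap x y * T) (subword B L) ∧
            IsTransitiveFactorisation (A \ B) (swap x y * T) (subword (A \ B) L)} := by
  have split : ∀ B ∈ A.powerset, ((x ∈ B ∧ y ∉ B) ∧ IsInvariant B L ∧
      IsTransitiveFactorisation B (swap x y * T) (subword B L) ∧
      IsTransitiveFactorisation (A \ B) (swap x y * T) (subword (A \ B) L))
      ↔ (∀ z ∈ A, L.prod z = (swap x y * T) z) ∧ (x ∈ B ∧ y ∉ B) ∧ IsInvariant B L ∧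
        IsTransitiveOn B L ∧ IsTransitiveOn (A \ B) L := fun B hB =>
    (and_congr_right fun _ => and_congr_right fun invB =>
      isTransitiveFactorisation_subword_and_sdiff (mem_powerset.mp hB) invA invB).trans (by tauto)
  rw [filter_congr split]
  simp only [IsTransitiveFactorisation, prod_swap_cons_apply]
  by_cases prodA : ∀ z ∈ A, L.prod z = (swap x y * T) z
  · simpa only [and_iff_right prodA] using isTransitiveOn_swap_cons hx hy invA
  · simp only [prodA, false_and, if_false, filter_false, card_empty]

variable [Fintype α]

/-- The number of factorisations of `T` on `A` into `m` transpositions of elements of `A` which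
generate a transitive group. -/
def transitiveCount (A : Finset α) (T : Perm α) (m : ℕ) : ℕ :=
  #{L ∈ words A m | IsTransitiveFactorisation A T L}

theorem transitiveCount_eq_zero (hx : x ∈ A) (hTx : T x ∉ A) : transitiveCount A T m = 0 := by
  rw [transitiveCount, card_eq_zero, filter_eq_empty_iff]
  rintro L hL ⟨hprod, -⟩
  exact hTx (hprod x hx ▸ prod_apply_mem (isInvariant_of_mem_words hL) x hx)

theorem two_mul_transitiveCount_succ (A : Finset α) (T : Perm α) (m : ℕ) :
    2 * transitiveCount A T (m + 1) = ∑ p ∈ A.offDiag, (transitiveCount A (swap p.1 p.2 * T) m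
      + ∑ B ∈ A.powerset with p.1 ∈ B ∧ p.2 ∉ B, ∑ q ∈ antidiagonal m, m.choose q.1 *
          (transitiveCount B (swap p.1 p.2 * T) q.1
            * transitiveCount (A \ B) (swap p.1 p.2 * T) q.2)) := by
  rw [transitiveCount, card_filter, sum_words_succ, ← smul_eq_mul, sum_swaps]
  refine sum_congr rfl fun p hp => ?_
  obtain ⟨hx, hy, -⟩ := mem_offDiag.mp hp
  rw [sum_congr rfl fun L hL =>
    isTransitiveFactorisation_swap_cons hx hy (isInvariant_of_mem_words hL), sum_add_distrib,
    transitiveCount, card_filter]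
  congr 1
  simp only [card_filter]
  rw [sum_comm, sum_filter]
  refine sum_congr rfl fun B hB => ?_
  split_ifs with hxy
  · have shuffle := sum_words_isInvariant (mem_powerset.mp hB) m
      (fun L => if IsTransitiveFactorisation B (swap p.1 p.2 * T) L then 1 else 0)
      (fun L => if IsTransitiveFactorisation (A \ B) (swap p.1 p.2 * T) L then 1 else 0)
    simpa only [transitiveCount, card_filter, Nat.cast_id, and_iff_right hxy, sum_filter, ite_and,
      ite_zero_mul_ite_zero, mul_one] using shuffle
  · simp only [hxy, false_and, if_false, sum_const_zero]

end Transitivity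

/-! ### Cycles of permutations -/

section Orbits

variable {α : Type*} [DecidableEq α] {A B c : Finset α} {S T : Perm α} {x y z : α} {j k : ℕ}

theorem iterate_swap_mul (hk : 0 < k)
    (h : ∀ i, 0 < i → i < k → T^[i] x ≠ x ∧ T^[i] x ≠ y) :
    (swap x y * T)^[k] x = swap x y (T^[k] x) := by
  induction k, hk using Nat.le_induction with
  | base => rfl
  | succ k hk ih =>
    have avoid := h k hk k.lt_succ_self
    rw [Function.iterate_succ_apply', ih fun i hi hik => h i hi (hik.trans k.lt_succ_self),
      swap_apply_of_ne_of_ne avoid.1 avoid.2, Perm.mul_apply, Function.iterate_succ_apply']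

variable [Fintype α]

/-- The cycle of `T` through `x`, as a set of points; it is `{x}` when `x` is a fixed point. -/
def orbit (T : Perm α) (x : α) : Finset α := {z | T.SameCycle x z}

theorem mem_orbit : z ∈ orbit T x ↔ T.SameCycle x z := mem_filter_univ _

theorem self_mem_orbit (T : Perm α) (x : α) : x ∈ orbit T x := mem_orbit.mpr (.refl T x)

theorem orbit_eq_of_mem (hz : z ∈ orbit T x) : orbit T z = orbit T x := by
  rw [mem_orbit] at hz
  ext w
  rw [mem_orbit, mem_orbit]
  exact ⟨hz.trans, hz.symm.trans⟩

theorem apply_mem_orbit : T z ∈ orbit T x ↔ z ∈ orbit T x := by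
  rw [mem_orbit, mem_orbit, sameCycle_apply_right]

theorem mem_orbit_iff_iterate : z ∈ orbit T x ↔ ∃ n, T^[n] x = z := by
  simp only [mem_orbit, iterate_eq_pow]
  exact ⟨fun h => h.exists_nat_pow_eq, fun ⟨n, hn⟩ => ⟨n, by simpa using hn⟩⟩

theorem orbit_subset (hB : ∀ z ∈ B, T z ∈ B) (hx : x ∈ B) : orbit T x ⊆ B := fun _ hz => by
  obtain ⟨n, rfl⟩ := mem_orbit_iff_iterate.mp hz
  exact Set.MapsTo.iterate hB n hx

theorem orbit_eq_singleton (h : T x = x) : orbit T x = {x} :=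
  (orbit_subset (by simp [h]) (mem_singleton_self x)).antisymm
    (singleton_subset_iff.mpr (self_mem_orbit T x))

theorem orbit_congr (h : ∀ z ∈ orbit T x, S z = T z) : orbit S x = orbit T x := by
  have le : orbit S x ⊆ orbit T x :=
    orbit_subset (fun z hz => h z hz ▸ apply_mem_orbit.mpr hz) (self_mem_orbit T x)
  exact le.antisymm <|
    orbit_subset (fun z hz => h z (le hz) ▸ apply_mem_orbit.mpr hz) (self_mem_orbit S x)

theorem orbit_subset_union_orbit_swap_mul :
    orbit T x ⊆ orbit (swap x y * T) x ∪ orbit (swap x y * T) y := by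
  refine orbit_subset (fun z hz => ?_) (mem_union_left _ (self_mem_orbit _ x))
  have := swap_apply_mem_iff.mpr (iff_of_true (mem_union_left _ (self_mem_orbit _ x))
    (mem_union_right _ (self_mem_orbit _ y))) ((swap x y * T) z)
    (mem_union.mpr ((mem_union.mp hz).imp apply_mem_orbit.mpr apply_mem_orbit.mpr))
  rwa [Perm.mul_apply, swap_apply_self] at this

theorem union_orbit_swap_mul :
    orbit (swap x y * T) x ∪ orbit (swap x y * T) y = orbit T x ∪ orbit T y := by
  have le : ∀ T : Perm α,
      orbit T x ∪ orbit T y ⊆ orbit (swap x y * T) x ∪ orbit (swap x y * T) y := fun T =>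
    union_subset orbit_subset_union_orbit_swap_mul
      (by rw [swap_comm, union_comm]; exact orbit_subset_union_orbit_swap_mul)
  refine Subset.antisymm ?_ (le T)
  simpa only [swap_mul_self_mul] using le (swap x y * T)

theorem orbit_swap_mul_of_notMem (hx : z ∉ orbit T x) (hy : z ∉ orbit T y) :
    orbit (swap x y * T) z = orbit T z := by
  refine orbit_congr fun w hw => swap_apply_of_ne_of_ne ?_ ?_
  · rintro rfl
    exact hx (orbit_eq_of_mem (apply_mem_orbit.mpr hw) ▸ self_mem_orbit T z)
  · rintro rfl
    exact hy (orbit_eq_of_mem (apply_mem_orbit.mpr hw) ▸ self_mem_orbit T z)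

theorem orbit_eq_image (T : Perm α) (x : α) :
    orbit T x = (range (Function.minimalPeriod T x)).image fun j => T^[j] x := by
  ext z
  rw [mem_orbit_iff_iterate, mem_image]
  refine ⟨fun ⟨n, hn⟩ => ⟨n % Function.minimalPeriod T x, ?_, ?_⟩, fun ⟨n, _, hn⟩ => ⟨n, hn⟩⟩
  · exact mem_range.mpr (Nat.mod_lt _ (Function.minimalPeriod_pos_of_mem_periodicPts
      (T.injective.mem_periodicPts x)))
  · rw [Function.iterate_mod_minimalPeriod_eq, hn]

theorem card_orbit (T : Perm α) (x : α) : #(orbit T x) = Function.minimalPeriod T x := by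
  rw [orbit_eq_image, card_image_of_injOn, card_range]
  rw [coe_range]
  exact Function.iterate_injOn_Iio_minimalPeriod

theorem iterate_card_orbit (T : Perm α) (x : α) : T^[#(orbit T x)] x = x := by
  rw [card_orbit, Function.iterate_minimalPeriod]

theorem bijOn_iterate (T : Perm α) (x : α) :
    Set.BijOn (fun j => T^[j] x) (Set.Iio #(orbit T x)) (orbit T x) := by
  rw [card_orbit, orbit_eq_image, coe_image, coe_range]
  exact Function.iterate_injOn_Iio_minimalPeriod.bijOn_image

theorem iterate_ne_self (hk : 0 < k) (hkx : k < #(orbit T x)) : T^[k] x ≠ x := fun h =>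
  hk.ne' ((bijOn_iterate T x).injOn hkx (hk.trans hkx) h)

theorem mem_orbit_swap_mul (hy : y ∉ orbit T x) : y ∈ orbit (swap x y * T) x := by
  refine mem_orbit_iff_iterate.mpr ⟨#(orbit T x), ?_⟩
  rw [iterate_swap_mul (card_pos.mpr ⟨x, self_mem_orbit T x⟩) fun i hi hin =>
    ⟨iterate_ne_self hi hin, fun h => hy (mem_orbit_iff_iterate.mpr ⟨i, h⟩)⟩, iterate_card_orbit,
    swap_apply_left]

theorem iterate_swap_iterate_mul (hkx : k < #(orbit T x)) (hjk : j < k) :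
    (swap x (T^[k] x) * T)^[j] x = T^[j] x := by
  have avoid : ∀ i, 0 < i → i < k → T^[i] x ≠ x ∧ T^[i] x ≠ T^[k] x := fun i hi hik =>
    ⟨iterate_ne_self hi (hik.trans hkx),
      fun h => hik.ne ((bijOn_iterate T x).injOn (hik.trans hkx) hkx h)⟩
  rcases j.eq_zero_or_pos with rfl | hj
  · rfl
  · rw [iterate_swap_mul hj fun i hi hij => avoid i hi (hij.trans hjk),
      swap_apply_of_ne_of_ne (avoid j hj hjk).1 (avoid j hj hjk).2]

theorem card_orbit_swap_iterate_mul (hk : 0 < k) (hkx : k < #(orbit T x)) :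
    #(orbit (swap x (T^[k] x) * T) x) = k := by
  set S := swap x (T^[k] x) * T with hS
  have period : S^[k] x = x := by
    obtain ⟨j, rfl⟩ := Nat.exists_eq_succ_of_ne_zero hk.ne'
    rw [Function.iterate_succ_apply', iterate_swap_iterate_mul hkx j.lt_succ_self, hS,
      Perm.mul_apply, ← Function.iterate_succ_apply' (⇑T), swap_apply_right]
  rw [card_orbit]
  refine le_antisymm (Function.IsPeriodicPt.minimalPeriod_le hk period) (not_lt.mp fun hlt => ?_)
  have pos : 0 < Function.minimalPeriod S x := Function.IsPeriodicPt.minimalPeriod_pos hk period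
  refine iterate_ne_self pos (hlt.trans hkx) ?_
  rw [← iterate_swap_iterate_mul hkx hlt, Function.iterate_minimalPeriod]

theorem notMem_orbit_swap_mul (hxy : x ≠ y) (hy : y ∈ orbit T x) :
    y ∉ orbit (swap x y * T) x := by
  obtain ⟨k, hk, rfl⟩ := (bijOn_iterate T x).surjOn hy
  have pos : 0 < k := Nat.pos_of_ne_zero fun h => hxy (by simp [h])
  intro mem
  obtain ⟨j, hj, h⟩ := (bijOn_iterate (swap x (T^[k] x) * T) x).surjOn mem
  rw [card_orbit_swap_iterate_mul pos hk, Set.mem_Iio] at hj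
  simp only [iterate_swap_iterate_mul hk hj] at h
  exact hj.ne ((bijOn_iterate T x).injOn (hj.trans hk) hk h)

theorem disjoint_orbit_swap_mul (hxy : x ≠ y) (hy : y ∈ orbit T x) :
    Disjoint (orbit (swap x y * T) x) (orbit (swap x y * T) y) :=
  disjoint_left.mpr fun _ hzx hzy => notMem_orbit_swap_mul hxy hy
    (orbit_eq_of_mem hzx ▸ orbit_eq_of_mem hzy ▸ self_mem_orbit _ y)

end Orbits

section Cycles

variable {α : Type*} [DecidableEq α] [Fintype α] {A B c : Finset α} {S T : Perm α} {x y z : α}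

/-- The cycles of `T` meeting `A`, as sets of points. -/
def cycles (A : Finset α) (T : Perm α) : Finset (Finset α) := A.image (orbit T)

theorem orbit_mem_cycles (hx : x ∈ A) : orbit T x ∈ cycles A T := mem_image_of_mem _ hx

theorem nonempty_of_mem_cycles (hc : c ∈ cycles A T) : c.Nonempty := by
  obtain ⟨x, -, rfl⟩ := mem_image.mp hc
  exact ⟨x, self_mem_orbit T x⟩

theorem orbit_eq_of_mem_cycles (hc : c ∈ cycles A T) (hz : z ∈ c) : orbit T z = c := by
  obtain ⟨x, -, rfl⟩ := mem_image.mp hc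
  exact orbit_eq_of_mem hz

theorem subset_of_mem_cycles (hA : ∀ z ∈ A, T z ∈ A) (hc : c ∈ cycles A T) : c ⊆ A := by
  obtain ⟨x, hx, rfl⟩ := mem_image.mp hc
  exact orbit_subset hA hx

theorem apply_mem_of_mem_cycles (hc : c ∈ cycles A T) : ∀ z ∈ c, T z ∈ c := by
  obtain ⟨x, -, rfl⟩ := mem_image.mp hc
  exact fun z => apply_mem_orbit.mpr

theorem pairwiseDisjoint_cycles : (cycles A T : Set (Finset α)).PairwiseDisjoint id :=
  fun _ hc _ hd hcd => disjoint_left.mpr fun _ hzc hzd =>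
    hcd (orbit_eq_of_mem_cycles hc hzc ▸ orbit_eq_of_mem_cycles hd hzd)

theorem biUnion_cycles (hA : ∀ z ∈ A, T z ∈ A) : (cycles A T).biUnion id = A :=
  Subset.antisymm (biUnion_subset.mpr fun _ => subset_of_mem_cycles hA) fun z hz =>
    mem_biUnion.mpr ⟨orbit T z, orbit_mem_cycles hz, self_mem_orbit T z⟩

theorem sum_cycles {M : Type*} [AddCommMonoid M] (hA : ∀ z ∈ A, T z ∈ A) (f : α → M) :
    ∑ c ∈ cycles A T, ∑ x ∈ c, f x = ∑ x ∈ A, f x := by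
  conv_rhs => rw [← biUnion_cycles hA, sum_biUnion pairwiseDisjoint_cycles]
  rfl

theorem sum_card_cycles (hA : ∀ z ∈ A, T z ∈ A) : ∑ c ∈ cycles A T, #c = #A := by
  simp only [card_eq_sum_ones, sum_cycles hA]

theorem cycles_biUnion {I : Finset (Finset α)} (hI : I ⊆ cycles A T) :
    cycles (I.biUnion id) T = I := by
  ext c
  constructor
  · intro hc
    obtain ⟨x, hx, rfl⟩ := mem_image.mp hc
    obtain ⟨d, hd, hxd⟩ := mem_biUnion.mp hx
    rwa [orbit_eq_of_mem_cycles (hI hd) hxd]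
  · intro hc
    obtain ⟨x, hx⟩ := nonempty_of_mem_cycles (hI hc)
    rw [← orbit_eq_of_mem_cycles (hI hc) hx]
    exact orbit_mem_cycles (mem_biUnion.mpr ⟨c, hc, hx⟩)

theorem orbit_mem_cycles_iff (hB : ∀ z ∈ B, T z ∈ B) : orbit T x ∈ cycles B T ↔ x ∈ B :=
  ⟨fun h => subset_of_mem_cycles hB h (self_mem_orbit T x), orbit_mem_cycles⟩

theorem cycles_sdiff (hB : ∀ z ∈ B, T z ∈ B) : cycles (A \ B) T = cycles A T \ cycles B T := by
  ext c
  rw [mem_sdiff]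
  constructor
  · intro hc
    obtain ⟨x, hx, rfl⟩ := mem_image.mp hc
    rw [orbit_mem_cycles_iff hB]
    exact ⟨orbit_mem_cycles (mem_sdiff.mp hx).1, (mem_sdiff.mp hx).2⟩
  · rintro ⟨hcA, hcB⟩
    obtain ⟨x, hx, rfl⟩ := mem_image.mp hcA
    exact orbit_mem_cycles (mem_sdiff.mpr ⟨hx, mt (orbit_mem_cycles_iff hB).mpr hcB⟩)

theorem sum_powerset_cycles {M : Type*} [AddCommMonoid M] (hA : ∀ z ∈ A, T z ∈ A)
    (f : Finset (Finset α) → M) :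
    ∑ B ∈ A.powerset with ∀ z ∈ B, T z ∈ B, f (cycles B T) = ∑ I ∈ (cycles A T).powerset, f I := by
  refine sum_bij' (fun B _ => cycles B T) (fun I _ => I.biUnion id) (fun B hB => ?_)
    (fun I hI => ?_) (fun B hB => biUnion_cycles (mem_filter.mp hB).2)
    (fun I hI => cycles_biUnion (mem_powerset.mp hI)) fun _ _ => rfl
  · exact mem_powerset.mpr (image_subset_image (mem_powerset.mp (mem_filter.mp hB).1))
  · rw [mem_powerset] at hI
    refine mem_filter.mpr ⟨mem_powerset.mpr ?_, fun z hz => ?_⟩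
    · exact biUnion_subset.mpr fun c hc => subset_of_mem_cycles hA (hI hc)
    · obtain ⟨c, hc, hzc⟩ := mem_biUnion.mp hz
      exact mem_biUnion.mpr ⟨c, hc, apply_mem_of_mem_cycles (hI hc) z hzc⟩

theorem cycles_swap_mul_erase (A : Finset α) (T : Perm α) (x y : α) :
    ((cycles A (swap x y * T)).erase (orbit (swap x y * T) x)).erase (orbit (swap x y * T) y)
      = ((cycles A T).erase (orbit T x)).erase (orbit T y) := by
  have le : ∀ T : Perm α, ((cycles A T).erase (orbit T x)).erase (orbit T y)
      ⊆ ((cycles A (swap x y * T)).erase (orbit (swap x y * T) x)).erase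
        (orbit (swap x y * T) y) := by
    intro T c hc
    obtain ⟨hcy, hcx, hc⟩ := by simpa only [mem_erase] using hc
    obtain ⟨z, hz, rfl⟩ := mem_image.mp hc
    have hzx : z ∉ orbit T x := fun h => hcx (orbit_eq_of_mem h)
    have hzy : z ∉ orbit T y := fun h => hcy (orbit_eq_of_mem h)
    have outside : z ∉ orbit (swap x y * T) x ∪ orbit (swap x y * T) y := by
      rw [union_orbit_swap_mul, mem_union]
      tauto
    rw [mem_union, not_or] at outside
    rw [← orbit_swap_mul_of_notMem hzx hzy, mem_erase, mem_erase]
    exact ⟨fun h => outside.2 (h ▸ self_mem_orbit _ z), fun h => outside.1 (h ▸ self_mem_orbit _ z),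
      orbit_mem_cycles hz⟩
  refine Subset.antisymm ?_ (le T)
  simpa only [swap_mul_self_mul] using le (swap x y * T)

theorem cycles_eq_insert_insert (hx : x ∈ A) (hy : y ∈ A) :
    cycles A T = insert (orbit T x) (insert (orbit T y)
      (((cycles A T).erase (orbit T x)).erase (orbit T y))) := by
  ext c
  simp only [mem_insert, mem_erase]
  by_cases hcx : c = orbit T x
  · simp [hcx, orbit_mem_cycles hx]
  by_cases hcy : c = orbit T y
  · simp [hcy, orbit_mem_cycles hy]
  simp [hcx, hcy]

theorem cycles_cut (hx : x ∈ A) (hy : y ∈ A) (hyx : y ∈ orbit T x) :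
    cycles A (swap x y * T) = insert (orbit (swap x y * T) x) (insert (orbit (swap x y * T) y)
      ((cycles A T).erase (orbit T x))) := by
  rw [cycles_eq_insert_insert hx hy, cycles_swap_mul_erase, orbit_eq_of_mem hyx, erase_idem]

theorem orbit_right_notMem_cut (hyx : y ∈ orbit T x) :
    orbit (swap x y * T) y ∉ (cycles A T).erase (orbit T x) := by
  have := cycles_swap_mul_erase A T x y
  rw [orbit_eq_of_mem hyx, erase_idem] at this
  simp [← this]

theorem orbit_left_notMem_cut (hxy : x ≠ y) (hyx : y ∈ orbit T x) :
    orbit (swap x y * T) x ∉ insert (orbit (swap x y * T) y) ((cycles A T).erase (orbit T x)) := by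
  have := cycles_swap_mul_erase A T x y
  rw [orbit_eq_of_mem hyx, erase_idem] at this
  rw [mem_insert, not_or, ← this]
  exact ⟨fun h => notMem_orbit_swap_mul hxy hyx (h ▸ self_mem_orbit _ y), by simp⟩

theorem orbit_join (hyx : y ∉ orbit T x) : orbit (swap x y * T) x = orbit T x ∪ orbit T y := by
  rw [← union_orbit_swap_mul, orbit_eq_of_mem (mem_orbit_swap_mul hyx), union_self]

theorem cycles_join (hx : x ∈ A) (hy : y ∈ A) (hyx : y ∉ orbit T x) :
    cycles A (swap x y * T)
      = insert (orbit T x ∪ orbit T y) (((cycles A T).erase (orbit T x)).erase (orbit T y)) := by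
  rw [cycles_eq_insert_insert hx hy, cycles_swap_mul_erase,
    orbit_eq_of_mem (mem_orbit_swap_mul hyx), insert_idem, orbit_join hyx]

theorem orbit_notMem_join (hyx : y ∉ orbit T x) :
    orbit T x ∪ orbit T y ∉ ((cycles A T).erase (orbit T x)).erase (orbit T y) := by
  rw [← orbit_join hyx, ← cycles_swap_mul_erase]
  simp

theorem card_cycles_cut (hx : x ∈ A) (hy : y ∈ A) (hxy : x ≠ y) (hyx : y ∈ orbit T x) :
    #(cycles A (swap x y * T)) = #(cycles A T) + 1 := by
  rw [cycles_cut hx hy hyx, card_insert_of_notMem (orbit_left_notMem_cut hxy hyx),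
    card_insert_of_notMem (orbit_right_notMem_cut hyx), card_erase_add_one (orbit_mem_cycles hx)]

theorem card_cycles_join (hx : x ∈ A) (hy : y ∈ A) (hyx : y ∉ orbit T x) :
    #(cycles A (swap x y * T)) + 1 = #(cycles A T) := by
  have hne : orbit T y ≠ orbit T x := fun h => hyx (h ▸ self_mem_orbit T y)
  rw [cycles_join hx hy hyx, card_insert_of_notMem (orbit_notMem_join hyx),
    card_erase_add_one (mem_erase.mpr ⟨hne, orbit_mem_cycles hy⟩),
    card_erase_add_one (orbit_mem_cycles hx)]

theorem card_cycles_pos (hA : A.Nonempty) : 0 < #(cycles A T) := (hA.image _).card_pos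

end Cycles

/-! ### Genus-zero factorisations -/

section PowersetSum

variable {ι M : Type*} [DecidableEq ι] [AddCommMonoid M] {a b : ι} {D I : Finset ι}

theorem sum_powerset_insert_insert_separating (ha : a ∉ insert b D) (hb : b ∉ D)
    (f : Finset ι → M) :
    ∑ I ∈ (insert a (insert b D)).powerset with a ∈ I ∧ b ∉ I, f I
      = ∑ I ∈ D.powerset, f (insert a I) := by
  rw [mem_insert, not_or] at ha
  symm
  refine sum_nbij' (insert a) (fun I => I.erase a) (fun I hI => ?_) (fun I hI => ?_)
    (fun I hI => erase_insert fun h => ha.2 (mem_powerset.mp hI h))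
    (fun I hI => insert_erase (mem_filter.mp hI).2.1) fun _ _ => rfl
  · rw [mem_powerset] at hI
    refine mem_filter.mpr ⟨mem_powerset.mpr (insert_subset_insert a (hI.trans (subset_insert b D))),
      mem_insert_self a I, fun h => ?_⟩
    exact (mem_insert.mp h).elim (fun h => ha.1 h.symm) fun h => hb (hI h)
  · obtain ⟨hI, -, hbI⟩ := mem_filter.mp hI
    refine mem_powerset.mpr fun c hc => ?_
    have := mem_powerset.mp hI (mem_of_mem_erase hc)
    simp only [mem_insert] at this
    rcases this with rfl | rfl | hcD
    · exact absurd hc (notMem_erase c I)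
    · exact absurd (mem_of_mem_erase hc) hbI
    · exact hcD

theorem insert_insert_sdiff_insert (ha : a ∉ insert b D) (hb : b ∉ D) (hI : I ⊆ D) :
    insert a (insert b D) \ insert a I = insert b (D \ I) := by
  have hbI : b ∉ I := fun h => hb (hI h)
  have : b ≠ a := fun h => ha (h ▸ mem_insert_self b D)
  rw [insert_sdiff_insert, sdiff_insert_of_notMem ha, insert_sdiff_of_notMem _ hbI]

end PowersetSum

section Hurwitz

variable {α : Type*} {A B C : Finset α} {T : Perm α} {x y : α} {m : ℕ}

theorem isTransitiveOn_nil : IsTransitiveOn A [] ↔ #A ≤ 1 := by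
  constructor
  · intro hA
    rcases A.eq_empty_or_nonempty with rfl | ⟨x, hx⟩
    · simp
    · rw [← hA {x} (singleton_subset_iff.mpr hx) (singleton_nonempty x) (by simp [IsInvariant]),
        card_singleton]
  · intro hA B hBA hne _
    exact eq_of_subset_of_card_le hBA (hA.trans hne.card_pos)

variable [DecidableEq α]

theorem sdiff_invariant (hA : ∀ z ∈ A, T z ∈ A) (hB : ∀ z ∈ B, T z ∈ B) :
    ∀ z ∈ A \ B, T z ∈ A \ B := fun z hz =>
  mem_sdiff.mpr ((mem_sdiff.mp hz).imp (hA z) (mt (apply_mem_iff hB).mp))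

theorem swap_mul_invariant (hA : ∀ z ∈ A, T z ∈ A) (hx : x ∈ A) (hy : y ∈ A) :
    ∀ z ∈ A, (swap x y * T) z ∈ A := fun z hz =>
  swap_apply_mem_iff.mpr (iff_of_true hx hy) _ (hA z hz)

variable [Fintype α]

theorem card_add_card_cycles_sdiff (hBA : B ⊆ A) (hB : ∀ z ∈ B, T z ∈ B) :
    (#B + #(cycles B T)) + (#(A \ B) + #(cycles (A \ B) T)) = #A + #(cycles A T) := by
  have hcycles : #(cycles A T \ cycles B T) + #(cycles B T) = #(cycles A T) :=
    card_sdiff_add_card_eq_card (image_subset_image hBA)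
  have := card_sdiff_add_card_eq_card hBA
  rw [cycles_sdiff hB]
  lia

theorem card_cycles_le_swap_mul (hx : x ∈ A) (hy : y ∈ A) (hxy : x ≠ y) :
    #(cycles A T) ≤ #(cycles A (swap x y * T)) + 1 := by
  by_cases hyx : y ∈ orbit T x
  · have := card_cycles_cut hx hy hxy hyx
    lia
  · exact (card_cycles_join hx hy hyx).ge

theorem mem_orbit_of_separating (hB : ∀ z ∈ B, (swap x y * T) z ∈ B) (hx : x ∈ B) (hy : y ∉ B) :
    y ∈ orbit T x := by
  by_contra h
  exact hy (orbit_subset hB hx (mem_orbit_swap_mul h))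

theorem transitiveCount_zero :
    transitiveCount A T 0 = if (∀ z ∈ A, T z = z) ∧ #A ≤ 1 then 1 else 0 := by
  rw [transitiveCount, words, card_filter, sum_singleton]
  simp only [IsTransitiveFactorisation, isTransitiveOn_nil, List.prod_nil, one_apply, eq_comm]

theorem transitiveCount_eq_zero_of_lt (hne : A.Nonempty) (hA : ∀ z ∈ A, T z ∈ A)
    (h : m + 2 < #A + #(cycles A T)) : transitiveCount A T m = 0 := by
  induction m using Nat.strong_induction_on generalizing A T with | _ m ih =>
  cases m with
  | zero =>
    have : #(cycles A T) ≤ #A := card_image_le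
    rw [transitiveCount_zero, if_neg fun h => by lia]
  | succ m =>
    suffices 2 * transitiveCount A T (m + 1) = 0 by simpa using this
    rw [two_mul_transitiveCount_succ]
    refine sum_eq_zero fun p hp => ?_
    obtain ⟨hx, hy, hxy⟩ := mem_offDiag.mp hp
    have hA' := swap_mul_invariant hA hx hy
    have cycles_le := card_cycles_le_swap_mul (T := T) hx hy hxy
    refine Nat.add_eq_zero_iff.mpr ⟨ih m m.lt_succ_self hne hA' (by lia), ?_⟩
    refine sum_eq_zero fun B hB => sum_eq_zero fun q hq => ?_
    rw [mem_filter, mem_powerset] at hB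
    rw [HasAntidiagonal.mem_antidiagonal] at hq
    obtain ⟨hBA, hxB, hyB⟩ := hB
    by_cases hB' : ∀ z ∈ B, (swap p.1 p.2 * T) z ∈ B
    · have total := card_add_card_cycles_sdiff hBA hB'
      have cut := card_cycles_cut hx hy hxy (mem_orbit_of_separating hB' hxB hyB)
      rcases lt_or_ge (q.1 + 2) (#B + #(cycles B (swap p.1 p.2 * T))) with hlt | hge
      · rw [ih q.1 (by lia) ⟨p.1, hxB⟩ hB' hlt, zero_mul, mul_zero]
      · rw [ih q.2 (by lia) ⟨p.2, mem_sdiff.mpr ⟨hy, hyB⟩⟩ (sdiff_invariant hA' hB') (by lia),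
          mul_zero, mul_zero]
    · push Not at hB'
      obtain ⟨z, hz, hz'⟩ := hB'
      rw [transitiveCount_eq_zero hz hz', zero_mul, mul_zero]

theorem sum_antidiagonal_transitiveCount (hB : B.Nonempty) (hC : C.Nonempty)
    (invB : ∀ z ∈ B, T z ∈ B) (invC : ∀ z ∈ C, T z ∈ C)
    (h : m + 4 = #B + #(cycles B T) + (#C + #(cycles C T)))
    (hurwitzB : ∀ k ≤ m, k + 2 = #B + #(cycles B T) →
      (transitiveCount B T k : ℚ) = k.factorial * hurwitzNumber ((cycles B T).val.map card))
    (hurwitzC : ∀ k ≤ m, k + 2 = #C + #(cycles C T) →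
      (transitiveCount C T k : ℚ) = k.factorial * hurwitzNumber ((cycles C T).val.map card)) :
    ∑ q ∈ antidiagonal m, (m.choose q.1 : ℚ) * (transitiveCount B T q.1 * transitiveCount C T q.2)
      = m.factorial * (hurwitzNumber ((cycles B T).val.map card)
          * hurwitzNumber ((cycles C T).val.map card)) := by
  have := hB.card_pos
  have := hC.card_pos
  have := card_cycles_pos (T := T) hB
  have := card_cycles_pos (T := T) hC
  obtain ⟨i, hi⟩ : ∃ i, i + 2 = #B + #(cycles B T) := ⟨_, Nat.sub_add_cancel (by lia)⟩
  obtain ⟨j, hj⟩ : ∃ j, j + 2 = #C + #(cycles C T) := ⟨_, Nat.sub_add_cancel (by lia)⟩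
  obtain rfl : m = i + j := by lia
  rw [sum_eq_single (i, j)]
  · rw [hurwitzB i (by lia) hi, hurwitzC j (by lia) hj,
      ← Nat.add_choose_mul_factorial_mul_factorial,
      Nat.choose_symm_add]
    push_cast
    ring
  · intro q hq hne
    rw [HasAntidiagonal.mem_antidiagonal] at hq
    rcases lt_or_ge q.1 i with hlt | hge
    · rw [transitiveCount_eq_zero_of_lt hB invB (by lia)]
      simp
    · have : q.1 ≠ i := fun h => hne (Prod.ext h (by dsimp only; lia))
      rw [transitiveCount_eq_zero_of_lt (m := q.2) hC invC (by lia)]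
      simp
  · simp

end Hurwitz

section GenusZero

variable {α : Type*} [DecidableEq α] [Fintype α] {A B : Finset α} {T : Perm α} {x y : α} {m : ℕ}

theorem sum_apply_orbit (hA : ∀ z ∈ A, T z ∈ A) (f : Finset α → ℚ) :
    ∑ x ∈ A, f (orbit T x) = ∑ c ∈ cycles A T, #c * f c := by
  rw [← sum_cycles hA]
  refine sum_congr rfl fun c hc => ?_
  rw [sum_congr rfl fun x hx => by rw [orbit_eq_of_mem_cycles hc hx], sum_const, nsmul_eq_mul]

theorem cycles_orbit (T : Perm α) (x : α) : cycles (orbit T x) T = {orbit T x} := by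
  refine eq_singleton_iff_unique_mem.mpr ⟨orbit_mem_cycles (self_mem_orbit T x), fun c hc => ?_⟩
  obtain ⟨z, hz, rfl⟩ := mem_image.mp hc
  exact orbit_eq_of_mem hz

theorem card_orbit_cut (hxy : x ≠ y) (hyx : y ∈ orbit T x) :
    #(orbit (swap x y * T) x) + #(orbit (swap x y * T) y) = #(orbit T x) := by
  rw [← card_union_of_disjoint (disjoint_orbit_swap_mul hxy hyx), union_orbit_swap_mul,
    orbit_eq_of_mem hyx, union_self]

theorem card_orbit_join (hyx : y ∉ orbit T x) :
    #(orbit T x ∪ orbit T y) = #(orbit T x) + #(orbit T y) := by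
  refine card_union_of_disjoint (disjoint_left.mpr fun z hzx hzy => hyx ?_)
  rw [← orbit_eq_of_mem hzx, orbit_eq_of_mem hzy]
  exact self_mem_orbit T y

theorem sum_cut_orbit (T : Perm α) (x : α) (D : Finset (Finset α)) :
    ∑ y ∈ (orbit T x).erase x, ∑ I ∈ D.powerset,
        hurwitzNumber (#(orbit (swap x y * T) x) ::ₘ I.val.map card)
          * hurwitzNumber (#(orbit (swap x y * T) y) ::ₘ (D \ I).val.map card)
      = cutSum card #(orbit T x) D := by
  have bij := bijOn_iterate T x
  have pos : 0 < #(orbit T x) := card_pos.mpr ⟨x, self_mem_orbit T x⟩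
  rw [cutSum, Nat.sum_antidiagonal_eq_sum_range_succ fun k l => ∑ I ∈ D.powerset,
      hurwitzNumber (k ::ₘ I.val.map card) * hurwitzNumber (l ::ₘ (D \ I).val.map card),
    sum_range_succ, Nat.sub_self, ← add_sum_erase _ _ (mem_range.mpr pos)]
  simp only [hurwitzNumber_zero_cons, zero_mul, mul_zero, sum_const_zero, zero_add, add_zero]
  symm
  refine sum_nbij (fun k => T^[k] x) (fun k hk => ?_) (fun j hj k hk h => ?_) (fun z hz => ?_)
    fun k hk => ?_
  · obtain ⟨hk0, hk⟩ := mem_erase.mp hk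
    rw [mem_range] at hk
    exact mem_erase.mpr ⟨iterate_ne_self (Nat.pos_of_ne_zero hk0) hk, bij.mapsTo hk⟩
  · exact bij.injOn (mem_range.mp (mem_of_mem_erase hj)) (mem_range.mp (mem_of_mem_erase hk)) h
  · obtain ⟨hzx, hz⟩ := mem_erase.mp hz
    obtain ⟨k, hk, rfl⟩ := bij.surjOn hz
    refine ⟨k, mem_erase.mpr ⟨?_, mem_range.mpr hk⟩, rfl⟩
    rintro rfl
    exact hzx rfl
  · obtain ⟨hk0, hk⟩ := mem_erase.mp hk
    rw [mem_range] at hk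
    have hk0 := Nat.pos_of_ne_zero hk0
    have total := card_orbit_cut (iterate_ne_self hk0 hk).symm (bij.mapsTo hk)
    rw [card_orbit_swap_iterate_mul hk0 hk] at total ⊢
    rw [← total, Nat.add_sub_cancel_left]

theorem sum_separating_transitiveCount (hA : ∀ z ∈ A, T z ∈ A) (hy : y ∈ A)
    (hm : m + 4 = #A + #(cycles A T))
    (hurwitz : ∀ B : Finset α, B.Nonempty → (∀ z ∈ B, T z ∈ B) → ∀ k ≤ m,
      k + 2 = #B + #(cycles B T) →
        (transitiveCount B T k : ℚ) = k.factorial * hurwitzNumber ((cycles B T).val.map card)) :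
    ∑ B ∈ A.powerset with x ∈ B ∧ y ∉ B, ∑ q ∈ antidiagonal m, (m.choose q.1 : ℚ) *
        (transitiveCount B T q.1 * transitiveCount (A \ B) T q.2)
      = m.factorial * ∑ I ∈ (cycles A T).powerset with orbit T x ∈ I ∧ orbit T y ∉ I,
          hurwitzNumber (I.val.map card) * hurwitzNumber ((cycles A T \ I).val.map card) := by
  rw [mul_sum, sum_filter (fun I => orbit T x ∈ I ∧ orbit T y ∉ I), ← sum_powerset_cycles hA,
    sum_filter, sum_filter]
  refine sum_congr rfl fun B hB => ?_
  rw [mem_powerset] at hB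
  by_cases hBT : ∀ z ∈ B, T z ∈ B
  · simp only [orbit_mem_cycles_iff hBT, if_pos hBT, ← cycles_sdiff hBT]
    split_ifs with hxy
    · have hBne : B.Nonempty := ⟨x, hxy.1⟩
      have hCne : (A \ B).Nonempty := ⟨y, mem_sdiff.mpr ⟨hy, hxy.2⟩⟩
      have hCT := sdiff_invariant hA hBT
      exact sum_antidiagonal_transitiveCount hBne hCne hBT hCT
        (hm.trans (card_add_card_cycles_sdiff hB hBT).symm) (hurwitz B hBne hBT)
        (hurwitz (A \ B) hCne hCT)
    · rfl
  · rw [if_neg hBT]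
    push Not at hBT
    obtain ⟨z, hz, hTz⟩ := hBT
    simp [transitiveCount_eq_zero hz hTz]

theorem sum_separating_transitiveCount_cut (hA : ∀ z ∈ A, T z ∈ A) (hx : x ∈ A) (hy : y ∈ A)
    (hxy : x ≠ y) (hyx : y ∈ orbit T x) (hm : m + 3 = #A + #(cycles A T))
    (hurwitz : ∀ B : Finset α, B.Nonempty → (∀ z ∈ B, (swap x y * T) z ∈ B) → ∀ k ≤ m,
      k + 2 = #B + #(cycles B (swap x y * T)) → (transitiveCount B (swap x y * T) k : ℚ)
        = k.factorial * hurwitzNumber ((cycles B (swap x y * T)).val.map card)) :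
    ∑ B ∈ A.powerset with x ∈ B ∧ y ∉ B, ∑ q ∈ antidiagonal m, (m.choose q.1 : ℚ) *
        (transitiveCount B (swap x y * T) q.1 * transitiveCount (A \ B) (swap x y * T) q.2)
      = m.factorial * ∑ I ∈ ((cycles A T).erase (orbit T x)).powerset,
          hurwitzNumber (#(orbit (swap x y * T) x) ::ₘ I.val.map card) *
            hurwitzNumber (#(orbit (swap x y * T) y) ::ₘ
              ((cycles A T).erase (orbit T x) \ I).val.map card) := by
  have leftMem := orbit_left_notMem_cut (A := A) hxy hyx
  have rightMem := orbit_right_notMem_cut (A := A) hyx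
  have := card_cycles_cut hx hy hxy hyx
  rw [sum_separating_transitiveCount (swap_mul_invariant hA hx hy) hy (by lia) hurwitz,
    cycles_cut hx hy hyx, sum_powerset_insert_insert_separating leftMem rightMem]
  congr 1
  refine sum_congr rfl fun I hI => ?_
  have hI := mem_powerset.mp hI
  rw [insert_insert_sdiff_insert leftMem rightMem hI,
    insert_val_of_notMem fun h => rightMem (sdiff_subset h),
    insert_val_of_notMem fun h => leftMem (mem_insert_of_mem (hI h)), Multiset.map_cons,
    Multiset.map_cons]

theorem sum_separating_transitiveCount_join (hyx : y ∉ orbit T x) :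
    ∑ B ∈ A.powerset with x ∈ B ∧ y ∉ B, ∑ q ∈ antidiagonal m, (m.choose q.1 : ℚ) *
        (transitiveCount B (swap x y * T) q.1 * transitiveCount (A \ B) (swap x y * T) q.2)
      = 0 := by
  refine sum_eq_zero fun B hB => sum_eq_zero fun q _ => ?_
  obtain ⟨-, hxB, hyB⟩ := mem_filter.mp hB
  obtain ⟨z, hz, hTz⟩ : ∃ z ∈ B, (swap x y * T) z ∉ B := by
    by_contra! hBT
    exact hyx (mem_orbit_of_separating hBT hxB hyB)
  rw [transitiveCount_eq_zero hz hTz, Nat.cast_zero, zero_mul, mul_zero]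

theorem sum_join_cycles (hA : ∀ z ∈ A, T z ∈ A) (hx : x ∈ A) :
    ∑ y ∈ A \ orbit T x, hurwitzNumber ((cycles A (swap x y * T)).val.map card)
      = ∑ c ∈ (cycles A T).erase (orbit T x), #c * hurwitzNumber
          ((#(orbit T x) + #c) ::ₘ (((cycles A T).erase (orbit T x)).erase c).val.map card) := by
  have orbit_invariant : ∀ z ∈ orbit T x, T z ∈ orbit T x := fun z => apply_mem_orbit.mpr
  rw [erase_eq, ← cycles_orbit, ← cycles_sdiff orbit_invariant,
    ← sum_apply_orbit (sdiff_invariant hA orbit_invariant) fun c => hurwitzNumber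
      ((#(orbit T x) + #c) ::ₘ ((cycles (A \ orbit T x) T).erase c).val.map card)]
  refine sum_congr rfl fun y hy => ?_
  obtain ⟨hy, hyx⟩ := mem_sdiff.mp hy
  rw [cycles_sdiff orbit_invariant, cycles_orbit, ← erase_eq, cycles_join hx hy hyx,
    insert_val_of_notMem (orbit_notMem_join hyx), Multiset.map_cons, card_orbit_join hyx]

theorem sum_transitiveCount_swap_mul (hA : ∀ z ∈ A, T z ∈ A) (hx : x ∈ A)
    (hm : m + 3 = #A + #(cycles A T))
    (hurwitz : ∀ (S : Perm α) (B : Finset α), B.Nonempty → (∀ z ∈ B, S z ∈ B) → ∀ k ≤ m,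
      k + 2 = #B + #(cycles B S) →
        (transitiveCount B S k : ℚ) = k.factorial * hurwitzNumber ((cycles B S).val.map card)) :
    ∑ y ∈ A.erase x, ((transitiveCount A (swap x y * T) m : ℚ)
        + ∑ B ∈ A.powerset with x ∈ B ∧ y ∉ B, ∑ q ∈ antidiagonal m, (m.choose q.1 : ℚ) *
          (transitiveCount B (swap x y * T) q.1 * transitiveCount (A \ B) (swap x y * T) q.2))
      = m.factorial * (∑ c ∈ (cycles A T).erase (orbit T x), #c * hurwitzNumber
            ((#(orbit T x) + #c) ::ₘ (((cycles A T).erase (orbit T x)).erase c).val.map card)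
          + cutSum card #(orbit T x) ((cycles A T).erase (orbit T x))) := by
  have hAne : A.Nonempty := ⟨x, hx⟩
  have subset : (orbit T x).erase x ⊆ A.erase x := erase_subset_erase x (orbit_subset hA hx)
  have sdiff : A.erase x \ (orbit T x).erase x = A \ orbit T x := by
    ext z
    have := self_mem_orbit T x
    simp only [mem_sdiff, mem_erase]
    grind
  rw [← sum_sdiff subset, sdiff, ← sum_join_cycles hA hx, ← sum_cut_orbit, mul_add, mul_sum,
    mul_sum]
  congr 1
  · refine sum_congr rfl fun y hy => ?_
    obtain ⟨hy, hyx⟩ := mem_sdiff.mp hy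
    have := card_cycles_join hx hy hyx
    rw [sum_separating_transitiveCount_join hyx, add_zero,
      hurwitz _ A hAne (swap_mul_invariant hA hx hy) m le_rfl (by lia)]
  · refine sum_congr rfl fun y hy => ?_
    obtain ⟨hyx, hy⟩ := mem_erase.mp hy
    have hyA := orbit_subset hA hx hy
    have := card_cycles_cut hx hyA hyx.symm hy
    rw [transitiveCount_eq_zero_of_lt hAne (swap_mul_invariant hA hx hyA) (by lia), Nat.cast_zero,
      zero_add, sum_separating_transitiveCount_cut hA hx hyA hyx.symm hy hm (hurwitz _)]

theorem transitiveCount_eq (hne : A.Nonempty) (hA : ∀ z ∈ A, T z ∈ A)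
    (hm : m + 2 = #A + #(cycles A T)) :
    (transitiveCount A T m : ℚ) = m.factorial * hurwitzNumber ((cycles A T).val.map card) := by
  induction m using Nat.strong_induction_on generalizing A T with | _ m ih =>
  have cycles_pos := card_cycles_pos (T := T) hne
  have := hne.card_pos
  cases m with
  | zero =>
    obtain ⟨x, rfl⟩ := card_eq_one.mp (show #A = 1 by lia)
    have hx : T x = x := by simpa using hA
    rw [transitiveCount_zero, if_pos ⟨by simpa using hx, by simp⟩]
    simp [cycles, orbit_eq_singleton hx, hurwitzNumber, hurwitzWeight, expCoeff]
  | succ m =>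
    have recursion := congrArg (Nat.cast : ℕ → ℚ) (two_mul_transitiveCount_succ A T m)
    push_cast at recursion
    have join_cut := cut_and_join (C := cycles A T) (s := card) (card_pos.mp cycles_pos)
      fun c hc => (nonempty_of_mem_cycles hc).card_pos.ne'
    have total : ∑ c ∈ cycles A T, (#c : ℚ) + #(cycles A T) - 2 = m + 1 := by
      rw [← Nat.cast_sum, sum_card_cycles hA, ← Nat.cast_add, ← hm]
      push_cast
      ring
    rw [total] at join_cut
    rw [sum_offDiag_eq_sum_sum_erase A fun x y => (transitiveCount A (swap x y * T) m : ℚ)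
        + ∑ B ∈ A.powerset with x ∈ B ∧ y ∉ B, ∑ q ∈ antidiagonal m, (m.choose q.1 : ℚ) *
          (transitiveCount B (swap x y * T) q.1 * transitiveCount (A \ B) (swap x y * T) q.2),
      sum_congr rfl fun x hx => sum_transitiveCount_swap_mul hA hx (by lia) fun S B hB hS k hk =>
        ih k (Nat.lt_succ_of_le hk) hB hS, ← mul_sum,
      sum_apply_orbit hA fun c => ∑ d ∈ (cycles A T).erase c, #d * hurwitzNumber
          ((#c + #d) ::ₘ (((cycles A T).erase c).erase d).val.map card)
        + cutSum card #c ((cycles A T).erase c)] at recursion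
    rw [sum_offDiag_eq_sum_sum_erase (cycles A T) fun c d => (#c : ℚ) * #d * hurwitzNumber
      ((#c + #d) ::ₘ (((cycles A T).erase c).erase d).val.map card)] at join_cut
    simp only [mul_assoc, ← mul_sum, ← sum_add_distrib, ← mul_add] at join_cut
    rw [Nat.factorial_succ]
    push_cast
    linear_combination recursion / 2 - m.factorial * join_cut

end GenusZero

/-! ### Cutting points out of cycles -/

section OrderProbability

variable {α β : Type*} [DecidableEq α] [DecidableEq β] {f g : α → α} {S S₁ S₂ : Finset α}
  {p : ℚ}

/-- The probability that, in a uniformly random ordering of `S`, each point `x ∈ S` with `f x ∈ S`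
comes after `f x`. The recursion conditions on the first point of the ordering. -/
def orderProbability (f : α → α) (S : Finset α) : ℚ :=
  if S = ∅ then 1 else (∑ x ∈ ({x ∈ S | f x ∉ S} : Finset α).attach,
    orderProbability f (S.erase x)) / #S
termination_by #S
decreasing_by exact card_erase_lt_of_mem (mem_filter.mp x.2).1

theorem orderProbability_empty (f : α → α) : orderProbability f ∅ = 1 := by
  rw [orderProbability, if_pos rfl]

theorem card_mul_orderProbability (f : α → α) (S : Finset α) :
    #S * orderProbability f S = ∑ x ∈ S with f x ∉ S, orderProbability f (S.erase x) := by
  rcases S.eq_empty_or_nonempty with rfl | hS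
  · simp
  · rw [orderProbability, if_neg hS.ne_empty,
      mul_div_cancel₀ _ (Nat.cast_ne_zero.mpr hS.card_ne_zero),
      sum_attach _ fun x => orderProbability f (S.erase x)]

theorem orderProbability_eq_of_card_mul (hS : S.Nonempty)
    (h : #S * p = ∑ x ∈ S with f x ∉ S, orderProbability f (S.erase x)) :
    orderProbability f S = p := by
  rw [← card_mul_orderProbability] at h
  exact (mul_left_cancel₀ (Nat.cast_ne_zero.mpr hS.card_ne_zero) h).symm

theorem orderProbability_congr (h : ∀ z ∈ S, ∀ w ∈ S, f z = w ↔ g z = w) :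
    orderProbability f S = orderProbability g S := by
  induction S using Finset.strongInduction with
  | H S ih =>
    rcases S.eq_empty_or_nonempty with rfl | hS
    · rw [orderProbability_empty, orderProbability_empty]
    have first : ({x ∈ S | f x ∉ S} : Finset α) = {x ∈ S | g x ∉ S} :=
      filter_congr fun x hx => not_congr
        ⟨fun hf => (h x hx _ hf).mp rfl ▸ hf, fun hg => (h x hx _ hg).mpr rfl ▸ hg⟩
    refine orderProbability_eq_of_card_mul hS ?_
    rw [card_mul_orderProbability, first]
    refine sum_congr rfl fun x hx => (ih _ (erase_ssubset (mem_filter.mp hx).1) ?_).symm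
    exact fun z hz w hw => h z (mem_of_mem_erase hz) w (mem_of_mem_erase hw)

theorem orderProbability_image {e : α → β} {g : β → β} (he : e.Injective)
    (h : ∀ x ∈ S, g (e x) = e (f x)) :
    orderProbability g (S.image e) = orderProbability f S := by
  induction S using Finset.strongInduction with
  | H S ih =>
    rcases S.eq_empty_or_nonempty with rfl | hS
    · rw [image_empty, orderProbability_empty, orderProbability_empty]
    refine orderProbability_eq_of_card_mul (hS.image e) ?_
    have first : ({y ∈ S.image e | g y ∉ S.image e} : Finset β) = {x ∈ S | f x ∉ S}.image e := by
      rw [filter_image]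
      refine congrArg _ (filter_congr fun x hx => ?_)
      rw [h x hx, he.mem_finset_image]
    rw [card_image_of_injective S he, card_mul_orderProbability, first, sum_image he.injOn]
    refine sum_congr rfl fun x hx => ?_
    rw [← image_erase he]
    exact (ih _ (erase_ssubset (mem_filter.mp hx).1) fun z hz => h z (mem_of_mem_erase hz)).symm

theorem orderProbability_union (hS : Disjoint S₁ S₂) (h₁ : ∀ x ∈ S₁, f x ∉ S₂)
    (h₂ : ∀ x ∈ S₂, f x ∉ S₁) :
    orderProbability f (S₁ ∪ S₂) = orderProbability f S₁ * orderProbability f S₂ := by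
  induction hn : #(S₁ ∪ S₂) generalizing S₁ S₂ with
  | zero =>
    rw [card_eq_zero, union_eq_empty] at hn
    rw [hn.1, hn.2, union_empty, orderProbability_empty, mul_one]
  | succ n ih =>
    refine orderProbability_eq_of_card_mul (card_pos.mp (hn ▸ n.succ_pos)) ?_
    have first : ({x ∈ S₁ ∪ S₂ | f x ∉ S₁ ∪ S₂} : Finset α) =
        {x ∈ S₁ | f x ∉ S₁} ∪ {x ∈ S₂ | f x ∉ S₂} := by
      rw [filter_union]
      refine congrArg₂ _ (filter_congr fun x hx => ?_) (filter_congr fun x hx => ?_)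
      · rw [mem_union, or_iff_left (h₁ x hx)]
      · rw [mem_union, or_iff_right (h₂ x hx)]
    rw [first, sum_union (disjoint_filter_filter hS), card_union_of_disjoint hS, Nat.cast_add,
      add_mul, ← mul_assoc, mul_left_comm, card_mul_orderProbability, card_mul_orderProbability,
      sum_mul, mul_sum]
    refine congrArg₂ _ (sum_congr rfl fun x hx => ?_) (sum_congr rfl fun x hx => ?_)
    · have hx := (mem_filter.mp hx).1
      have erase_union : (S₁ ∪ S₂).erase x = S₁.erase x ∪ S₂ := by
        rw [erase_union_distrib, erase_eq_of_notMem (disjoint_left.mp hS hx)]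
      rw [erase_union, ih (hS.mono_left (erase_subset _ _))
        (fun z hz => h₁ z (mem_of_mem_erase hz)) (fun z hz => mt mem_of_mem_erase (h₂ z hz))
        (by rw [← erase_union, card_erase_of_mem (mem_union_left _ hx), hn, n.add_sub_cancel])]
    · have hx := (mem_filter.mp hx).1
      have erase_union : (S₁ ∪ S₂).erase x = S₁ ∪ S₂.erase x := by
        rw [erase_union_distrib, erase_eq_of_notMem (disjoint_right.mp hS hx)]
      rw [erase_union, ih (hS.mono_right (erase_subset _ _))
        (fun z hz => mt mem_of_mem_erase (h₁ z hz)) (fun z hz => h₂ z (mem_of_mem_erase hz))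
        (by rw [← erase_union, card_erase_of_mem (mem_union_right _ hx), hn, n.add_sub_cancel])]

theorem orderProbability_eq_zero {c : Finset α} (hc : c.Nonempty) (hf : ∀ x ∈ c, f x ∈ c)
    (hcS : c ⊆ S) : orderProbability f S = 0 := by
  induction S using Finset.strongInduction with
  | H S ih =>
    refine orderProbability_eq_of_card_mul (hc.mono hcS) ?_
    rw [mul_zero, sum_eq_zero fun x hx => ?_]
    obtain ⟨hxS, hfx⟩ := mem_filter.mp hx
    refine ih _ (erase_ssubset hxS) (subset_erase.mpr ⟨hcS, fun hxc => hfx (hcS (hf x hxc))⟩)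

end OrderProbability

section Bypass

variable {α : Type*} [DecidableEq α] {A S : Finset α} {s T : Perm α} {w x z : α}

/-- The permutation with the point `x` cut out of its cycle: `x` becomes fixed and its preimage is
sent to `T x`. -/
def bypass (T : Perm α) (x : α) : Perm α := swap x (T x) * T

theorem bypass_apply_self (T : Perm α) (x : α) : bypass T x x = x := swap_apply_right x (T x)

theorem bypass_apply_of_ne (hz : z ≠ x) : bypass T x z = if T z = x then T x else T z := by
  rw [bypass, Perm.mul_apply, swap_apply_def, if_neg (T.injective.ne hz)]

theorem bypass_apply_eq_self (h : T w = w) : bypass T x w = w := by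
  by_cases hw : w = x
  · rw [hw, bypass_apply_self]
  · rw [bypass_apply_of_ne hw, h, if_neg hw]

theorem bypass_apply_of_notMem_erase (hT : ∀ z ∉ A, T z = z) : ∀ z ∉ A.erase x, bypass T x z = z :=
  fun z hz => by
    rcases eq_or_ne z x with rfl | hzx
    · exact bypass_apply_self T z
    · exact bypass_apply_eq_self (hT z fun h => hz (mem_erase.mpr ⟨hzx, h⟩))

theorem bypass_mul (h : s x = x) : bypass (s * T) x = s * bypass T x := by
  have := mul_swap_eq_swap_mul s x (T x)
  rw [h] at this
  rw [bypass, bypass, Perm.mul_apply, ← mul_assoc, ← mul_assoc, this]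

theorem bypass_comm (T : Perm α) (x y : α) : bypass (bypass T x) y = bypass (bypass T y) x := by
  rcases eq_or_ne x y with rfl | hxy
  · rfl
  have hT := T.injective.ne hxy
  simp only [bypass, Perm.mul_apply, ← mul_assoc]
  refine congrArg (· * T) (Equiv.ext fun w => ?_)
  simp only [Perm.mul_apply, swap_apply_def]
  grind

instance : RightCommutative (bypass : Perm α → α → Perm α) := ⟨bypass_comm⟩

/-- The permutation with all points of `S` cut out of their cycles; the order of cutting is
immaterial. -/
def bypassAll (T : Perm α) (S : Finset α) : Perm α := S.val.foldl bypass T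

theorem bypassAll_empty (T : Perm α) : bypassAll T ∅ = T := Multiset.foldl_zero _ _

theorem bypassAll_insert (h : x ∉ S) : bypassAll T (insert x S) = bypassAll (bypass T x) S := by
  rw [bypassAll, insert_val_of_notMem h, Multiset.foldl_cons, bypassAll]

theorem bypassAll_erase (h : x ∈ S) : bypassAll (bypass T x) (S.erase x) = bypassAll T S := by
  rw [← bypassAll_insert (notMem_erase x S), insert_erase h]

theorem orderProbability_bypass (hTx : T x ∉ S) :
    orderProbability (bypass T x) (S.erase x) = orderProbability T (S.erase x) := by
  refine orderProbability_congr fun z hz w hw => ?_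
  rw [bypass_apply_of_ne (ne_of_mem_erase hz)]
  split_ifs with hTz
  · exact iff_of_false (fun h => hTx (h ▸ mem_of_mem_erase hw)) (hTz ▸ (ne_of_mem_erase hw).symm)
  · rfl

theorem bypassAll_mul (h : ∀ x ∈ S, s x = x) : bypassAll (s * T) S = s * bypassAll T S := by
  induction S using Finset.induction_on generalizing T with
  | empty => rw [bypassAll_empty, bypassAll_empty]
  | insert x S hx ih =>
    rw [bypassAll_insert hx, bypassAll_insert hx, bypass_mul (h x (mem_insert_self x S)),
      ih fun z hz => h z (mem_insert_of_mem hz)]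

theorem bypassAll_apply_eq_self (h : T w = w) : bypassAll T S w = w := by
  induction S using Finset.induction_on generalizing T with
  | empty => rwa [bypassAll_empty]
  | insert x S hx ih =>
    rw [bypassAll_insert hx]
    exact ih (bypass_apply_eq_self h)

theorem bypassAll_apply_of_mem (h : w ∈ S) : bypassAll T S w = w := by
  rw [← bypassAll_erase h]
  exact bypassAll_apply_eq_self (bypass_apply_self T w)

variable [Fintype α]

theorem orbit_bypass (hz : z ≠ x) : orbit (bypass T x) z = (orbit T z).erase x := by
  refine (orbit_subset (fun w hw => ?_) (mem_erase.mpr ⟨hz, self_mem_orbit T z⟩)).antisymm ?_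
  · obtain ⟨hwx, hw⟩ := mem_erase.mp hw
    rw [bypass_apply_of_ne hwx, mem_erase]
    split_ifs with hTw
    · exact ⟨fun h => hwx (T.injective (hTw.trans h.symm)),
        apply_mem_orbit.mpr (hTw ▸ apply_mem_orbit.mpr hw)⟩
    · exact ⟨hTw, apply_mem_orbit.mpr hw⟩
  · have same_orbit : orbit T (T x) = orbit T x :=
      orbit_eq_of_mem (apply_mem_orbit.mpr (self_mem_orbit T x))
    by_cases hzx : z ∈ orbit T x
    · have split : orbit T x ⊆ insert x (orbit (bypass T x) (T x)) := by
        rw [insert_eq, ← orbit_eq_singleton (bypass_apply_self T x), bypass, union_orbit_swap_mul]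
        exact subset_union_left
      have hz' := (mem_insert.mp (split hzx)).resolve_left hz
      rwa [← subset_insert_iff, orbit_eq_of_mem hz', orbit_eq_of_mem hzx]
    · rw [bypass, orbit_swap_mul_of_notMem hzx (same_orbit ▸ hzx)]
      exact erase_subset _ _

theorem orbit_bypassAll (hz : z ∉ S) : orbit (bypassAll T S) z = orbit T z \ S := by
  induction S using Finset.induction_on generalizing T with
  | empty => rw [bypassAll_empty, sdiff_empty]
  | insert x S hx ih =>
    rw [mem_insert, not_or] at hz
    rw [bypassAll_insert hx, ih hz.2, orbit_bypass hz.1, sdiff_insert, erase_sdiff_comm]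

end Bypass

section Leaves

variable {α : Type*} [DecidableEq α] {A B C S : Finset α} {L : List (Perm α)} {T τ : Perm α}
  {x y : α} {m : ℕ}

/-- The number of letters of the word `L` which move the point `x`. -/
def moveCount (x : α) (L : List (Perm α)) : ℕ := L.countP fun τ => τ x ≠ x

/-- Each point of `S` is moved by exactly one letter of `L`, and distinct points of `S` are moved by
distinct letters. Seeing the transpositions of `L` as the edges of a graph, `S` is a set of pairwise
non-adjacent leaves. -/
def IsLeafSet (S : Finset α) (L : List (Perm α)) : Prop :=
  (∀ s ∈ S, moveCount s L = 1) ∧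
    ∀ τ ∈ L, ∀ s ∈ S, ∀ s' ∈ S, τ s ≠ s → τ s' ≠ s' → s = s'

instance : Decidable (IsLeafSet S L) := by unfold IsLeafSet; infer_instance

/-- The subword of those letters which fix every point of `S`. -/
def trim (S : Finset α) (L : List (Perm α)) : List (Perm α) := L.filter fun τ => ∀ s ∈ S, τ s = s

theorem moveCount_cons (x : α) (τ : Perm α) (L : List (Perm α)) :
    moveCount x (τ :: L) = moveCount x L + if τ x ≠ x then 1 else 0 := by
  simp only [moveCount, List.countP_cons, decide_eq_true_eq]

theorem moveCount_cons_of_apply_eq (h : τ x = x) : moveCount x (τ :: L) = moveCount x L := by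
  rw [moveCount_cons, if_neg (not_not.mpr h), add_zero]

theorem moveCount_cons_of_apply_ne (h : τ x ≠ x) : moveCount x (τ :: L) = moveCount x L + 1 := by
  rw [moveCount_cons, if_pos h]

theorem moveCount_eq_zero : moveCount x L = 0 ↔ ∀ τ ∈ L, τ x = x := by
  simp [moveCount, List.countP_eq_zero]

theorem isLeafSet_cons_of_forall_apply_eq (h : ∀ s ∈ S, τ s = s) :
    IsLeafSet S (τ :: L) ↔ IsLeafSet S L := by
  refine and_congr (forall₂_congr fun s hs => by rw [moveCount_cons_of_apply_eq (h s hs)]) ?_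
  rw [List.forall_mem_cons, and_iff_right fun s hs _ _ hne => absurd (h s hs) hne]

theorem not_isLeafSet_cons (hτ : τ ∈ L) (hx : x ∈ S) (hy : y ∈ S) (hxy : x ≠ y)
    (hτx : τ x ≠ x) (hτy : τ y ≠ y) : ¬ IsLeafSet S L := fun h =>
  hxy (h.2 τ hτ x hx y hy hτx hτy)

theorem isLeafSet_swap_cons (hx : x ∈ S) (hy : y ∉ S) :
    IsLeafSet S (swap x y :: L) ↔ (∀ τ ∈ L, τ x = x) ∧ IsLeafSet (S.erase x) L := by
  have moves : swap x y x ≠ x := by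
    rw [swap_apply_left]
    rintro rfl
    exact hy hx
  have fixes : ∀ s ∈ S.erase x, swap x y s = s := fun s hs =>
    swap_apply_of_ne_of_ne (ne_of_mem_erase hs) (by rintro rfl; exact hy (mem_of_mem_erase hs))
  have only_x : ∀ s ∈ S, swap x y s ≠ s → s = x := fun s hs hne =>
    of_not_not fun hsx => hne (fixes s (mem_erase.mpr ⟨hsx, hs⟩))
  rw [← moveCount_eq_zero]
  constructor
  · rintro ⟨once, distinct⟩
    have := once x hx
    rw [moveCount_cons_of_apply_ne moves, Nat.add_eq_right] at this
    refine ⟨this, fun s hs => ?_, fun τ hτ s hs s' hs' => ?_⟩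
    · rw [← once s (mem_of_mem_erase hs), moveCount_cons_of_apply_eq (fixes s hs)]
    · exact distinct τ (List.mem_cons_of_mem _ hτ) s (mem_of_mem_erase hs) s' (mem_of_mem_erase hs')
  · rintro ⟨never, once, distinct⟩
    refine ⟨fun s hs => ?_, List.forall_mem_cons.mpr ⟨fun s hs s' hs' hne hne' => ?_,
      fun τ hτ s hs s' hs' hne hne' => ?_⟩⟩
    · rcases eq_or_ne s x with rfl | hsx
      · rw [moveCount_cons_of_apply_ne moves, never]
      · have hs := mem_erase.mpr ⟨hsx, hs⟩
        rw [moveCount_cons_of_apply_eq (fixes s hs), once s hs]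
    · rw [only_x s hs hne, only_x s' hs' hne']
    · have ne_x : ∀ z, τ z ≠ z → z ≠ x := by
        rintro z hz rfl
        exact hz (moveCount_eq_zero.mp never τ hτ)
      exact distinct τ hτ s (mem_erase.mpr ⟨ne_x s hne, hs⟩) s' (mem_erase.mpr ⟨ne_x s' hne', hs'⟩)
        hne hne'

theorem trim_cons_of_forall_apply_eq (h : ∀ s ∈ S, τ s = s) : trim S (τ :: L) = τ :: trim S L :=
  List.filter_cons_of_pos (by simpa using h)

theorem trim_cons_of_apply_ne (hx : x ∈ S) (h : τ x ≠ x) : trim S (τ :: L) = trim S L :=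
  List.filter_cons_of_neg (by simpa using ⟨x, hx, h⟩)

theorem mem_trim : τ ∈ trim S L ↔ τ ∈ L ∧ ∀ s ∈ S, τ s = s := by
  simp [trim]

theorem trim_erase (h : ∀ τ ∈ L, τ x = x) : trim (S.erase x) L = trim S L := by
  refine List.filter_congr fun τ hτ => decide_eq_decide.mpr
    ⟨fun fixes s hs => ?_, fun fixes s hs => fixes s (mem_of_mem_erase hs)⟩
  rcases eq_or_ne s x with rfl | hsx
  · exact h τ hτ
  · exact fixes s (mem_erase.mpr ⟨hsx, hs⟩)

variable [Fintype α]

theorem mem_swaps_erase : τ ∈ swaps (A.erase x) ↔ τ ∈ swaps A ∧ τ x = x := by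
  refine ⟨fun h => ⟨swaps_mono (erase_subset x A) h,
    apply_eq_self_of_mem_swaps h (notMem_erase x A)⟩, fun ⟨hτ, hx⟩ => ?_⟩
  obtain ⟨y, hy, z, hz, hyz, rfl⟩ := mem_swaps.mp hτ
  refine swap_mem_swaps (mem_erase.mpr ⟨?_, hy⟩) (mem_erase.mpr ⟨?_, hz⟩) hyz
  · rintro rfl
    exact hyz (by rw [← hx, swap_apply_left])
  · rintro rfl
    exact hyz (by rw [← swap_apply_right y z, hx])

theorem mem_words_erase : L ∈ words (A.erase x) m ↔ L ∈ words A m ∧ ∀ τ ∈ L, τ x = x := by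
  simp only [mem_words, mem_swaps_erase, forall_and, and_assoc]

theorem sum_swaps_union (hBC : Disjoint B C) (f : Perm α → ℚ) :
    ∑ τ ∈ swaps (B ∪ C), f τ
      = ∑ τ ∈ swaps B, f τ + ∑ τ ∈ swaps C, f τ + ∑ x ∈ B, ∑ y ∈ C, f (swap x y) := by
  have all_pairs : ∀ A : Finset α, ∑ x ∈ A, ∑ y ∈ A, f (swap x y)
      = #A * f 1 + 2 * ∑ τ ∈ swaps A, f τ := fun A => by
    rw [← sum_product', ← diag_union_offDiag, sum_union (disjoint_diag_offDiag A),
      ← sum_swaps, sum_diag]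
    simp [Perm.one_def]
  have union := all_pairs (B ∪ C)
  simp only [sum_union hBC, sum_add_distrib, all_pairs, card_union_of_disjoint hBC] at union
  have reversed : ∑ y ∈ C, ∑ x ∈ B, f (swap y x) = ∑ x ∈ B, ∑ y ∈ C, f (swap x y) := by
    rw [sum_comm]
    exact sum_congr rfl fun x _ => sum_congr rfl fun y _ => by rw [swap_comm]
  push_cast at union
  linarith

/-- The sum of `g` over the words obtained from the factorisations of `T` into `m` transpositions of
elements of `A` with leaf set `S` by removing the letters at the leaves. -/
def leafSum (A S : Finset α) (T : Perm α) (m : ℕ) (g : List (Perm α) → ℚ) : ℚ :=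
  ∑ L ∈ words A m with L.prod = T ∧ IsLeafSet S L, g (trim S L)

theorem sum_words_cut_leaf (hx : x ∈ S) (hy : y ∉ S) (m : ℕ) (g : List (Perm α) → ℚ) :
    ∑ L ∈ words A m with (swap x y :: L).prod = T ∧ IsLeafSet S (swap x y :: L),
        g (trim S (swap x y :: L))
      = if T x = y then leafSum (A.erase x) (S.erase x) (bypass T x) m g else 0 := by
  have moves : swap x y x ≠ x := by
    rw [swap_apply_left]
    rintro rfl
    exact hy hx
  simp only [isLeafSet_swap_cons hx hy, trim_cons_of_apply_ne hx moves, List.prod_cons]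
  split_ifs with hTx
  · subst hTx
    refine sum_congr ?_ fun L hL => by
      rw [trim_erase (mem_words_erase.mp (mem_filter.mp hL).1).2]
    ext L
    rw [mem_filter, mem_filter, mem_words_erase, bypass, ← swap_inv x (T x), eq_inv_mul_iff_mul_eq,
      swap_inv]
    tauto
  · refine sum_eq_zero fun L hL => absurd ?_ hTx
    obtain ⟨-, prod_eq, fixes, -⟩ := mem_filter.mp hL
    rw [← prod_eq, Perm.mul_apply, prod_apply_eq_self fixes, swap_apply_left]

theorem leafSum_succ (hS : S ⊆ A) (hA : ∀ z ∈ A, T z ∈ A) (m : ℕ) (g : List (Perm α) → ℚ) :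
    leafSum A S T (m + 1) g
      = ∑ τ ∈ swaps (A \ S), leafSum A S (τ⁻¹ * T) m (fun L => g (τ :: L))
        + ∑ x ∈ S with T x ∉ S, leafSum (A.erase x) (S.erase x) (bypass T x) m g := by
  let F : Perm α → ℚ := fun τ =>
    ∑ L ∈ words A m with (τ :: L).prod = T ∧ IsLeafSet S (τ :: L), g (trim S (τ :: L))
  have adjacent : ∀ τ ∈ swaps S, F τ = 0 := fun τ hτ => by
    obtain ⟨x, hx, y, hy, hxy, rfl⟩ := mem_swaps.mp hτ
    refine sum_eq_zero fun L hL => absurd (mem_filter.mp hL).2.2 ?_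
    exact not_isLeafSet_cons List.mem_cons_self hx hy hxy (by simpa using hxy.symm)
      (by simpa using hxy)
  have inner : ∀ τ ∈ swaps (A \ S), F τ = leafSum A S (τ⁻¹ * T) m fun L => g (τ :: L) :=
    fun τ hτ => by
      have fixes : ∀ s ∈ S, τ s = s := fun s hs =>
        apply_eq_self_of_mem_swaps hτ fun h => (mem_sdiff.mp h).2 hs
      simp only [F, leafSum, List.prod_cons, isLeafSet_cons_of_forall_apply_eq fixes,
        trim_cons_of_forall_apply_eq fixes, eq_inv_mul_iff_mul_eq]
  have leaf : ∀ x ∈ S, ∑ y ∈ A \ S, F (swap x y)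
      = if T x ∉ S then leafSum (A.erase x) (S.erase x) (bypass T x) m g else 0 := fun x hx => by
    rw [sum_congr rfl fun y hy => sum_words_cut_leaf hx (mem_sdiff.mp hy).2 m g, sum_ite_eq]
    exact if_congr (mem_sdiff.trans (and_iff_right (hA x (hS hx)))) rfl rfl
  have split := sum_swaps_union (B := S) (C := A \ S) disjoint_sdiff F
  rw [union_sdiff_of_subset hS, sum_eq_zero adjacent, zero_add, sum_congr rfl inner,
    sum_congr rfl leaf, ← sum_filter] at split
  rw [← split, leafSum, sum_filter, sum_words_succ]
  simp only [F, sum_filter]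

theorem add_mul_descFactorial (m s : ℕ) :
    m.descFactorial s + s * m.descFactorial (s - 1) = (m + 1).descFactorial s := by
  cases s with
  | zero => simp
  | succ t =>
    rw [Nat.succ_descFactorial_succ, Nat.descFactorial_succ, Nat.add_sub_cancel, ← add_mul]
    rcases le_or_gt t m with h | h
    · rw [show m - t + (t + 1) = m + 1 by lia]
    · rw [Nat.descFactorial_of_lt h, mul_zero, mul_zero]

theorem leafSum_zero (g : List (Perm α) → ℚ) :
    leafSum A S T 0 g = Nat.descFactorial 0 #S * orderProbability T S *
      ∑ L ∈ words (A \ S) 0 with L.prod = bypassAll T S, g L := by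
  rcases S.eq_empty_or_nonempty with rfl | hS
  · simp [leafSum, words, orderProbability_empty, bypassAll_empty, IsLeafSet, trim]
  obtain ⟨s, hs⟩ := hS
  rw [Nat.descFactorial_of_lt (card_pos.mpr ⟨s, hs⟩), leafSum, sum_eq_zero fun L hL => ?_]
  · simp
  · obtain ⟨hL, -, leaf⟩ := mem_filter.mp hL
    have := leaf.1 s hs
    simp [mem_singleton.mp hL, moveCount] at this

theorem descFactorial_mul_sum_words_succ (B : Finset α) (m s : ℕ) (f : List (Perm α) → ℚ) :
    m.descFactorial s * ∑ τ ∈ swaps B, ∑ L ∈ words B (m - s), f (τ :: L)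
      = m.descFactorial s * ∑ L ∈ words B (m + 1 - s), f L := by
  rcases le_or_gt s m with h | h
  · rw [Nat.sub_add_comm h, sum_words_succ]
  · rw [Nat.descFactorial_of_lt h, Nat.cast_zero, zero_mul, zero_mul]

theorem leafSum_eq (hS : S ⊆ A) (hT : ∀ z ∉ A, T z = z) (m : ℕ) (g : List (Perm α) → ℚ) :
    leafSum A S T m g = m.descFactorial #S * orderProbability T S *
      ∑ L ∈ words (A \ S) (m - #S) with L.prod = bypassAll T S, g L := by
  induction m generalizing A S T g with
  | zero => rw [leafSum_zero, Nat.zero_sub]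
  | succ m ih =>
    have inner : ∀ τ ∈ swaps (A \ S), leafSum A S (τ⁻¹ * T) m (fun L => g (τ :: L))
        = m.descFactorial #S * orderProbability T S *
          ∑ L ∈ words (A \ S) (m - #S) with (τ :: L).prod = bypassAll T S, g (τ :: L) :=
      fun τ hτ => by
        have fixes : ∀ x ∉ A \ S, τ x = x := fun x hx => apply_eq_self_of_mem_swaps hτ hx
        have fixes_S : ∀ x ∈ S, τ x = x := fun x hx => fixes x fun h => (mem_sdiff.mp h).2 hx
        rw [ih hS fun z hz => by
            rw [Perm.mul_apply, hT z hz, inv_eq_iff_eq, fixes z fun h => hz (mem_sdiff.mp h).1],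
          bypassAll_mul fun x hx => inv_eq_iff_eq.mpr (fixes_S x hx).symm,
          orderProbability_congr (g := T) fun z _ w hw => by
            rw [Perm.mul_apply, inv_eq_iff_eq, fixes_S w hw]]
        exact congrArg _ (sum_congr (filter_congr fun L _ => eq_inv_mul_iff_mul_eq) fun _ _ => rfl)
    have leaf : ∀ x ∈ ({x ∈ S | T x ∉ S} : Finset α),
        leafSum (A.erase x) (S.erase x) (bypass T x) m g
        = m.descFactorial (#S - 1) * orderProbability T (S.erase x) *
          ∑ L ∈ words (A \ S) (m + 1 - #S) with L.prod = bypassAll T S, g L := fun x hx => by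
      obtain ⟨hx, hTx⟩ := mem_filter.mp hx
      rw [ih (erase_subset_erase x hS) (bypass_apply_of_notMem_erase hT), bypassAll_erase hx,
        card_erase_of_mem hx, orderProbability_bypass hTx, ← erase_sdiff_distrib,
        erase_eq_of_notMem fun h => (mem_sdiff.mp h).2 hx,
        show m - (#S - 1) = m + 1 - #S by have := card_pos.mpr ⟨x, hx⟩; lia]
    rw [leafSum_succ hS (apply_mem_of_forall_notMem hT), sum_congr rfl inner, sum_congr rfl leaf,
      ← add_mul_descFactorial, ← sum_mul, ← mul_sum, ← mul_sum, ← card_mul_orderProbability]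
    have recombine := descFactorial_mul_sum_words_succ (A \ S) m #S fun L =>
      if L.prod = bypassAll T S then g L else 0
    simp only [← sum_filter] at recombine
    rw [mul_right_comm, recombine]
    push_cast
    ring

end Leaves

/-! ### Inclusion–exclusion over the points moved once -/

theorem sum_powerset_neg_one_pow_mul_ite {ι : Type*} (A : Finset ι)
    (p : ι → Prop) [DecidablePred p] :
    ∑ S ∈ A.powerset, (-1 : ℚ) ^ #S * (if ∀ s ∈ S, p s then 1 else 0)
      = if ∀ x ∈ A, ¬ p x then 1 else 0 := by
  classical
  have powerset_filter : {S ∈ A.powerset | ∀ s ∈ S, p s} = {x ∈ A | p x}.powerset := by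
    ext S
    simp only [mem_filter, mem_powerset, subset_iff, forall_and]
  have := congrArg (Int.cast : ℤ → ℚ) (sum_powerset_neg_one_pow_card (x := {x ∈ A | p x}))
  simp only [mul_ite, mul_one, mul_zero, ← sum_filter, powerset_filter]
  push_cast [filter_eq_empty_iff] at this
  exact this

section InclusionExclusion

variable {α : Type*} [DecidableEq α] {A S : Finset α} {L : List (Perm α)} {T τ τ' : Perm α}
  {s x : α} {m : ℕ}

theorem eq_of_moveCount_eq_one (h : moveCount x L = 1) (hτ : τ ∈ L) (hτ' : τ' ∈ L)
    (hx : τ x ≠ x) (hx' : τ' x ≠ x) : τ = τ' := by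
  rw [moveCount, List.countP_eq_length_filter, List.length_eq_one_iff] at h
  obtain ⟨σ, hσ⟩ := h
  have only : ∀ τ ∈ L, τ x ≠ x → τ = σ := fun τ hτ hx =>
    List.mem_singleton.mp (hσ ▸ List.mem_filter.mpr ⟨hτ, decide_eq_true hx⟩)
  rw [only τ hτ hx, only τ' hτ' hx']

theorem exists_apply_ne_of_moveCount_ne_zero (h : moveCount x L ≠ 0) : ∃ τ ∈ L, τ x ≠ x := by
  simpa only [Ne, moveCount_eq_zero, not_forall, exists_prop] using h

theorem IsLeafSet.apply_notMem (h : IsLeafSet S L) (hτ : τ ∈ L) (hs : s ∈ S) (hne : τ s ≠ s) :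
    τ s ∉ S := fun mem => hne (h.2 τ hτ s hs (τ s) mem hne (τ.injective.ne hne)).symm

theorem one_le_moveCount (hA : 2 ≤ #A) (trans : IsTransitiveOn A L) (hx : x ∈ A) :
    1 ≤ moveCount x L := by
  by_contra h
  have fixes := moveCount_eq_zero.mp (Nat.lt_one_iff.mp (not_le.mp h))
  have := trans {x} (singleton_subset_iff.mpr hx) (singleton_nonempty x)
    fun τ hτ z hz => by rw [mem_singleton.mp hz, fixes τ hτ, mem_singleton]
  rw [← this, card_singleton] at hA
  lia

variable [Fintype α]

theorem eq_swap_of_mem_swaps (hτ : τ ∈ swaps A) (hx : τ x ≠ x) :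
    x ∈ A ∧ τ x ∈ A ∧ swap x (τ x) = τ := by
  obtain ⟨a, ha, b, hb, -, rfl⟩ := mem_swaps.mp hτ
  rcases eq_or_ne x a with rfl | hxa
  · simp [ha, hb]
  rcases eq_or_ne x b with rfl | hxb
  · simp [ha, hb, swap_comm]
  · exact absurd (swap_apply_of_ne_of_ne hxa hxb) hx

theorem isLeafSet_of_isTransitiveOn (hA : 3 ≤ #A) (hS : S ⊆ A) (hL : L ∈ words A m)
    (trans : IsTransitiveOn A L) (once : ∀ s ∈ S, moveCount s L = 1) : IsLeafSet S L := by
  refine ⟨once, fun τ hτ s hs s' hs' hne hne' => by_contra fun hss' => ?_⟩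
  obtain ⟨-, -, eq_swap⟩ := eq_swap_of_mem_swaps ((mem_words.mp hL).2 τ hτ) hne
  have partner : τ s = s' := by
    by_contra h
    rw [← eq_swap] at hne'
    exact hne' (swap_apply_of_ne_of_ne (Ne.symm hss') (Ne.symm h))
  have invariant : IsInvariant {s, s'} L := fun τ' hτ' => by
    by_cases h : τ' = τ
    · rw [h, ← eq_swap, partner]
      exact swap_apply_mem_iff.mpr (by simp)
    · have fix : τ' s = s := of_not_not fun hs' =>
        h (eq_of_moveCount_eq_one (once s hs) hτ' hτ hs' hne)
      have fix' : τ' s' = s' := of_not_not fun hs'' =>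
        h (eq_of_moveCount_eq_one (once s' hs') hτ' hτ hs'' hne')
      simp [fix, fix']
  have pair_eq := trans {s, s'} (by simp [insert_subset_iff, hS hs, hS hs']) (by simp) invariant
  have := card_le_two (a := s) (b := s')
  rw [pair_eq] at this
  lia

theorem isTransitiveOn_trim (hS : S ⊆ A) (hL : L ∈ words A m) (leaf : IsLeafSet S L)
    (trans : IsTransitiveOn A L) : IsTransitiveOn (A \ S) (trim S L) := by
  intro B hB hne invariant
  have hBS : ∀ z ∈ B, z ∉ S := fun z hz => (mem_sdiff.mp (hB hz)).2
  let attached : Finset α := {s ∈ S | ∃ τ ∈ L, τ s ≠ s ∧ τ s ∈ B}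
  have saturated : B ∪ attached = A := by
    refine trans _ (union_subset (hB.trans sdiff_subset) ((filter_subset _ _).trans hS))
      (hne.mono subset_union_left) fun τ hτ => ?_
    by_cases fixes : ∀ s ∈ S, τ s = s
    · refine fun z hz => mem_union.mpr ((mem_union.mp hz).imp (fun hz => ?_) fun hz => ?_)
      · exact invariant τ (mem_trim.mpr ⟨hτ, fixes⟩) z hz
      · rwa [fixes z (mem_filter.mp hz).1]
    · push Not at fixes
      obtain ⟨s, hs, hne⟩ := fixes
      obtain ⟨-, -, eq_swap⟩ := eq_swap_of_mem_swaps ((mem_words.mp hL).2 τ hτ) hne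
      rw [← eq_swap, swap_apply_mem_iff, mem_union, mem_union, mem_filter, mem_filter,
        or_iff_right fun h => hBS s h hs, and_iff_right hs,
        or_iff_left fun h => leaf.apply_notMem hτ hs hne h.1]
      refine ⟨fun ⟨τ', hτ', hne', mem⟩ => ?_, fun mem => ⟨τ, hτ, hne, mem⟩⟩
      rwa [eq_of_moveCount_eq_one (leaf.1 s hs) hτ hτ' hne hne']
  refine hB.antisymm fun z hz => ?_
  obtain ⟨hzA, hzS⟩ := mem_sdiff.mp hz
  rw [← saturated, mem_union] at hzA
  exact hzA.resolve_right fun h => hzS (mem_filter.mp h).1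

theorem isTransitiveOn_of_trim (hL : L ∈ words A m) (leaf : IsLeafSet S L)
    (trans : IsTransitiveOn (A \ S) (trim S L)) : IsTransitiveOn A L := by
  intro B hB hne invariant
  have neighbour : ∀ s ∈ S, ∃ τ ∈ L, τ s ∈ A \ S ∧ swap s (τ s) = τ := fun s hs => by
    obtain ⟨τ, hτ, hne⟩ := exists_apply_ne_of_moveCount_ne_zero (leaf.1 s hs ▸ one_ne_zero)
    obtain ⟨-, mem, eq_swap⟩ := eq_swap_of_mem_swaps ((mem_words.mp hL).2 τ hτ) hne
    exact ⟨τ, hτ, mem_sdiff.mpr ⟨mem, leaf.apply_notMem hτ hs hne⟩, eq_swap⟩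
  have core : B \ S = A \ S := by
    refine trans _ (sdiff_subset_sdiff hB subset_rfl) ?_ fun τ hτ z hz => ?_
    · obtain ⟨b, hb⟩ := hne
      by_cases hbS : b ∈ S
      · obtain ⟨τ, hτ, mem, -⟩ := neighbour b hbS
        exact ⟨τ b, mem_sdiff.mpr ⟨invariant τ hτ b hb, (mem_sdiff.mp mem).2⟩⟩
      · exact ⟨b, mem_sdiff.mpr ⟨hb, hbS⟩⟩
    · obtain ⟨hτ, fixes⟩ := mem_trim.mp hτ
      obtain ⟨hzB, hzS⟩ := mem_sdiff.mp hz
      refine mem_sdiff.mpr ⟨invariant τ hτ z hzB, fun h => hzS ?_⟩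
      rwa [← τ.injective (fixes _ h)]
  refine hB.antisymm fun z hz => ?_
  by_cases hzS : z ∈ S
  · obtain ⟨τ, hτ, mem, eq_swap⟩ := neighbour z hzS
    rw [← core] at mem
    have := invariant τ hτ _ (mem_sdiff.mp mem).1
    rwa [← eq_swap, swap_apply_left, swap_apply_right] at this
  · exact (mem_sdiff.mp (core ▸ mem_sdiff.mpr ⟨hz, hzS⟩)).1

theorem isTransitiveOn_and_forall_moveCount_eq_one_iff (hA : 3 ≤ #A) (hS : S ⊆ A)
    (hL : L ∈ words A m) : (IsTransitiveOn A L ∧ ∀ s ∈ S, moveCount s L = 1) ↔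
      IsLeafSet S L ∧ IsTransitiveOn (A \ S) (trim S L) := by
  constructor
  · rintro ⟨trans, once⟩
    have leaf := isLeafSet_of_isTransitiveOn hA hS hL trans once
    exact ⟨leaf, isTransitiveOn_trim hS hL leaf trans⟩
  · rintro ⟨leaf, trans⟩
    exact ⟨isTransitiveOn_of_trim hL leaf trans, leaf.1⟩

theorem prod_eq_iff_of_mem_words (hL : L ∈ words A m) (hT : ∀ z ∉ A, T z = z) :
    L.prod = T ↔ ∀ z ∈ A, L.prod z = T z := by
  refine ⟨fun h z _ => by rw [h], fun h => Equiv.ext fun z => ?_⟩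
  by_cases hz : z ∈ A
  · exact h z hz
  · rw [hT z hz]
    exact prod_apply_eq_self fun τ hτ => apply_eq_self_of_mem_swaps ((mem_words.mp hL).2 τ hτ) hz

theorem cast_transitiveCount (hT : ∀ z ∉ A, T z = z) (m : ℕ) : (transitiveCount A T m : ℚ)
    = ∑ L ∈ words A m with L.prod = T, if IsTransitiveOn A L then 1 else 0 := by
  rw [transitiveCount, sum_boole, filter_filter]
  refine congrArg _ (congrArg _ (filter_congr fun L hL => ?_))
  rw [prod_eq_iff_of_mem_words hL hT, IsTransitiveFactorisation]

/-- The number of words of `m` transpositions of elements of `A` with product `T` on `A`, which are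
transitive on `A` and move each point of `A` at least twice. -/
def prunedCount (A : Finset α) (T : Perm α) (m : ℕ) : ℕ :=
  #{L ∈ words A m | IsTransitiveFactorisation A T L ∧ ∀ x ∈ A, 2 ≤ moveCount x L}

theorem card_filter_moveCount_eq_one (hA : 3 ≤ #A) (hT : ∀ z ∉ A, T z = z) (hS : S ⊆ A) (m : ℕ) :
    (#{L ∈ words A m | IsTransitiveFactorisation A T L ∧ ∀ s ∈ S, moveCount s L = 1} : ℚ)
      = m.descFactorial #S * orderProbability T S *
        transitiveCount (A \ S) (bypassAll T S) (m - #S) := by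
  have fixes : ∀ z ∉ A \ S, bypassAll T S z = z := fun z hz => by
    by_cases hzS : z ∈ S
    · exact bypassAll_apply_of_mem hzS
    · exact bypassAll_apply_eq_self (hT z fun h => hz (mem_sdiff.mpr ⟨h, hzS⟩))
  rw [cast_transitiveCount fixes, ← leafSum_eq hS hT, leafSum, sum_boole, filter_filter]
  refine congrArg _ (congrArg _ (filter_congr fun L hL => ?_))
  rw [IsTransitiveFactorisation, ← prod_eq_iff_of_mem_words hL hT, and_assoc,
    isTransitiveOn_and_forall_moveCount_eq_one_iff hA hS hL, and_assoc]

theorem prunedCount_eq_sum (hA : 3 ≤ #A) (hT : ∀ z ∉ A, T z = z) (m : ℕ) :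
    (prunedCount A T m : ℚ) = ∑ S ∈ A.powerset, (-1) ^ #S * (m.descFactorial #S *
      orderProbability T S * transitiveCount (A \ S) (bypassAll T S) (m - #S)) := by
  rw [sum_congr rfl fun S hS => by
    rw [← card_filter_moveCount_eq_one hA hT (mem_powerset.mp hS), ← sum_boole, mul_sum], sum_comm,
    prunedCount, ← sum_boole]
  refine sum_congr rfl fun L _ => ?_
  by_cases h : IsTransitiveFactorisation A T L
  · simp only [h, true_and]
    convert (sum_powerset_neg_one_pow_mul_ite A fun x => moveCount x L = 1).symm using 4 with x hx
    have := one_le_moveCount (by lia) h.2 hx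
    lia
  · simp only [h, false_and, if_false, mul_zero, sum_const_zero]

end InclusionExclusion

section CycleSums

variable {α : Type*} [DecidableEq α] {A S c : Finset α} {T : Perm α} {x y : α}

theorem succ_mul_sum_orderProbability (T : Perm α) (c : Finset α) (hc : ∀ x ∈ c, T x ≠ x) (s : ℕ) :
    (s + 1) * ∑ S ∈ c.powersetCard (s + 1), orderProbability T S
      = ∑ x ∈ c, ∑ S ∈ (c.erase x).powersetCard s with T x ∉ S,
          orderProbability (bypass T x) S := by
  have remove_first : ∀ S ∈ c.powersetCard (s + 1), (s + 1) * orderProbability T S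
      = ∑ x ∈ S with T x ∉ S, orderProbability (bypass T x) (S.erase x) := fun S hS => by
    rw [sum_congr rfl fun x hx => orderProbability_bypass (mem_filter.mp hx).2,
      ← card_mul_orderProbability, (mem_powersetCard.mp hS).2]
    push_cast
    rfl
  rw [mul_sum, sum_congr rfl remove_first, sum_comm' (t' := c)
    (s' := fun x => {S ∈ c.powersetCard (s + 1) | x ∈ S ∧ T x ∉ S}) fun S x => ?_]
  · refine sum_congr rfl fun x hx => sum_bij' (fun S _ => S.erase x) (fun S _ => insert x S)
      (fun S hS => ?_) (fun S hS => ?_) (fun S hS => ?_) (fun S hS => ?_) fun _ _ => rfl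
    · obtain ⟨hS, hxS, hTx⟩ := mem_filter.mp hS
      obtain ⟨hSc, card_S⟩ := mem_powersetCard.mp hS
      refine mem_filter.mpr ⟨mem_powersetCard.mpr ⟨erase_subset_erase x hSc, ?_⟩,
        fun h => hTx (mem_of_mem_erase h)⟩
      rw [card_erase_of_mem hxS, card_S, Nat.add_sub_cancel]
    · obtain ⟨hS, hTx⟩ := mem_filter.mp hS
      obtain ⟨hSc, card_S⟩ := mem_powersetCard.mp hS
      have hxS : x ∉ S := fun h => notMem_erase x c (hSc h)
      refine mem_filter.mpr ⟨mem_powersetCard.mpr ⟨insert_subset hx (hSc.trans (erase_subset x c)),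
        by rw [card_insert_of_notMem hxS, card_S]⟩, mem_insert_self x S, ?_⟩
      rw [mem_insert, not_or]
      exact ⟨hc x hx, hTx⟩
    · exact insert_erase (mem_filter.mp hS).2.1
    · refine erase_insert fun h => ?_
      exact notMem_erase x c ((mem_powersetCard.mp (mem_filter.mp hS).1).1 h)
  · simp only [mem_filter, mem_powersetCard]
    exact ⟨fun ⟨h, h'⟩ => ⟨⟨h, h'⟩, h.1 h'.1⟩, fun h => h.1⟩

theorem sum_orderProbability_apply_notMem (hc : ∀ z ∈ c, T z ∈ c) (s : ℕ) (y : α) :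
    ∑ S ∈ c.powersetCard s with T y ∉ S, orderProbability T S
      = ∑ S ∈ c.powersetCard s with y ∉ S, orderProbability T S := by
  have rotate : c.map T.toEmbedding = c :=
    eq_of_subset_of_card_le (fun _ hz => by
      obtain ⟨w, hw, rfl⟩ := mem_map.mp hz
      exact hc w hw) (card_map _).ge
  conv_lhs => rw [← rotate, powersetCard_map, sum_filter, sum_map]
  rw [sum_filter]
  refine sum_congr rfl fun S _ => ?_
  have image : orderProbability T (S.map T.toEmbedding) = orderProbability T S := by
    rw [map_eq_image]
    exact orderProbability_image T.injective fun _ _ => rfl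
  simp [image]

variable [Fintype α]

theorem card_mul_sum_orderProbability_notMem (hc : ∀ z ∈ c, orbit T z = c) (hy : y ∈ c) (s : ℕ) :
    #c * ∑ S ∈ c.powersetCard s with y ∉ S, orderProbability T S
      = (#c - s) * ∑ S ∈ c.powersetCard s, orderProbability T S := by
  have invariant : ∀ z ∈ c, T z ∈ c := fun z hz => by
    have := apply_mem_orbit.mpr (self_mem_orbit T z)
    rwa [hc z hz] at this
  have constant : ∀ z ∈ c, ∑ S ∈ c.powersetCard s with z ∉ S, orderProbability T S
      = ∑ S ∈ c.powersetCard s with y ∉ S, orderProbability T S := fun z hz => by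
    rw [← hc y hy] at hz
    obtain ⟨n, rfl⟩ := mem_orbit_iff_iterate.mp hz
    induction n with
    | zero => rfl
    | succ n ih =>
      rw [Function.iterate_succ_apply', sum_orderProbability_apply_notMem invariant,
        ih (mem_orbit_iff_iterate.mpr ⟨n, rfl⟩)]
  rw [← nsmul_eq_mul, ← sum_const, ← sum_congr rfl constant]
  simp only [sum_filter]
  rw [sum_comm, mul_sum]
  refine sum_congr rfl fun S hS => ?_
  obtain ⟨hSc, rfl⟩ := mem_powersetCard.mp hS
  rw [← sum_filter, sum_const, nsmul_eq_mul, filter_notMem_eq_sdiff, cast_card_sdiff hSc]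

theorem card_sub_mul_sum_orderProbability (hne : c.Nonempty) (hc : ∀ z ∈ c, orbit T z = c) {s : ℕ}
    (hs : s ≤ #c) :
    (#c - s) * (s.factorial * ∑ S ∈ c.powersetCard s, orderProbability T S)
      = (#c * (#c - s) ^ s : ℚ) := by
  induction s generalizing c T with
  | zero => simp [orderProbability_empty]
  | succ s ih =>
    rcases (show 1 ≤ #c from hne.card_pos).eq_or_lt with one | two
    · obtain rfl : s = 0 := by lia
      simp [← one]
    have moves : ∀ x ∈ c, T x ≠ x := fun x hx h => by
      have := hc x hx
      rw [orbit_eq_singleton h] at this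
      rw [← this, card_singleton] at two
      lia
    have inner : ∀ x ∈ c, s.factorial * ∑ S ∈ (c.erase x).powersetCard s with T x ∉ S,
        orderProbability (bypass T x) S = (#c - (s + 1) : ℚ) ^ s := fun x hx => by
      have cycle : ∀ z ∈ c.erase x, orbit (bypass T x) z = c.erase x := fun z hz => by
        rw [orbit_bypass (ne_of_mem_erase hz), hc z (mem_of_mem_erase hz)]
      have mem : T x ∈ c.erase x := mem_erase.mpr
        ⟨moves x hx, hc x hx ▸ apply_mem_orbit.mpr (self_mem_orbit T x)⟩
      have rotation := card_mul_sum_orderProbability_notMem cycle mem s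
      have shorter := ih ⟨_, mem⟩ cycle (by rw [card_erase_of_mem hx]; lia)
      have pos : ((#c : ℚ) - 1) ≠ 0 := sub_ne_zero.mpr (by exact_mod_cast two.ne')
      rw [cast_card_erase_of_mem hx] at rotation shorter
      refine mul_left_cancel₀ pos ?_
      rw [← sub_sub, sub_right_comm] at *
      linear_combination (s.factorial : ℚ) * rotation + shorter
    have recursion := succ_mul_sum_orderProbability T c moves s
    have total := sum_congr rfl inner
    rw [← mul_sum, ← recursion, sum_const, nsmul_eq_mul] at total
    rw [Nat.factorial_succ]
    push_cast at *
    linear_combination (#c - (s + 1) : ℚ) * total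

end CycleSums

section CycleContribution

variable {α : Type*} [DecidableEq α]

/-- The factor which a cycle `c` of `T` contributes to the inclusion–exclusion over the sets `S` of
points moved only once, with the length of the cycle left over weighted by its `j`-th power. -/
def cycleContribution (T : Perm α) (c : Finset α) (j : ℕ) : ℚ :=
  ∑ S ∈ c.powerset, (-1) ^ #S * orderProbability T S * (hurwitzWeight #(c \ S) * #(c \ S) ^ j)

variable [Fintype α] {T : Perm α} {c : Finset α}

theorem sum_orderProbability_mul_hurwitzWeight (hne : c.Nonempty) (hc : ∀ z ∈ c, orbit T z = c)
    {s : ℕ} (hs : s ≤ #c) :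
    (∑ S ∈ c.powersetCard s, orderProbability T S) * hurwitzWeight (#c - s)
      = #c / (#c).factorial * ((#c).choose s * (#c - s : ℚ) ^ #c) := by
  have weighted_sum := card_sub_mul_sum_orderProbability hne hc hs
  rw [Nat.cast_choose ℚ hs, hurwitzWeight, expCoeff, ← Nat.cast_sub hs] at *
  have factorial_ne_zero : ∀ n : ℕ, (n.factorial : ℚ) ≠ 0 := fun n => by
    exact_mod_cast n.factorial_ne_zero
  have hn := factorial_ne_zero #c
  have hs' := factorial_ne_zero s
  have hr := factorial_ne_zero (#c - s)
  have pow_split (r : ℚ) : r ^ #c = r ^ s * r ^ (#c - s) := by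
    rw [← pow_add, Nat.add_sub_cancel' hs]
  rw [pow_split]
  field_simp
  linear_combination ((#c - s : ℕ) : ℚ) ^ (#c - s) * weighted_sum

theorem cycleContribution_eq (hne : c.Nonempty) (hc : ∀ z ∈ c, orbit T z = c) (j : ℕ) :
    cycleContribution T c j
      = #c / (#c).factorial * alternatingSum (fun _ => (1 : ℚ)) 0 c (#c + j) := by
  rw [alternatingSum, sum_powerset_comm c fun J S => (-1 : ℚ) ^ #S * (0 + ∑ _ ∈ J, 1) ^ (#c + j),
    cycleContribution, sum_powerset, sum_powerset, mul_sum]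
  refine sum_congr rfl fun s hs => ?_
  have hs := Nat.lt_succ_iff.mp (mem_range.mp hs)
  have left : ∀ S ∈ c.powersetCard s,
      (-1) ^ #S * orderProbability T S * (hurwitzWeight #(c \ S) * #(c \ S) ^ j)
        = orderProbability T S * (hurwitzWeight (#c - s) * ((-1) ^ s * (#c - s : ℚ) ^ j)) :=
    fun S hS => by
      obtain ⟨hSc, rfl⟩ := mem_powersetCard.mp hS
      rw [cast_card_sdiff hSc, card_sdiff_of_subset hSc]
      ring
  have right : ∀ S ∈ c.powersetCard s, (-1) ^ #S * (0 + ∑ _ ∈ c \ S, 1) ^ (#c + j)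
      = (-1) ^ s * (#c - s : ℚ) ^ (#c + j) := fun S hS => by
    obtain ⟨hSc, rfl⟩ := mem_powersetCard.mp hS
    rw [zero_add, sum_const, nsmul_one, cast_card_sdiff hSc]
  rw [sum_congr rfl left, sum_congr rfl right, sum_const, card_powersetCard, nsmul_eq_mul,
    ← sum_mul, ← mul_assoc, sum_orderProbability_mul_hurwitzWeight hne hc hs]
  ring

theorem cycleContribution_zero (hne : c.Nonempty) (hc : ∀ z ∈ c, orbit T z = c) :
    cycleContribution T c 0 = #c := by
  have : ((#c).factorial : ℚ) ≠ 0 := by exact_mod_cast (#c).factorial_ne_zero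
  rw [cycleContribution_eq hne hc, add_zero, alternatingSum_card]
  simp [this]

theorem cycleContribution_one (hne : c.Nonempty) (hc : ∀ z ∈ c, orbit T z = c) :
    cycleContribution T c 1 = #c * (#c * (#c + 1) / 2) := by
  have : ((#c).factorial : ℚ) ≠ 0 := by exact_mod_cast (#c).factorial_ne_zero
  have moment := two_mul_alternatingSum_card_succ (fun _ => (1 : ℚ)) 0 c
  rw [Nat.factorial_succ] at moment
  rw [cycleContribution_eq hne hc]
  simp only [Nat.cast_mul, Nat.cast_add, Nat.cast_one, prod_const_one, mul_one, mul_zero, sum_const,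
    nsmul_eq_mul, zero_add] at moment
  field_simp
  linear_combination moment

end CycleContribution

section PowersetProducts

variable {α ι R : Type*} [DecidableEq α] [CommSemiring R]

theorem sum_powerset_union {A B : Finset α} (h : Disjoint A B) (f : Finset α → Finset α → R) :
    ∑ S ∈ (A ∪ B).powerset, f (A ∩ S) (B ∩ S) = ∑ S ∈ A.powerset, ∑ S' ∈ B.powerset, f S S' := by
  rw [← sum_product']
  refine sum_bij' (fun S _ => (A ∩ S, B ∩ S)) (fun p _ => p.1 ∪ p.2) (fun S _ => ?_)
    (fun p hp => ?_) (fun S hS => ?_) (fun p hp => ?_) fun S _ => rfl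
  · simp
  · have := mem_product.mp hp
    exact mem_powerset.mpr
      (union_subset_union (mem_powerset.mp this.1) (mem_powerset.mp this.2))
  · rw [← union_inter_distrib_right, inter_eq_right, ← mem_powerset]
    exact hS
  · obtain ⟨h₁, h₂⟩ := mem_product.mp hp
    rw [mem_powerset] at h₁ h₂
    have left := disjoint_iff_inter_eq_empty.mp (h.mono_right h₂)
    have right := disjoint_iff_inter_eq_empty.mp (h.symm.mono_right h₁)
    rw [inter_union_distrib_left, inter_union_distrib_left, left, right, union_empty, empty_union,
      inter_eq_right.mpr h₁, inter_eq_right.mpr h₂]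

theorem sum_powerset_biUnion_prod {I : Finset ι} {t : ι → Finset α}
    (ht : (I : Set ι).PairwiseDisjoint t) (g : ι → Finset α → R) :
    ∑ S ∈ (I.biUnion t).powerset, ∏ i ∈ I, g i (t i ∩ S)
      = ∏ i ∈ I, ∑ S ∈ (t i).powerset, g i S := by
  classical
  induction I using Finset.induction_on with
  | empty => simp
  | insert i I hi ih =>
    rw [coe_insert, Set.pairwiseDisjoint_insert_of_notMem (mem_coe.not.mpr hi)] at ht
    have restrict : ∀ j ∈ I, ∀ S, t j ∩ (I.biUnion t ∩ S) = t j ∩ S := fun j hj S => by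
      rw [← inter_assoc, inter_eq_left.mpr (subset_biUnion_of_mem t hj)]
    have union := sum_powerset_union ((disjoint_biUnion_right _ _ _).mpr ht.2) fun S S' =>
      g i S * ∏ j ∈ I, g j (t j ∩ S')
    simp only [prod_insert hi, biUnion_insert]
    rw [← ih ht.1, sum_mul_sum, ← union]
    exact sum_congr rfl fun S _ => congrArg _ (prod_congr rfl fun j hj => by rw [restrict j hj])

end PowersetProducts

section Evaluation

variable {α : Type*} [DecidableEq α] {A S : Finset α} {T : Perm α} {m : ℕ}

theorem orderProbability_biUnion {ι : Type*} {f : α → α} {I : Finset ι} {t : ι → Finset α}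
    (ht : (I : Set ι).PairwiseDisjoint t)
    (hf : ∀ i ∈ I, ∀ x ∈ t i, ∀ j ∈ I, f x ∈ t j → j = i) :
    orderProbability f (I.biUnion t) = ∏ i ∈ I, orderProbability f (t i) := by
  classical
  induction I using Finset.induction_on with
  | empty => simp [orderProbability_empty]
  | insert i I hi ih =>
    rw [coe_insert, Set.pairwiseDisjoint_insert_of_notMem (mem_coe.not.mpr hi)] at ht
    have ne : ∀ j ∈ I, j ≠ i := fun j hj h => hi (h ▸ hj)
    rw [biUnion_insert, prod_insert hi, ← ih ht.1 fun j hj x hx k hk => hf j (mem_insert_of_mem hj)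
      x hx k (mem_insert_of_mem hk)]
    refine orderProbability_union ((disjoint_biUnion_right _ _ _).mpr ht.2) (fun x hx h => ?_)
      fun x hx h => ?_
    · obtain ⟨j, hj, hx'⟩ := mem_biUnion.mp h
      exact ne j hj (hf i (mem_insert_self i I) x hx j (mem_insert_of_mem hj) hx')
    · obtain ⟨j, hj, hx⟩ := mem_biUnion.mp hx
      exact ne j hj (hf j (mem_insert_of_mem hj) x hx i (mem_insert_self i I) h).symm

variable [Fintype α]

theorem neg_one_pow_card_mul_orderProbability (hA : ∀ z ∈ A, T z ∈ A) (hS : S ⊆ A) :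
    (-1) ^ #S * orderProbability T S
      = ∏ c ∈ cycles A T, (-1) ^ #(c ∩ S) * orderProbability T (c ∩ S) := by
  have disjoint : (cycles A T : Set (Finset α)).PairwiseDisjoint (· ∩ S) :=
    pairwiseDisjoint_cycles.mono fun _ => inter_subset_left
  have union : (cycles A T).biUnion (· ∩ S) = S := by
    have := biUnion_inter (cycles A T) id S
    rw [biUnion_cycles hA, inter_eq_right.mpr hS] at this
    exact this.symm
  rw [prod_mul_distrib, prod_pow_eq_pow_sum, ← card_biUnion disjoint, ← orderProbability_biUnion
    disjoint, union]
  intro c hc x hx d hd hTx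
  rw [← orbit_eq_of_mem_cycles hd (mem_inter.mp hTx).1,
    orbit_eq_of_mem_cycles hc (apply_mem_of_mem_cycles hc x (mem_inter.mp hx).1)]

theorem cycles_bypassAll (hA : ∀ z ∈ A, T z ∈ A) (hS : ∀ c ∈ cycles A T, ¬ c ⊆ S) :
    cycles (A \ S) (bypassAll T S) = (cycles A T).image (· \ S) := by
  ext d
  rw [cycles, mem_image, mem_image]
  constructor
  · rintro ⟨z, hz, rfl⟩
    obtain ⟨hzA, hzS⟩ := mem_sdiff.mp hz
    exact ⟨orbit T z, orbit_mem_cycles hzA, (orbit_bypassAll hzS).symm⟩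
  · rintro ⟨c, hc, rfl⟩
    obtain ⟨z, hz, hzS⟩ := not_subset.mp (hS c hc)
    refine ⟨z, mem_sdiff.mpr ⟨subset_of_mem_cycles hA hc hz, hzS⟩, ?_⟩
    rw [orbit_bypassAll hzS, orbit_eq_of_mem_cycles hc hz]

theorem injOn_sdiff_cycles (hS : ∀ c ∈ cycles A T, ¬ c ⊆ S) :
    Set.InjOn (· \ S) (cycles A T : Set (Finset α)) := fun c hc d hd hcd => by
  obtain ⟨z, hz, hzS⟩ := not_subset.mp (hS c hc)
  have hzd : z ∈ d \ S := by
    have : z ∈ c \ S := mem_sdiff.mpr ⟨hz, hzS⟩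
    exact (show c \ S = d \ S from hcd) ▸ this
  rw [← orbit_eq_of_mem_cycles hc hz, orbit_eq_of_mem_cycles hd (mem_sdiff.mp hzd).1]

theorem transitiveCount_bypassAll (hA : ∀ z ∈ A, T z ∈ A) (hne : (A \ S).Nonempty)
    (hS : ∀ c ∈ cycles A T, ¬ c ⊆ S) (hm : m + 2 = #(A \ S) + #(cycles A T)) :
    (transitiveCount (A \ S) (bypassAll T S) m : ℚ) = m.factorial *
      (#(A \ S) ^ (#(cycles A T) - 3 : ℤ) * ∏ c ∈ cycles A T, hurwitzWeight #(c \ S)) := by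
  have invariant : ∀ z ∈ A \ S, bypassAll T S z ∈ A \ S := fun z hz => by
    obtain ⟨hzA, hzS⟩ := mem_sdiff.mp hz
    have := apply_mem_orbit.mpr (self_mem_orbit (bypassAll T S) z)
    rw [orbit_bypassAll hzS] at this
    exact sdiff_subset_sdiff (orbit_subset hA hzA) subset_rfl this
  have card_cycles : #(cycles (A \ S) (bypassAll T S)) = #(cycles A T) := by
    rw [cycles_bypassAll hA hS, card_image_of_injOn (injOn_sdiff_cycles hS)]
  rw [transitiveCount_eq hne invariant (card_cycles ▸ hm), hurwitzNumber_map, card_cycles,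
    ← Nat.cast_sum, sum_card_cycles invariant, cycles_bypassAll hA hS,
    prod_image (injOn_sdiff_cycles hS)]

theorem prunedCount_eq_sum_hurwitzWeight (hA : 3 ≤ #A) (hT : ∀ z ∉ A, T z = z)
    (hm : m + 2 = #A + #(cycles A T)) :
    (prunedCount A T m : ℚ) = m.factorial * ∑ S ∈ A.powerset, (-1) ^ #S * orderProbability T S *
      (#(A \ S) ^ (#(cycles A T) - 3 : ℤ) * ∏ c ∈ cycles A T, hurwitzWeight #(c \ S)) := by
  have invariant := apply_mem_of_forall_notMem hT
  have hne : A.Nonempty := card_pos.mp (by lia)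
  rw [prunedCount_eq_sum hA hT, mul_sum]
  refine sum_congr rfl fun S hS => ?_
  have card_sdiff := card_sdiff_add_card_eq_card (mem_powerset.mp hS)
  by_cases hS : ∀ c ∈ cycles A T, ¬ c ⊆ S
  · obtain ⟨x, hx⟩ := hne
    have hne' : (A \ S).Nonempty := sdiff_nonempty.mpr fun h =>
      hS _ (orbit_mem_cycles hx) ((orbit_subset invariant hx).trans h)
    have cycles_pos := card_cycles_pos (T := T) ⟨x, hx⟩
    have sdiff_pos := hne'.card_pos
    have le : #S ≤ m := by lia
    rw [transitiveCount_bypassAll invariant hne' hS (by lia), ← Nat.factorial_mul_descFactorial le]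
    push_cast
    ring
  · push Not at hS
    obtain ⟨c, hc, hcS⟩ := hS
    rw [orderProbability_eq_zero (nonempty_of_mem_cycles hc) (apply_mem_of_mem_cycles hc) hcS]
    ring

theorem sum_mul_prod_hurwitzWeight (hA : ∀ z ∈ A, T z ∈ A) (j : Finset α → ℕ) :
    ∑ S ∈ A.powerset, (-1) ^ #S * orderProbability T S *
        ∏ c ∈ cycles A T, (hurwitzWeight #(c \ S) * #(c \ S) ^ j c)
      = ∏ c ∈ cycles A T, cycleContribution T c (j c) := by
  have product := sum_powerset_biUnion_prod (pairwiseDisjoint_cycles (A := A) (T := T)) fun c S =>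
    (-1) ^ #S * orderProbability T S * (hurwitzWeight #(c \ S) * #(c \ S) ^ j c)
  rw [biUnion_cycles hA] at product
  simp only [id, sdiff_inter_self_left] at product
  simp only [cycleContribution, ← product]
  refine sum_congr rfl fun S hS => ?_
  rw [neg_one_pow_card_mul_orderProbability hA (mem_powerset.mp hS), ← prod_mul_distrib]

theorem sum_card_sdiff_cycles (hA : ∀ z ∈ A, T z ∈ A) (S : Finset α) :
    ∑ c ∈ cycles A T, #(c \ S) = #(A \ S) := by
  simp only [← filter_notMem_eq_sdiff, card_filter, sum_cycles hA]

theorem prod_cycleContribution {d : Finset α} (hd : d ∈ cycles A T) :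
    ∏ c ∈ cycles A T, cycleContribution T c (if d = c then 1 else 0)
      = (∏ c ∈ cycles A T, (#c : ℚ)) * (#d * (#d + 1) / 2) := by
  have contribution : ∀ c ∈ cycles A T, cycleContribution T c (if d = c then 1 else 0)
      = #c * (#c * (#c + 1) / 2 : ℚ) ^ (if d = c then 1 else 0) := fun c hc => by
    have hne := nonempty_of_mem_cycles hc
    have orbit_eq : ∀ z ∈ c, orbit T z = c := fun z => orbit_eq_of_mem_cycles hc
    split_ifs
    · rw [cycleContribution_one hne orbit_eq, pow_one]
    · rw [cycleContribution_zero hne orbit_eq, pow_zero, mul_one]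
  rw [prod_congr rfl contribution, prod_mul_distrib, prod_pow_boole, if_pos hd]

theorem prunedCount_of_card_cycles_eq_four (hT : ∀ z ∉ A, T z = z) (four : #(cycles A T) = 4) :
    (prunedCount A T (#A + 2) : ℚ) = (#A + 2).factorial *
      ((∏ c ∈ cycles A T, (#c : ℚ)) * ∑ c ∈ cycles A T, (#c * (#c + 1) / 2 : ℚ)) := by
  have invariant := apply_mem_of_forall_notMem hT
  have card_A : #(cycles A T) ≤ #A := card_image_le
  have mark_cycle (S : Finset α) :
      #(A \ S) ^ ((4 : ℕ) - 3 : ℤ) * ∏ c ∈ cycles A T, hurwitzWeight #(c \ S)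
        = ∑ d ∈ cycles A T,
            ∏ c ∈ cycles A T, hurwitzWeight #(c \ S) * #(c \ S) ^ (if d = c then 1 else 0) := by
    have marked : ∀ d ∈ cycles A T,
        ∏ c ∈ cycles A T, hurwitzWeight #(c \ S) * #(c \ S) ^ (if d = c then 1 else 0)
          = (∏ c ∈ cycles A T, hurwitzWeight #(c \ S)) * #(d \ S) := fun d hd => by
      rw [prod_mul_distrib, prod_pow_boole, if_pos hd]
    rw [sum_congr rfl marked, ← mul_sum, ← Nat.cast_sum, sum_card_sdiff_cycles invariant, mul_comm]
    norm_num
  rw [prunedCount_eq_sum_hurwitzWeight (by lia) hT (by lia), four]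
  simp only [mark_cycle, mul_sum]
  rw [sum_comm]
  simp only [← mul_sum, sum_mul_prod_hurwitzWeight invariant]
  rw [sum_congr rfl fun d hd => prod_cycleContribution hd, ← mul_sum]

end Evaluation

/-! ### Tuples of transpositions and cycle types -/

section Tuples

variable {α : Type*} {m : ℕ} {σ : Fin m → Perm α}

theorem isTransitiveOn_univ_ofFn [Fintype α] :
    IsTransitiveOn univ (List.ofFn σ)
      ↔ ∀ x y : α, ∃ g ∈ Subgroup.closure (Set.range σ), g x = y := by
  classical
  refine ⟨fun trans x y => ?_, fun trans B _ ⟨b, hb⟩ hB => ?_⟩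
  · have reachable := trans {z | ∃ g ∈ Subgroup.closure (Set.range σ), g x = z} (subset_univ _)
      ⟨x, (mem_filter_univ x).mpr ⟨1, one_mem _, rfl⟩⟩ fun τ hτ z hz => by
        rw [mem_filter_univ] at hz ⊢
        obtain ⟨g, hg, rfl⟩ := hz
        exact ⟨τ * g, mul_mem (Subgroup.subset_closure (List.mem_ofFn.mp hτ)) hg, rfl⟩
    exact (mem_filter_univ y).mp (by rw [reachable]; exact mem_univ y)
  · have mem_iff : ∀ g ∈ Subgroup.closure (Set.range σ), ∀ z, g z ∈ B ↔ z ∈ B := fun g hg => by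
      induction hg using Subgroup.closure_induction with
      | mem τ hτ => exact fun z => apply_mem_iff (hB τ (List.mem_ofFn.mpr hτ))
      | one => exact fun z => Iff.rfl
      | mul g h _ _ hg hh => exact fun z => by rw [Perm.mul_apply, hg, hh]
      | inv g _ hg => exact fun z => by rw [← hg, ← Perm.mul_apply, mul_inv_cancel,
        Perm.one_apply]
    refine eq_univ_of_forall fun y => ?_
    obtain ⟨g, hg, rfl⟩ := trans b y
    exact (mem_iff g hg b).mpr hb

variable [DecidableEq α]

theorem moveCount_ofFn (x : α) : moveCount x (List.ofFn σ) = Nat.card {i // σ i x ≠ x} := by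
  rw [Nat.card_eq_fintype_card, Fintype.card_subtype, card_filter]
  induction m with
  | zero => simp [moveCount]
  | succ m ih => rw [List.ofFn_succ, moveCount_cons, ih, Fin.sum_univ_succ, add_comm]

variable [Fintype α]

theorem mem_swaps_univ {τ : Perm α} : τ ∈ swaps univ ↔ τ.IsSwap := by
  rw [mem_swaps]
  exact ⟨fun ⟨x, _, y, _, hxy, h⟩ => ⟨x, y, hxy, h.symm⟩,
    fun ⟨x, y, hxy, h⟩ => ⟨x, mem_univ x, y, mem_univ y, hxy, h.symm⟩⟩

theorem ofFn_mem_words_univ : List.ofFn σ ∈ words univ m ↔ ∀ i, (σ i).IsSwap := by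
  simp [mem_words, mem_swaps_univ]

theorem prunedCount_univ (T : Perm α) (m : ℕ) :
    prunedCount univ T m = Nat.card {σ : Fin m → Perm α // (∀ i, (σ i).IsSwap) ∧
      (List.ofFn σ).prod = T ∧ (∀ x y : α, ∃ g ∈ Subgroup.closure (Set.range σ), g x = y) ∧
        ∀ x : α, 2 ≤ Nat.card {i // σ i x ≠ x}} := by
  have mem_iff (σ : Fin m → Perm α) : List.ofFn σ ∈ ({L ∈ words univ m |
        IsTransitiveFactorisation univ T L ∧ ∀ x ∈ univ, 2 ≤ moveCount x L} : Finset _) ↔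
      (∀ i, (σ i).IsSwap) ∧ (List.ofFn σ).prod = T ∧
        (∀ x y : α, ∃ g ∈ Subgroup.closure (Set.range σ), g x = y) ∧
          ∀ x : α, 2 ≤ Nat.card {i // σ i x ≠ x} := by
    simp only [mem_filter, ofFn_mem_words_univ, IsTransitiveFactorisation,
      isTransitiveOn_univ_ofFn, moveCount_ofFn, mem_univ, true_imp_iff, Equiv.ext_iff, and_assoc]
  rw [prunedCount, ← Nat.card_eq_finsetCard]
  refine (Nat.card_eq_of_bijective (fun σ => ⟨List.ofFn σ.1, (mem_iff σ.1).mpr σ.2⟩)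
    ⟨fun σ σ' h => Subtype.ext (List.ofFn_injective (Subtype.ext_iff.mp h)), ?_⟩).symm
  rintro ⟨L, hL⟩
  obtain ⟨rfl, -⟩ := mem_words.mp (mem_filter.mp hL).1
  exact ⟨⟨L.get, (mem_iff L.get).mp (by rwa [List.ofFn_get])⟩, Subtype.ext (List.ofFn_get L)⟩

end Tuples

section CycleType

variable {α : Type*} [DecidableEq α] [Fintype α] {T : Perm α}

theorem eq_of_filter_two_le_eq {M N : Multiset ℕ} (hM : ∀ n ∈ M, 1 ≤ n) (hN : ∀ n ∈ N, 1 ≤ n)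
    (sum_eq : M.sum = N.sum) (filter_eq : M.filter (2 ≤ ·) = N.filter (2 ≤ ·)) : M = N := by
  have split {M : Multiset ℕ} (hM : ∀ n ∈ M, 1 ≤ n) : ∃ k,
      M = M.filter (2 ≤ ·) + Multiset.replicate k 1 := by
    have eq_replicate : M.filter (¬ 2 ≤ ·) = Multiset.replicate _ 1 :=
      Multiset.eq_replicate_card.mpr fun n hn => by
        obtain ⟨hn, hn'⟩ := Multiset.mem_filter.mp hn
        have := hM n hn
        lia
    exact ⟨_, by rw [← eq_replicate, Multiset.filter_add_not]⟩
  obtain ⟨k, hk⟩ := split hM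
  obtain ⟨l, hl⟩ := split hN
  have sum_M := congrArg Multiset.sum hk
  have sum_N := congrArg Multiset.sum hl
  rw [Multiset.sum_add, Multiset.sum_replicate, smul_eq_mul, mul_one] at sum_M sum_N
  rw [hk, hl, filter_eq]
  rw [filter_eq] at sum_M
  congr
  lia

theorem support_cycleOf_eq_orbit {x : α} (hx : x ∈ T.support) :
    (T.cycleOf x).support = orbit T x := by
  ext y
  rw [mem_support_cycleOf_iff, mem_orbit, and_iff_left hx]

theorem two_le_card_orbit {x : α} : 2 ≤ #(orbit T x) ↔ x ∈ T.support := by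
  rw [mem_support]
  refine ⟨fun h hx => ?_, fun hx => one_lt_card.mpr
    ⟨T x, apply_mem_orbit.mpr (self_mem_orbit T x), x, self_mem_orbit T x, hx⟩⟩
  rw [orbit_eq_singleton hx, card_singleton] at h
  lia

theorem filter_two_le_card_cycles :
    {c ∈ cycles univ T | 2 ≤ #c} = T.cycleFactorsFinset.image support := by
  ext c
  rw [mem_filter, cycles, mem_image, mem_image]
  constructor
  · rintro ⟨⟨x, -, rfl⟩, hx⟩
    rw [two_le_card_orbit] at hx
    exact ⟨T.cycleOf x, cycleOf_mem_cycleFactorsFinset_iff.mpr hx, support_cycleOf_eq_orbit hx⟩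
  · rintro ⟨g, hg, rfl⟩
    obtain ⟨x, hx⟩ := (mem_cycleFactorsFinset_iff.mp hg).1.nonempty_support
    obtain rfl := cycle_is_cycleOf hx hg
    rw [cycleOf_mem_cycleFactorsFinset_iff] at hg
    rw [support_cycleOf_eq_orbit hg, two_le_card_orbit]
    exact ⟨⟨x, mem_univ x, rfl⟩, hg⟩

theorem filter_two_le_map_card_cycles :
    ((cycles univ T).val.map card).filter (2 ≤ ·) = T.cycleType := by
  have injOn : Set.InjOn support (T.cycleFactorsFinset : Set (Perm α)) := fun g hg h hh heq => by
    obtain ⟨x, hx⟩ := (mem_cycleFactorsFinset_iff.mp hg).1.nonempty_support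
    rw [cycle_is_cycleOf hx hg, cycle_is_cycleOf (heq ▸ hx) hh]
  rw [cycleType_def, Multiset.filter_map, ← Multiset.map_map, ← image_val_of_injOn injOn,
    ← filter_two_le_card_cycles, filter_val]
  rfl

theorem map_card_cycles {N : Multiset ℕ} (hN : ∀ n ∈ N, 1 ≤ n) (hsum : N.sum = Fintype.card α)
    (hT : T.cycleType = N.filter (2 ≤ ·)) : (cycles univ T).val.map card = N := by
  refine eq_of_filter_two_le_eq (fun n hn => ?_) hN ?_ (filter_two_le_map_card_cycles.trans hT)
  · obtain ⟨c, hc, rfl⟩ := Multiset.mem_map.mp hn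
    exact card_pos.mpr (nonempty_of_mem_cycles hc)
  · rw [hsum, ← card_univ, card_eq_sum_ones, ← sum_cycles fun z _ => mem_univ (T z)]
    simp only [sum_const, smul_eq_mul, mul_one]
    rfl

theorem prunedCount_univ_of_cycleType_eq {N : Multiset ℕ} (hN : ∀ n ∈ N, 1 ≤ n)
    (four : N.card = 4) (hsum : N.sum = Fintype.card α) (hT : T.cycleType = N.filter (2 ≤ ·)) :
    (prunedCount univ T (N.sum + 2) : ℚ) = (N.sum + 2).factorial *
      ((N.map Nat.cast).prod * (N.map fun n : ℕ => (n * (n + 1) / 2 : ℚ)).sum) := by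
  have sizes := map_card_cycles hN hsum hT
  have card_cycles : #(cycles univ T) = 4 := by rw [card_def, ← four, ← sizes, Multiset.card_map]
  have count := prunedCount_of_card_cycles_eq_four (fun z hz => absurd (mem_univ z) hz) card_cycles
  rw [card_univ, ← hsum] at count
  rw [count, ← sizes, Multiset.map_map, Multiset.map_map]
  rfl

end CycleType

end PrunedHurwitz

/-- Pruned simple Hurwitz number
`K_{0,4}(μ₁,μ₂,μ₃,μ₄) = (|μ|+2)! · μ₁μ₂μ₃μ₄ · ½ Σ (μᵢ² + μᵢ)`:
here `T` is a fixed permutation of cycle type `(μ₁, μ₂, μ₃, μ₄)` and the factorisations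
are into `m = 2·0 - 2 + 4 + |μ| = |μ|+2` transpositions generating a transitive
subgroup, with every point moved by at least two of the transpositions. -/
theorem prunedHurwitz_genus_zero_four_part (μ₁ μ₂ μ₃ μ₄ : ℕ)
    (h₁ : 1 ≤ μ₁) (h₂ : 1 ≤ μ₂) (h₃ : 1 ≤ μ₃) (h₄ : 1 ≤ μ₄)
    (T : Equiv.Perm (Fin (μ₁ + μ₂ + μ₃ + μ₄)))
    (hT : T.cycleType = Multiset.filter (fun x => 2 ≤ x) ({μ₁, μ₂, μ₃, μ₄} : Multiset ℕ)) :
    (Nat.card {σ : Fin (μ₁ + μ₂ + μ₃ + μ₄ + 2) → Equiv.Perm (Fin (μ₁ + μ₂ + μ₃ + μ₄)) //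
        IsPrunedFactorisation T σ} : ℚ)
      = (Nat.factorial (μ₁ + μ₂ + μ₃ + μ₄ + 2) : ℚ) * (μ₁ * μ₂ * μ₃ * μ₄) *
          ((1 / 2) * ((μ₁ ^ 2 + μ₁) + (μ₂ ^ 2 + μ₂) + (μ₃ ^ 2 + μ₃) + (μ₄ ^ 2 + μ₄))) := by
  have count := PrunedHurwitz.prunedCount_univ_of_cycleType_eq (by simp; lia) rfl
    (by simp; lia) hT
  simp only [Multiset.insert_eq_cons, Multiset.sum_cons, Multiset.sum_singleton, Multiset.map_cons,
    Multiset.map_singleton, Multiset.prod_cons, Multiset.prod_singleton, ← add_assoc] at count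
  rw [PrunedHurwitz.prunedCount_univ] at count
  refine count.trans ?_
  ring
end

section
/- For every integer d ≥ 0 there exists a polynomial q_d with rational coefficients of degree 2d such that for every positive integer μ: μ^{μ+d+1}/μ! = Σ_{ν=1}^{μ} q_d(ν) · ν·μ^{μ−ν}/(μ−ν)!. -/
/-!
Write `∇F(x) = F(x) - F(x - 1)`. Because the weights `w(ν) = μ^(μ-ν)/(μ-ν)!` satisfy
`(μ - ν) w(ν) = μ w(ν + 1)`, summation by parts turns `∑ F(ν) ν w(ν)` into
`μ ∑ ∇F(ν) w(ν)` plus the boundary term `F(0) μ^(μ+1)/μ!`. Hence `q_0 = 1` works for `d = 0`, and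
`q_{d+1}` can be taken to be the polynomial with `∇q_{d+1} = x q_d(x)` and `q_{d+1}(0) = 0`.
Antidifferencing raises the degree by one, as one sees on the rising factorials, which satisfy
`∇x^{(n+1)} = (n + 1) x^{(n)}`; so this step raises the degree by two.
-/

open Polynomial

theorem ascPochhammer_succ_eval_sub_eval_sub_one {R : Type*} [CommRing R] (n : ℕ) (x : R) :
    (ascPochhammer R (n + 1)).eval x - (ascPochhammer R (n + 1)).eval (x - 1) =
      (n + 1) * (ascPochhammer R n).eval x := by
  have h := congrArg (eval (x - 1)) (ascPochhammer_succ_comp_X_add_one R n)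
  simp only [eval_comp, eval_add, eval_X, eval_one, eval_smul, sub_add_cancel] at h
  rw [h, add_sub_cancel_left, nsmul_eq_mul, Nat.cast_succ]

theorem degree_ascPochhammer (R : Type*) [Semiring R] [NoZeroDivisors R] [Nontrivial R] (n : ℕ) :
    (ascPochhammer R n).degree = n := by
  rw [degree_eq_natDegree (monic_ascPochhammer R n).ne_zero, ascPochhammer_natDegree]

section

variable {K : Type*} [Field K] [CharZero K]

theorem exists_polynomial_antidifference (p : K[X]) :
    ∃ F : K[X], F.degree = p.degree + 1 ∧ F.eval 0 = 0 ∧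
      ∀ x, F.eval x - F.eval (x - 1) = p.eval x := by
  induction p using degree_lt_wf.induction with
  | _ p ih =>
  by_cases hp : p = 0
  · exact ⟨0, by simp [hp]⟩
  set n := p.natDegree
  set c := p.leadingCoeff
  have hc : c ≠ 0 := leadingCoeff_ne_zero.mpr hp
  have hn : (n + 1 : K) ≠ 0 := n.cast_add_one_ne_zero
  have hlt : (p - C c * ascPochhammer K n).degree < p.degree := by
    refine degree_sub_lt_left ?_ hp ?_
    · rw [degree_C_mul hc, degree_ascPochhammer, degree_eq_natDegree hp]
    · rw [leadingCoeff_mul, leadingCoeff_C, monic_ascPochhammer, mul_one]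
  obtain ⟨G, hGdeg, hG0, hG⟩ := ih _ hlt
  have hAdeg : (C (c / (n + 1)) * ascPochhammer K (n + 1)).degree = p.degree + 1 := by
    rw [degree_C_mul (div_ne_zero hc hn), degree_ascPochhammer, degree_eq_natDegree hp,
      Nat.cast_succ]
  refine ⟨C (c / (n + 1)) * ascPochhammer K (n + 1) + G, ?_, ?_, fun x => ?_⟩
  · rw [degree_add_eq_left_of_degree_lt, hAdeg]
    rw [hAdeg, hGdeg]
    exact WithBot.add_lt_add_right (by simp) hlt
  · simp [hG0]
  · have hAdiff := ascPochhammer_succ_eval_sub_eval_sub_one n x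
    have hGx := hG x
    simp only [eval_add, eval_sub, eval_mul, eval_C] at hGx ⊢
    linear_combination hGx + c / (n + 1) * hAdiff +
      (ascPochhammer K n).eval x * div_mul_cancel₀ c hn

theorem succ_mul_pow_succ_div_factorial_succ (x : K) (k : ℕ) :
    (k + 1) * (x ^ (k + 1) / (k + 1).factorial) = x * (x ^ k / k.factorial) := by
  have hk : (k + 1 : K) ≠ 0 := k.cast_add_one_ne_zero
  rw [Nat.factorial_succ, pow_succ]
  push_cast
  field_simp

theorem sum_mul_pow_div_factorial_by_parts (f : ℕ → K) (μ : ℕ) :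
    ∑ ν ∈ Finset.Icc 1 μ, f ν * ν * (μ : K) ^ (μ - ν) / (μ - ν).factorial =
      μ * ∑ ν ∈ Finset.Icc 1 μ, (f ν - f (ν - 1)) * (μ : K) ^ (μ - ν) / (μ - ν).factorial +
        f 0 * (μ : K) ^ (μ + 1) / μ.factorial := by
  let w (ν : ℕ) : K := (μ : K) ^ (μ - ν) / (μ - ν).factorial
  let T (ν : ℕ) : K := f ν * ((μ - ν) * w ν)
  have summand_eq (ν : ℕ) (hν : ν < μ) :
      f (ν + 1) * (ν + 1 : ℕ) * w (ν + 1) =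
        μ * ((f (ν + 1) - f ν) * w (ν + 1)) - (T (ν + 1) - T ν) := by
    have hw : (μ - ν) * w ν = μ * w (ν + 1) := by
      obtain ⟨k, rfl⟩ := Nat.exists_eq_add_of_lt hν
      have sub_eq : ν + k + 1 - ν = k + 1 := by omega
      have sub_succ_eq : ν + k + 1 - (ν + 1) = k := by omega
      simp only [w, sub_eq, sub_succ_eq, ← succ_mul_pow_succ_div_factorial_succ]
      push_cast
      ring
    simp only [T, hw]
    ring
  simp only [mul_div_assoc, ← Finset.Ico_add_one_right_eq_Icc,
    ← Finset.sum_Ico_add' _ 0 μ 1, Nat.add_sub_cancel]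
  rw [Finset.sum_congr rfl fun ν hν => summand_eq ν (Finset.mem_Ico.mp hν).2,
    Finset.sum_sub_distrib, ← Finset.mul_sum, Finset.sum_Ico_sub (hmn := μ.zero_le)]
  simp only [T, w, Nat.cast_zero, sub_self, sub_zero, Nat.sub_zero, zero_mul, mul_zero]
  ring

end

/-- For every `d ≥ 0` there is a polynomial `q_d` of degree `2d` with rational
coefficients such that `μ^(μ+d+1)/μ! = Σ_{ν=1}^{μ} q_d(ν) · ν · μ^(μ-ν)/(μ-ν)!`
for every positive integer `μ`. -/
theorem exists_qd_polynomial (d : ℕ) :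
    ∃ q : Polynomial ℚ, q.degree = (2 * d : ℕ) ∧
      ∀ μ : ℕ, 1 ≤ μ →
        (μ : ℚ) ^ (μ + d + 1) / Nat.factorial μ =
          ∑ ν ∈ Finset.Icc 1 μ,
            q.eval (ν : ℚ) * (ν : ℚ) * (μ : ℚ) ^ (μ - ν) / Nat.factorial (μ - ν) := by
  induction d with
  | zero =>
    refine ⟨1, by simp, fun μ _ => ?_⟩
    simpa using (sum_mul_pow_div_factorial_by_parts (fun _ => (1 : ℚ)) μ).symm
  | succ d ih =>
    obtain ⟨q, hq, hsum⟩ := ih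
    obtain ⟨F, hdeg, hF0, hF⟩ := exists_polynomial_antidifference (q * X)
    refine ⟨F, ?_, fun μ hμ => ?_⟩
    · rw [hdeg, degree_mul, degree_X, hq]
      norm_cast
    · have hdiff (ν : ℕ) (hν : ν ∈ Finset.Icc 1 μ) :
          F.eval (ν : ℚ) - F.eval ((ν - 1 : ℕ) : ℚ) = q.eval (ν : ℚ) * ν := by
        rw [Nat.cast_pred (Finset.mem_Icc.mp hν).1, hF, eval_mul_X]
      rw [sum_mul_pow_div_factorial_by_parts (fun ν => F.eval (ν : ℚ)) μ,
        Finset.sum_congr rfl fun ν hν => by rw [hdiff ν hν], ← hsum μ hμ, Nat.cast_zero, hF0]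
      ring
end

section
/- For every integer d ≥ 0 and every positive integer μ: μ^{μ+d+1} = Σ_{ν=1}^{μ} S(ν+d, ν) · ν · μ^{μ−ν} · μ!/(μ−ν)!, where S(ν+d, ν) is the Stirling number of the second kind. -/
/-- The Stirling number of the second kind `S(p, q)`: the number of partitions of a
set with `p` elements into `q` nonempty blocks. -/
noncomputable def stirlingSecond (p q : ℕ) : ℕ :=
  Nat.card {P : Finpartition (Finset.univ : Finset (Fin p)) // P.parts.card = q}

/-!
The left-hand side counts the words of length `μ + d + 1` over an alphabet of `μ` letters. Such a
word uses at most `μ` letters, so more than `d` of its positions repeat an earlier letter. Cut it at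
the `(d + 1)`-st repetition: before that position stands a word of length `ν + d` with exactly `ν`
letters, of which there are `S(ν + d, ν) · μ! / (μ - ν)!`; the repeated letter is one of those `ν`,
and the remaining `μ - ν` letters are arbitrary.
-/

section

open Finset Function

section Labelling

variable {ι α : Type*} [Fintype ι] [DecidableEq ι]

/-- The function on `ι` that is constant on the blocks of `P`, with value on each block given by the
injective labelling `e`. Every function on `ι` arises from exactly one pair `(P, e)`, the blocks of
`P` being its nonempty fibres. -/
def partitionLabelling (P : Finpartition (univ : Finset ι)) (e : P.parts ↪ α) (i : ι) : α :=
  e ⟨P.part i, P.part_mem.2 (mem_univ i)⟩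

lemma partitionLabelling_eq_iff (P : Finpartition (univ : Finset ι)) (e : P.parts ↪ α) (i j : ι) :
    partitionLabelling P e i = partitionLabelling P e j ↔ i ∈ P.part j := by
  rw [partitionLabelling, partitionLabelling, e.apply_eq_iff_eq, Subtype.mk.injEq,
    P.mem_part_iff_part_eq_part (mem_univ i) (mem_univ j)]

lemma parts_eq_image_part (P : Finpartition (univ : Finset ι)) : P.parts = univ.image P.part := by
  refine Subset.antisymm (fun t ht ↦ ?_) (image_subset_iff.2 fun i hi ↦ P.part_mem.2 hi)
  obtain ⟨i, hi, rfl⟩ := P.part_surjOn ht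
  exact mem_image_of_mem P.part hi

lemma surjective_part (P : Finpartition (univ : Finset ι)) :
    Surjective fun i ↦ (⟨P.part i, P.part_mem.2 (mem_univ i)⟩ : P.parts) := by
  rintro ⟨t, ht⟩
  obtain ⟨i, -, hi⟩ := P.part_surjOn ht
  exact ⟨i, Subtype.ext hi⟩

lemma image_partitionLabelling [DecidableEq α] (P : Finpartition (univ : Finset ι))
    (e : P.parts ↪ α) : univ.image (partitionLabelling P e) = univ.map e := by
  rw [map_eq_image, ← image_univ_of_surjective (surjective_part P), image_image]
  rfl

lemma bijective_partitionLabelling :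
    Bijective fun w : Σ P : Finpartition (univ : Finset ι), (P.parts ↪ α) ↦
      partitionLabelling w.1 w.2 := by
  classical
  constructor
  · rintro ⟨P, e⟩ ⟨Q, g⟩ (h : partitionLabelling P e = partitionLabelling Q g)
    have part_eq : P.part = Q.part := by
      ext j i
      rw [← partitionLabelling_eq_iff P e, ← partitionLabelling_eq_iff Q g, h]
    obtain rfl : P = Q := Finpartition.ext <| by
      rw [parts_eq_image_part, part_eq, ← parts_eq_image_part]
    rw [Sigma.mk.injEq, heq_eq_eq]
    exact ⟨rfl, DFunLike.coe_injective ((surjective_part P).injective_comp_right h)⟩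
  · intro f
    let P := Finpartition.ofSetoid (Setoid.ker f)
    have part_eq_iff (i j : ι) : P.part i = P.part j ↔ f i = f j := by
      rw [← P.mem_part_iff_part_eq_part (mem_univ i) (mem_univ j),
        Finpartition.mem_part_ofSetoid_iff_rel, Setoid.ker_def, eq_comm]
    obtain ⟨rep, rep_spec⟩ := (surjective_part P).hasRightInverse
    have part_rep (t : P.parts) : P.part (rep t) = t := congrArg Subtype.val (rep_spec t)
    have injective_label : Injective fun t ↦ f (rep t) := fun t u htu ↦
      Subtype.ext (by rw [← part_rep t, ← part_rep u, (part_eq_iff _ _).2 htu])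
    exact ⟨⟨P, ⟨_, injective_label⟩⟩, funext fun i ↦ (part_eq_iff _ _).1 (part_rep _)⟩

lemma card_filter_card_image_eq [Fintype α] [DecidableEq α] (q : ℕ) :
    #{f : ι → α | #(univ.image f) = q} =
      #{P : Finpartition (univ : Finset ι) | #P.parts = q} *
        (Fintype.card α).descFactorial q := by
  calc
    #{f : ι → α | #(univ.image f) = q}
    _ = ∑ w : Σ P : Finpartition (univ : Finset ι), (P.parts ↪ α),
          if #w.1.parts = q then 1 else 0 := by
      rw [card_filter, ← bijective_partitionLabelling.sum_comp]
      simp only [image_partitionLabelling, card_map, card_univ, Fintype.card_coe]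
    _ = ∑ P : Finpartition (univ : Finset ι),
          if #P.parts = q then (Fintype.card α).descFactorial q else 0 := by
      rw [Fintype.sum_sigma]
      refine sum_congr rfl fun P _ ↦ ?_
      split_ifs with hP
      · rw [sum_const, smul_eq_mul, mul_one, card_univ, Fintype.card_embedding_eq,
          Fintype.card_coe, hP]
      · exact sum_const_zero
    _ = _ := by rw [← sum_filter, sum_const, smul_eq_mul]

end Labelling

section Words

variable {α : Type*} [DecidableEq α]

lemma image_snoc {n : ℕ} (w : Fin n → α) (a : α) :
    univ.image (Fin.snoc w a : Fin (n + 1) → α) = insert a (univ.image w) := by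
  ext b
  simp [Fin.exists_fin_succ', eq_comm, or_comm]

variable [Fintype α]

lemma card_filter_card_insert_le (s : Finset α) (k : ℕ) :
    #{a | #(insert a s) ≤ k} =
      (if #s < k then Fintype.card α else 0) + if #s = k then k else 0 := by
  rcases lt_trichotomy #s k with h | h | h
  · have hle (a : α) : #(insert a s) ≤ k := (card_insert_le a s).trans h
    simp [h, h.ne, hle]
  · have hle (a : α) : #(insert a s) ≤ k ↔ a ∈ s := by
      by_cases ha : a ∈ s <;> simp [ha, h]
    simp [h, hle]
  · have hlt (a : α) : k < #(insert a s) := h.trans_le (card_le_card (subset_insert a s))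
    simp [h.not_gt, h.ne', hlt]

lemma card_words_succ_card_image_le (n k : ℕ) :
    #{w : Fin (n + 1) → α | #(univ.image w) ≤ k} =
      Fintype.card α * #{w : Fin n → α | #(univ.image w) < k} +
        k * #{w : Fin n → α | #(univ.image w) = k} := by
  calc
    #{w : Fin (n + 1) → α | #(univ.image w) ≤ k}
    _ = ∑ w : Fin n → α, #{a | #(insert a (univ.image w)) ≤ k} := by
      simp only [card_filter, ← image_snoc]
      rw [← (Fin.snocEquiv fun _ ↦ α).sum_comp, Fintype.sum_prod_type_right]
      rfl
    _ = _ := by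
      simp only [card_filter_card_insert_le, sum_add_distrib, ← sum_filter, sum_const, smul_eq_mul,
        mul_comm]

/-- A word of length `d + m + 1` has at most `m` letters exactly when more than `d` of its positions
repeat an earlier letter; the `ν`-th summand counts those whose `(d + 1)`-st repetition comes right
after the first `d + ν` letters. -/
lemma card_words_card_image_le (d m : ℕ) :
    #{w : Fin (d + m + 1) → α | #(univ.image w) ≤ m} =
      ∑ ν ∈ Icc 1 m,
        #{w : Fin (d + ν) → α | #(univ.image w) = ν} * ν * Fintype.card α ^ (m - ν) := by
  induction m with
  | zero => simp [univ_eq_empty_iff]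
  | succ m ih =>
    rw [card_words_succ_card_image_le, sum_Icc_succ_top (Nat.le_add_left 1 m)]
    simp only [Order.lt_add_one_iff]
    rw [← add_assoc, ih, mul_sum, Nat.sub_self, pow_zero, mul_one, mul_comm (m + 1)]
    congr 1
    refine sum_congr rfl fun ν hν ↦ ?_
    rw [Nat.succ_sub (mem_Icc.1 hν).2, pow_succ]
    ring

lemma card_words_card_image_eq (p q : ℕ) :
    #{w : Fin p → α | #(univ.image w) = q} =
      stirlingSecond p q * (Fintype.card α).descFactorial q := by
  rw [card_filter_card_image_eq, stirlingSecond, Nat.card_eq_fintype_card, Fintype.card_subtype]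

end Words

end

/-- For every `d ≥ 0` and every positive integer `μ`:
`μ^(μ+d+1) = Σ_{ν=1}^{μ} S(ν+d, ν) · ν · μ^(μ-ν) · μ!/(μ-ν)!`. -/
theorem stirling_identity (d μ : ℕ) (hμ : 1 ≤ μ) :
    μ ^ (μ + d + 1) =
      ∑ ν ∈ Finset.Icc 1 μ,
        stirlingSecond (ν + d) ν * ν * μ ^ (μ - ν) *
          (Nat.factorial μ / Nat.factorial (μ - ν)) := by
  have card_letters_le (w : Fin (d + μ + 1) → Fin μ) : (Finset.univ.image w).card ≤ μ :=
    (Finset.card_le_univ _).trans_eq (Fintype.card_fin μ)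
  have pow_eq_sum := card_words_card_image_le (α := Fin μ) d μ
  simp only [card_letters_le, Finset.filter_true, Finset.card_univ, Fintype.card_fun,
    Fintype.card_fin, card_words_card_image_eq] at pow_eq_sum
  rw [add_comm μ d, pow_eq_sum]
  refine Finset.sum_congr rfl fun ν hν ↦ ?_
  rw [add_comm ν d, ← Nat.descFactorial_eq_div (Finset.mem_Icc.1 hν).2]
  ring
end
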